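/- Let n ≥ 1. Let Ω₁ = 𝔹^{n₁} × ⋯ × 𝔹^{n_l} ⊆ ℂⁿ with generic norm ρ₁(z) = ∏_{i=1}^l (1−‖z⁽ⁱ⁾‖²)^{p_i} (positive integer exponents p_i with p_{i₀} = 1 for some i₀), and let Ω₂ = 𝔹^{m₁} × ⋯ × 𝔹^{m_{l'}} ⊆ ℂⁿ with generic norm ρ₂(w) = ∏_{j=1}^{l'} (1−‖w⁽ʲ⁾‖²)^{q_j} (positive integer exponents q_j with q_{j₀} = 1 for some j₀), where n₁+⋯+n_l = m₁+⋯+m_{l'} = n. Let Σ₁, Σ₂ ⊆ ℂ^{n+1} be the corresponding circle bundles and D₁, D₂ ⊆ ℂ^{n+1} the corresponding disc bundles. Let U ⊆ ℂ^{n+1} be a connected open set with U ∩ Σ₁ ≠ ∅ and let F : U → ℂ^{n+1} be a nonconstant holomorphic map with F(U ∩ Σ₁) ⊆ Σ₂. Then there exist polynomials P₁,…,P_{n+1}, Q on ℂ^{n+1} with Q nowhere zero on D₁ such that the rational map G = (P₁/Q, …, P_{n+1}/Q) restricts to a biholomorphism from D₁ onto D₂ and G coincides with F on some nonempty open subset of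 U. -/

import Mathlib

noncomputable section

open Complex

/-- `Biholo f s t`: `f` is a biholomorphism from `s` onto `t`. -/
def Biholo {E F : Type*} [NormedAddCommGroup E] [NormedSpace ℂ E]
    [NormedAddCommGroup F] [NormedSpace ℂ F]
    (f : E → F) (s : Set E) (t : Set F) : Prop :=
  DifferentiableOn ℂ f s ∧ Set.MapsTo f s t ∧
    ∃ g : F → E, DifferentiableOn ℂ g t ∧ Set.MapsTo g t s ∧
      Set.LeftInvOn g f s ∧ Set.RightInvOn g f t

/-- The squared Hermitian norm of the `i`-th block of coordinates `z` of `ℂⁿ`, where the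
block decomposition is given by the (surjective) assignment `β : Fin n → Fin l` of each
coordinate to a factor. -/
def blockSq {n l : ℕ} (β : Fin n → Fin l) (i : Fin l) (z : Fin n → ℂ) : ℝ :=
  ∑ j ∈ Finset.univ.filter (fun j => β j = i), Complex.normSq (z j)

/-- The product of balls `𝔹^{n₁} × ⋯ × 𝔹^{n_l} ⊆ ℂⁿ` determined by the block
decomposition `β`. -/
def prodBalls {n l : ℕ} (β : Fin n → Fin l) : Set (Fin n → ℂ) :=
  {z | ∀ i, blockSq β i z < 1}

/-- The generalized generic norm `ρ(z) = ∏ᵢ (1 − ‖z⁽ⁱ⁾‖²)^{pᵢ}` of the product of balls. -/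
def gnorm {n l : ℕ} (β : Fin n → Fin l) (p : Fin l → ℕ) (z : Fin n → ℂ) : ℝ :=
  ∏ i, (1 - blockSq β i z) ^ (p i)

/-- The circle bundle `Σ(Ω, ρ) = {(z,ξ) ∈ Ω × ℂ : |ξ|² = ρ(z)}`. -/
def circBundle {n l : ℕ} (β : Fin n → Fin l) (p : Fin l → ℕ) : Set ((Fin n → ℂ) × ℂ) :=
  {P | P.1 ∈ prodBalls β ∧ Complex.normSq P.2 = gnorm β p P.1}

/-- The disc bundle `D(Ω, ρ) = {(z,ξ) ∈ Ω × ℂ : |ξ|² < ρ(z)}`. -/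
def discBundle {n l : ℕ} (β : Fin n → Fin l) (p : Fin l → ℕ) : Set ((Fin n → ℂ) × ℂ) :=
  {P | P.1 ∈ prodBalls β ∧ Complex.normSq P.2 < gnorm β p P.1}

/-- Evaluation of a polynomial in the `n+1` variables `(z, ξ)` at a point of `ℂⁿ × ℂ`. -/
def evalP {n : ℕ} (f : MvPolynomial (Fin n ⊕ Unit) ℂ) (P : (Fin n → ℂ) × ℂ) : ℂ :=
  MvPolynomial.eval (Sum.elim P.1 (fun _ => P.2)) f

open Metric Filter Topology

section SeveralVariables

variable {E G : Type*} [NormedAddCommGroup E] [NormedSpace ℂ E] [FiniteDimensional ℂ E]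
  [NormedAddCommGroup G] [NormedSpace ℂ G] [FiniteDimensional ℂ G]

/-- Directional derivatives of a holomorphic map are holomorphic. -/
lemma differentiableAt_fderiv_apply {f : E → G} {x : E} (v : E)
    (h : ∀ᶠ y in 𝓝 x, DifferentiableAt ℂ f y) :
    DifferentiableAt ℂ (fun y => fderiv ℂ f y v) x := by
  have : CompleteSpace G := FiniteDimensional.complete ℂ G
  have : CompleteSpace E := FiniteDimensional.complete ℂ E
  have : ProperSpace E := FiniteDimensional.proper ℂ E
  have : ProperSpace G := FiniteDimensional.proper ℂ G
  let _ : MeasurableSpace E := borel E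
  have : BorelSpace E := ⟨rfl⟩
  have hcont : ∀ᶠ y in 𝓝 x, f y ∈ ball (f x) 1 :=
    h.self_of_nhds.continuousAt (ball_mem_nhds _ one_pos)
  obtain ⟨R, hR, hball⟩ := Metric.eventually_nhds_iff_ball.1 (h.and hcont)
  -- a radius for the circle
  set r : ℝ := R / (4 * (‖v‖ + 1)) with hr
  have hr0 : 0 < r := by positivity
  have hrv : r * ‖v‖ ≤ R / 4 := by
    rw [hr, div_mul_eq_mul_div, div_le_div_iff₀ (by positivity) (by norm_num)]
    nlinarith [norm_nonneg v]
  have hmem : ∀ y ∈ ball x (R / 4), ∀ ζ : ℂ, ‖ζ‖ ≤ r → y + ζ • v ∈ ball x (R / 2) := by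
    intro y hy ζ hζ
    rw [mem_ball, dist_eq_norm] at hy ⊢
    have h1 : ‖ζ • v‖ ≤ R / 4 := by
      rw [norm_smul]
      exact (mul_le_mul_of_nonneg_right hζ (norm_nonneg v)).trans hrv
    calc ‖y + ζ • v - x‖ = ‖(y - x) + ζ • v‖ := by congr 1; abel
      _ ≤ ‖y - x‖ + ‖ζ • v‖ := norm_add_le _ _
      _ < R / 2 := by linarith
  have hsub : ball x (R / 2) ⊆ ball x R := ball_subset_ball (by linarith)
  -- Cauchy estimate
  have hest : ∀ y ∈ ball x (R / 2), ‖fderiv ℂ f y‖ ≤ 2 / (R / 2) := by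
    intro y hy
    have hyR : ball y (R / 2) ⊆ ball x R := by
      apply ball_subset_ball'
      rw [mem_ball] at hy; linarith
    apply norm_fderiv_le_div_of_mapsTo_ball _ _ (by positivity)
    · intro u hu
      exact ((hball u (hyR hu)).1).differentiableWithinAt
    · intro u hu
      have h1 := (hball u (hyR hu)).2
      have h2 := (hball y (hsub hy)).2
      rw [mem_ball] at h1 h2
      rw [mem_closedBall]
      have := dist_triangle_right (f u) (f y) (f x)
      linarith
  have hkey : ∀ y ∈ ball x (R / 4), fderiv ℂ f y v =
      (2 * Real.pi * I : ℂ)⁻¹ • ∮ ζ in C(0, r), (1 / (ζ - 0) ^ 2) • f (y + ζ • v) := by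
    intro y hy
    have hd : DifferentiableOn ℂ (fun ζ : ℂ => f (y + ζ • v)) (closedBall 0 r) := by
      intro ζ hζ
      have := (hball _ (hsub (hmem y hy ζ (by simpa using hζ)))).1
      exact (this.comp ζ (by fun_prop)).differentiableWithinAt
    rw [hd.deriv_eq_smul_circleIntegral hr0, smul_smul, inv_mul_cancel₀ (by simp [Real.pi_ne_zero]),
      one_smul]
    have hy' := (hball y (hsub (by simpa using hmem y hy 0 (by simpa using hr0.le)))).1
    have h1 : HasDerivAt (fun ζ : ℂ => y + ζ • v) v 0 := by
      simpa using ((hasDerivAt_id (0 : ℂ)).smul_const v).const_add y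
    have h2 : HasFDerivAt f (fderiv ℂ f y) (y + (0 : ℂ) • v) := by simpa using hy'.hasFDerivAt
    exact (h2.comp_hasDerivAt (0 : ℂ) h1).deriv.symm
  have hdiff : DifferentiableAt ℂ
      (fun y => ∮ ζ in C(0, r), (1 / (ζ - 0) ^ 2) • f (y + ζ • v)) x := by
    unfold circleIntegral
    have hcm : ∀ θ : ℝ, ‖circleMap 0 r θ‖ ≤ r := by
      intro θ; simp [abs_of_pos hr0]
    have hne : ∀ θ : ℝ, circleMap 0 r θ ≠ 0 := fun θ => circleMap_ne_center hr0.ne'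
    have hcc : ∀ y ∈ ball x (R / 4), Continuous fun θ : ℝ =>
        deriv (circleMap 0 r) θ • ((1 / (circleMap 0 r θ - 0) ^ 2) •
          f (y + circleMap 0 r θ • v)) := by
      intro y hy
      have h1 : Continuous fun θ : ℝ => f (y + circleMap 0 r θ • v) := by
        rw [continuous_iff_continuousAt]
        intro θ
        have := (hball _ (hsub (hmem y hy _ (hcm θ)))).1.continuousAt
        exact ContinuousAt.comp (f := fun θ : ℝ => y + circleMap 0 r θ • v) this (by fun_prop)
      have h2 : Continuous fun θ : ℝ => (1 / (circleMap 0 r θ - 0) ^ 2) := by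
        apply Continuous.div continuous_const (by fun_prop)
        intro θ
        simpa using hne θ
      have h3 : Continuous fun θ : ℝ => deriv (circleMap 0 r) θ := by
        simp only [deriv_circleMap]; fun_prop
      exact h3.smul (h2.smul h1)
    have hx4 : ball x (R / 4) ∈ 𝓝 x := ball_mem_nhds _ (by positivity)
    have := intervalIntegral.hasFDerivAt_integral_of_dominated_of_fderiv_le (𝕜 := ℂ)
      (μ := MeasureTheory.volume) (a := 0) (b := 2 * Real.pi)
      (F := fun y θ => deriv (circleMap 0 r) θ • ((1 / (circleMap 0 r θ - 0) ^ 2) •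
          f (y + circleMap 0 r θ • v)))
      (F' := fun y θ => deriv (circleMap 0 r) θ • ((1 / (circleMap 0 r θ - 0) ^ 2) •
          fderiv ℂ f (y + circleMap 0 r θ • v)))
      (x₀ := x) (s := ball x (R / 4)) (bound := fun _ => r * (r ^ 2)⁻¹ * (2 / (R / 2)))
      hx4 ?_ ?_ ?_ ?_ ?_ ?_
    · exact this.differentiableAt
    · filter_upwards [hx4] with y hy
      exact (hcc y hy).aestronglyMeasurable
    · exact (hcc x (mem_ball_self (by positivity))).intervalIntegrable _ _
    · apply Measurable.aestronglyMeasurable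
      apply Measurable.fun_smul
      · have : Continuous fun θ : ℝ => circleMap 0 r θ * I := by fun_prop
        simpa [funext (deriv_circleMap 0 r)] using this.measurable
      apply Measurable.fun_smul
      · have : Measurable fun θ : ℝ => circleMap 0 r θ := (continuous_circleMap 0 r).measurable
        fun_prop
      · exact (measurable_fderiv ℂ f).comp (by
          have : Continuous fun θ : ℝ => x + circleMap 0 r θ • v := by fun_prop
          exact this.measurable)
    · filter_upwards with θ _ y hy
      have := hest _ (hmem y hy _ (hcm θ))
      rw [norm_smul, norm_smul]
      simp only [deriv_circleMap, norm_mul, norm_I, mul_one, sub_zero,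
        norm_circleMap_zero, abs_of_pos hr0, one_div]
      rw [mul_assoc]
      gcongr
      simp [abs_of_pos hr0]
    · exact intervalIntegrable_const
    · filter_upwards with θ _ y hy
      have := (hball _ (hsub (hmem y hy _ (hcm θ)))).1.hasFDerivAt
      have h2 : HasFDerivAt (fun y => f (y + circleMap 0 r θ • v))
          (fderiv ℂ f (y + circleMap 0 r θ • v)) y := by
        have h3 := this.comp y ((hasFDerivAt_id y).add_const (circleMap 0 r θ • v))
        simpa [Function.comp_def] using h3
      exact (h2.const_smul _).const_smul _
  refine (hdiff.const_smul ((2 * Real.pi * I : ℂ)⁻¹)).congr_of_eventuallyEq ?_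
  filter_upwards [ball_mem_nhds x (by positivity : 0 < R / 4)] with y hy
  exact hkey y hy

/-- The derivative of a holomorphic map is holomorphic. -/
lemma differentiableAt_fderiv {f : E → G} {x : E}
    (h : ∀ᶠ y in 𝓝 x, DifferentiableAt ℂ f y) :
    DifferentiableAt ℂ (fderiv ℂ f) x := by
  let b := Module.finBasis ℂ E
  let c : Fin (Module.finrank ℂ E) → E →L[ℂ] ℂ := fun i => LinearMap.toContinuousLinearMap (b.coord i)
  have hsum : fderiv ℂ f = fun y => ∑ i, (c i).smulRight (fderiv ℂ f y (b i)) := by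
    funext y
    ext u
    calc fderiv ℂ f y u = fderiv ℂ f y (∑ i, b.repr u i • b i) := by rw [b.sum_repr]
      _ = _ := by
        rw [map_sum, FunLike.coe_sum, Finset.sum_apply]
        simp only [map_smul]
        rfl
  rw [hsum]
  refine DifferentiableAt.fun_sum fun i _ => ?_
  exact ((ContinuousLinearMap.smulRightL ℂ E G (c i)).differentiableAt).comp x
    (differentiableAt_fderiv_apply (b i) h)

lemma eventually_differentiableAt_fderiv {f : E → G} {x : E}
    (h : ∀ᶠ y in 𝓝 x, DifferentiableAt ℂ f y) :
    ∀ᶠ y in 𝓝 x, DifferentiableAt ℂ (fderiv ℂ f) y := by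
  filter_upwards [h.eventually_nhds] with y hy using differentiableAt_fderiv hy

end SeveralVariables

section Identity

variable {E G : Type*} [NormedAddCommGroup E] [NormedSpace ℂ E]
  [NormedAddCommGroup G] [NormedSpace ℂ G] [CompleteSpace G]

/-- One-variable identity principle along a complex line inside a ball. -/
lemma eq_zero_on_line {f : E → G} {x : E} {r : ℝ}
    (hf : ∀ y ∈ ball x r, DifferentiableAt ℂ f y) {a b : E} (ha : a ∈ ball x r)
    (h0 : ∃ᶠ t : ℂ in 𝓝[≠] 0, f (a + t • b) = 0) {t : ℂ} (ht : a + t • b ∈ ball x r) :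
    f (a + t • b) = 0 := by
  set S : Set ℂ := (fun t : ℂ => a + t • b) ⁻¹' ball x r
  have hS : IsOpen S := isOpen_ball.preimage (by fun_prop)
  have hconv : Convex ℝ S := by
    intro t ht s hs α γ hα hγ hαγ
    have := convex_ball x r ht hs hα hγ hαγ
    simp only [S, Set.mem_preimage]
    convert this using 1
    simp only [smul_add, add_smul]
    have h1 : a = α • a + γ • a := by rw [← add_smul, hαγ, one_smul]
    rw [smul_assoc, smul_assoc]
    nth_rewrite 1 [h1]
    abel
  have hd : DifferentiableOn ℂ (fun t : ℂ => f (a + t • b)) S := by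
    intro s hs
    exact (DifferentiableAt.comp s (hf _ hs) (by fun_prop)).differentiableWithinAt
  exact (hd.analyticOnNhd hS).eqOn_zero_of_preconnected_of_frequently_eq_zero
    hconv.isPreconnected (by simpa [S] using ha) h0 ht

/-- A holomorphic map on a connected open set that is locally constant at a point is constant. -/
lemma eqOn_const_of_eventually {U : Set E} (hU : IsOpen U) (hc : IsPreconnected U) {f : E → G}
    (hf : DifferentiableOn ℂ f U) {x : E} (hx : x ∈ U) {c : G} (h : ∀ᶠ y in 𝓝 x, f y = c) :
    Set.EqOn f (fun _ => c) U := by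
  have key : U ⊆ {y | ∀ᶠ u in 𝓝 y, f u = c} := by
    apply hc.subset_of_closure_inter_subset
    · exact isOpen_iff_mem_nhds.2 fun y hy => hy.eventually_nhds
    · exact ⟨x, hx, h⟩
    · rintro y ⟨hy, hyU⟩
      obtain ⟨r, hr, hrU⟩ := Metric.isOpen_iff.1 hU y hyU
      obtain ⟨a, ha, hya⟩ := Metric.mem_closure_iff.1 hy r hr
      rw [dist_comm] at hya
      have hd : ∀ u ∈ ball y r, DifferentiableAt ℂ (fun u => f u - c) u := fun u hu =>
        (hf.differentiableAt (hU.mem_nhds (hrU hu))).sub_const c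
      filter_upwards [ball_mem_nhds y hr] with u hu
      have h0 : ∃ᶠ t : ℂ in 𝓝[≠] 0, f (a + t • (u - a)) - c = 0 := by
        apply Eventually.frequently
        apply eventually_nhdsWithin_of_eventually_nhds
        have : Tendsto (fun t : ℂ => a + t • (u - a)) (𝓝 0) (𝓝 a) := by
          have : Continuous fun t : ℂ => a + t • (u - a) := by fun_prop
          simpa using this.tendsto 0
        filter_upwards [this.eventually ha] with t ht
        rw [ht, sub_self]
      have := eq_zero_on_line hd (a := a) (b := u - a) hya h0 (t := 1) (by simpa using hu)
      simpa [sub_eq_zero] using this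
  intro y hy
  exact (key hy).self_of_nhds

end Identity

section TotallyReal

variable {E G : Type*} [NormedAddCommGroup E] [NormedSpace ℂ E]
  [NormedAddCommGroup G] [NormedSpace ℂ G] [CompleteSpace G]

/-- A holomorphic map vanishing on the fixed points of an antilinear involution vanishes. -/
lemma eventually_eq_zero_of_conj_fixed {c : E → E} (hadd : ∀ x y, c (x + y) = c x + c y)
    (hsmul : ∀ (t : ℂ) x, c (t • x) = star t • c x) (hc : ∀ x, c (c x) = x)
    (hn : ∀ x, ‖c x‖ ≤ ‖x‖) {K : E → G} (hK : ∀ᶠ x in 𝓝 0, DifferentiableAt ℂ K x)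
    (h0 : ∀ᶠ x in 𝓝 0, c x = x → K x = 0) : ∀ᶠ x in 𝓝 0, K x = 0 := by
  obtain ⟨δ, hδ, hball⟩ := Metric.eventually_nhds_iff_ball.1 (hK.and h0)
  filter_upwards [ball_mem_nhds (0 : E) (by positivity : 0 < δ / 2)] with v hv
  rw [mem_ball_zero_iff] at hv
  set a : E := (1 / 2 : ℂ) • (v + c v) with ha
  set b : E := (-I / 2 : ℂ) • (v - c v) with hb
  have hsub : ∀ x y, c (x - y) = c x - c y := by
    intro x y
    have := hadd (x - y) y
    rw [sub_add_cancel] at this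
    rw [this, add_sub_cancel_right]
  have hca : c a = a := by
    rw [ha, hsmul, hadd, hc, add_comm]
    congr 1
    simp
  have hcb : c b = b := by
    rw [hb, hsmul, hsub, hc, ← neg_sub v (c v), smul_neg, ← neg_smul]
    congr 1
    simp [neg_div]
  have hna : ‖a‖ ≤ ‖v‖ := by
    rw [ha, norm_smul]
    have := norm_add_le v (c v)
    have := hn v
    norm_num
    linarith
  have hnb : ‖b‖ ≤ ‖v‖ := by
    rw [hb, norm_smul]
    have := norm_sub_le v (c v)
    have := hn v
    norm_num
    linarith
  have hv' : a + I • b = v := by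
    rw [ha, hb, smul_smul, show I * (-I / 2) = (1 / 2 : ℂ) by linear_combination (-1/2) * I_mul_I,
      ← smul_add]
    rw [show v + c v + (v - c v) = (2 : ℂ) • v by rw [two_smul]; abel, smul_smul]
    norm_num
  rw [← hv']
  refine eq_zero_on_line (x := 0) (r := δ) (fun y hy => (hball y hy).1) ?_ ?_ ?_
  · rw [mem_ball_zero_iff]; linarith
  · have ht : Tendsto (fun t : ℝ => (t : ℂ)) (𝓝[≠] 0) (𝓝[≠] 0) := by
      apply tendsto_nhdsWithin_of_tendsto_nhds_of_eventually_within
      · have : Continuous fun t : ℝ => (t : ℂ) := Complex.continuous_ofReal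
        exact (this.tendsto' 0 0 (by simp)).mono_left nhdsWithin_le_nhds
      · filter_upwards [self_mem_nhdsWithin] with t ht
        simpa using ht
    apply ht.frequently
    apply Eventually.frequently
    apply eventually_nhdsWithin_of_eventually_nhds
    filter_upwards [ball_mem_nhds (0 : ℝ) one_pos] with t ht
    rw [mem_ball_zero_iff, Real.norm_eq_abs] at ht
    apply (hball _ _).2
    · rw [hadd, hca, hsmul (t : ℂ) b, hcb]
      simp
    · rw [mem_ball_zero_iff]
      have h1 : ‖a + (t : ℂ) • b‖ ≤ ‖a‖ + |t| * ‖b‖ := by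
        refine (norm_add_le _ _).trans ?_
        rw [norm_smul (t : ℂ) b, Complex.norm_real, Real.norm_eq_abs]
      have h2 : |t| * ‖b‖ ≤ 1 * ‖v‖ := by gcongr
      linarith
  · rw [mem_ball_zero_iff, hv']
    linarith [norm_nonneg v]

end TotallyReal

section Polarization

variable {n l : ℕ}

/-- The polarization of `blockSq`. -/
def bilK (β : Fin n → Fin l) (i : Fin l) (z w : Fin n → ℂ) : ℂ :=
  ∑ j ∈ Finset.univ.filter (fun j => β j = i), z j * w j

/-- The polarization of `gnorm`. -/
def rhoK (β : Fin n → Fin l) (p : Fin l → ℕ) (z w : Fin n → ℂ) : ℂ :=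
  ∏ i, (1 - bilK β i z w) ^ (p i)

/-- The base point of the circle bundles. -/
def x0 : (Fin n → ℂ) × ℂ := (0, 1)

@[simp] lemma x0_fst : (x0 : (Fin n → ℂ) × ℂ).1 = 0 := rfl
@[simp] lemma x0_snd : (x0 : (Fin n → ℂ) × ℂ).2 = 1 := rfl
@[simp] lemma star_x0 : star (x0 : (Fin n → ℂ) × ℂ) = x0 := by
  ext <;> simp [x0]

lemma bilK_star (β : Fin n → Fin l) (i : Fin l) (z : Fin n → ℂ) :
    bilK β i z (star z) = (blockSq β i z : ℂ) := by
  simp [bilK, blockSq, Complex.mul_conj]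

lemma rhoK_star (β : Fin n → Fin l) (p : Fin l → ℕ) (z : Fin n → ℂ) :
    rhoK β p z (star z) = (gnorm β p z : ℂ) := by
  simp [rhoK, gnorm, bilK_star]

lemma bilK_comm (β : Fin n → Fin l) (i : Fin l) (z w : Fin n → ℂ) :
    bilK β i z w = bilK β i w z := by
  simp [bilK, mul_comm]

lemma star_bilK (β : Fin n → Fin l) (i : Fin l) (z w : Fin n → ℂ) :
    star (bilK β i z w) = bilK β i (star z) (star w) := by
  simp [bilK]

lemma bilK_add_left (β : Fin n → Fin l) (i : Fin l) (z z' w : Fin n → ℂ) :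
    bilK β i (z + z') w = bilK β i z w + bilK β i z' w := by
  simp [bilK, add_mul, Finset.sum_add_distrib]

lemma bilK_smul_left (β : Fin n → Fin l) (i : Fin l) (t : ℂ) (z w : Fin n → ℂ) :
    bilK β i (t • z) w = t * bilK β i z w := by
  simp [bilK, Finset.mul_sum, mul_assoc]

lemma bilK_smul_right (β : Fin n → Fin l) (i : Fin l) (t : ℂ) (z w : Fin n → ℂ) :
    bilK β i z (t • w) = t * bilK β i z w := by
  rw [bilK_comm, bilK_smul_left, bilK_comm]

@[simp] lemma bilK_zero_left (β : Fin n → Fin l) (i : Fin l) (w : Fin n → ℂ) :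
    bilK β i 0 w = 0 := by
  simp [bilK]

@[simp] lemma bilK_zero_right (β : Fin n → Fin l) (i : Fin l) (z : Fin n → ℂ) :
    bilK β i z 0 = 0 := by
  simp [bilK]

@[simp] lemma rhoK_zero_left (β : Fin n → Fin l) (p : Fin l → ℕ) (w : Fin n → ℂ) :
    rhoK β p 0 w = 1 := by
  simp [rhoK]

@[simp] lemma rhoK_zero_right (β : Fin n → Fin l) (p : Fin l → ℕ) (w : Fin n → ℂ) :
    rhoK β p w 0 = 1 := by
  simp [rhoK]

lemma blockSq_nonneg (β : Fin n → Fin l) (i : Fin l) (z : Fin n → ℂ) : 0 ≤ blockSq β i z :=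
  Finset.sum_nonneg fun _ _ => normSq_nonneg _

lemma gnorm_pos {β : Fin n → Fin l} {p : Fin l → ℕ} {z : Fin n → ℂ} (hz : z ∈ prodBalls β) :
    0 < gnorm β p z :=
  Finset.prod_pos fun i _ => pow_pos (sub_pos.2 (hz i)) _

section

variable {E : Type*} [NormedAddCommGroup E] [NormedSpace ℂ E]

lemma DifferentiableAt.bilK {β : Fin n → Fin l} {i : Fin l} {f g : E → Fin n → ℂ} {x : E}
    (hf : DifferentiableAt ℂ f x) (hg : DifferentiableAt ℂ g x) :
    DifferentiableAt ℂ (fun y => _root_.bilK β i (f y) (g y)) x := by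
  unfold _root_.bilK
  have h1 := differentiableAt_pi.1 hf
  have h2 := differentiableAt_pi.1 hg
  fun_prop

lemma DifferentiableAt.rhoK {β : Fin n → Fin l} {p : Fin l → ℕ} {f g : E → Fin n → ℂ} {x : E}
    (hf : DifferentiableAt ℂ f x) (hg : DifferentiableAt ℂ g x) :
    DifferentiableAt ℂ (fun y => _root_.rhoK β p (f y) (g y)) x := by
  unfold _root_.rhoK
  have h1 := fun i => DifferentiableAt.bilK (β := β) (i := i) hf hg
  exact (HasFDerivAt.finsetProd fun i _ =>
    (((h1 i).const_sub 1).pow (p i)).hasFDerivAt).differentiableAt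

end

lemma isOpen_prodBalls (β : Fin n → Fin l) : IsOpen (prodBalls β) := by
  have : prodBalls β = ⋂ i, {z | blockSq β i z < 1} := by
    ext; simp [prodBalls]
  rw [this]
  refine isOpen_iInter_of_finite fun i => isOpen_lt ?_ continuous_const
  unfold blockSq
  fun_prop

lemma zero_mem_prodBalls (β : Fin n → Fin l) : (0 : Fin n → ℂ) ∈ prodBalls β := by
  intro i; simp [blockSq]

lemma x0_mem_circBundle (β : Fin n → Fin l) (p : Fin l → ℕ) : x0 ∈ circBundle β p := by
  refine ⟨zero_mem_prodBalls β, ?_⟩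
  simp [gnorm, blockSq]

variable {G : Type*} [NormedAddCommGroup G] [NormedSpace ℂ G] [CompleteSpace G]

/-- A holomorphic identity `H (P, P̄) = 0` on the circle bundle near the base point polarizes. -/
lemma polarize (β : Fin n → Fin l) (p : Fin l → ℕ)
    {H : ((Fin n → ℂ) × ℂ) × ((Fin n → ℂ) × ℂ) → G}
    (hH : ∀ᶠ Q in 𝓝 (x0, x0), DifferentiableAt ℂ H Q)
    (h0 : ∀ᶠ P in 𝓝 x0, P ∈ circBundle β p → H (P, star P) = 0) :
    ∀ᶠ T : (Fin n → ℂ) × (Fin n → ℂ) × ℂ in 𝓝 (0, 0, 1),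
      H ((T.1, T.2.2), (T.2.1, rhoK β p T.1 T.2.1 / T.2.2)) = 0 := by
  let r : (Fin n → ℂ) × (Fin n → ℂ) × ℂ → ℂ := fun T => rhoK β p T.1 T.2.1
  have hr : ∀ T, DifferentiableAt ℂ r T := fun T => DifferentiableAt.rhoK (by fun_prop) (by fun_prop)
  have hrc : Continuous r := continuous_iff_continuousAt.2 fun T => (hr T).continuousAt
  let S : (Fin n → ℂ) × (Fin n → ℂ) × ℂ → ℂ := fun T => exp (log (r T) / 2)
  have hSS : ∀ T, r T ≠ 0 → S T * S T = r T := by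
    intro T hT
    simp only [S]
    rw [← exp_add, add_halves, exp_log hT]
  let ψ : (Fin n → ℂ) × (Fin n → ℂ) × ℂ → ((Fin n → ℂ) × ℂ) × ((Fin n → ℂ) × ℂ) :=
    fun T => ((T.1, exp T.2.2 * S T), (T.2.1, exp (-T.2.2) * S T))
  have hr0 : ∀ s : ℂ, r (0, 0, s) = 1 := by intro s; simp [r]
  have hψ0 : ψ 0 = (x0, x0) := by
    have : r 0 = 1 := hr0 0
    simp [ψ, S, this, x0]
  have hslit : ∀ s : ℂ, ∀ᶠ T in 𝓝 ((0, 0, s) : (Fin n → ℂ) × (Fin n → ℂ) × ℂ),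
      r T ∈ slitPlane := by
    intro s
    apply hrc.continuousAt
    rw [hr0]
    exact isOpen_slitPlane.mem_nhds (by simp)
  have hψd : ∀ T, r T ∈ slitPlane → DifferentiableAt ℂ ψ T := by
    intro T hT
    have h1 : DifferentiableAt ℂ S T := by
      have := (hr T).clog hT
      fun_prop
    refine DifferentiableAt.prodMk ?_ ?_
    · exact DifferentiableAt.prodMk (by fun_prop) (by fun_prop)
    · exact DifferentiableAt.prodMk (by fun_prop) (by fun_prop)
  have hψc : Tendsto ψ (𝓝 0) (𝓝 (x0, x0)) := by
    rw [← hψ0]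
    exact (hψd 0 ((hslit 0).self_of_nhds)).continuousAt
  have hK : ∀ᶠ T in 𝓝 0, DifferentiableAt ℂ (fun T => H (ψ T)) T := by
    filter_upwards [hψc.eventually hH, hslit 0] with T h1 h2
    exact h1.comp T (hψd T h2)
  have hfix : ∀ᶠ T in 𝓝 (0 : (Fin n → ℂ) × (Fin n → ℂ) × ℂ),
      (star T.2.1, star T.1, - star T.2.2) = T → H (ψ T) = 0 := by
    have h1 : Tendsto (fun T => (ψ T).1) (𝓝 0) (𝓝 x0) := hψc.fst_nhds
    have h2 : ∀ᶠ T in 𝓝 (0 : (Fin n → ℂ) × (Fin n → ℂ) × ℂ), T.1 ∈ prodBalls β :=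
      continuous_fst.continuousAt ((isOpen_prodBalls β).mem_nhds (zero_mem_prodBalls β))
    filter_upwards [h1.eventually h0, h2] with T hT1 hT2 hcT
    obtain ⟨z, w, σ⟩ := T
    simp only [Prod.mk.injEq] at hcT
    obtain ⟨-, rfl, hσ⟩ := hcT
    have hρ : r (z, star z, σ) = (gnorm β p z : ℂ) := rhoK_star β p z
    have hpos : 0 < gnorm β p z := gnorm_pos hT2
    have hSr : star (S (z, star z, σ)) = S (z, star z, σ) := by
      simp only [S, hρ]
      rw [← Complex.ofReal_log hpos.le]
      simp [← exp_conj, show (starRingEnd ℂ) 2 = 2 from map_ofNat _ 2]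
    have hst : star (exp σ * S (z, star z, σ)) = exp (-σ) * S (z, star z, σ) := by
      rw [star_mul', hSr]
      congr 1
      simp only [RCLike.star_def, ← exp_conj]
      congr 1
      simpa using (congrArg Neg.neg hσ)
    have hmem : (z, exp σ * S (z, star z, σ)) ∈ circBundle β p := by
      refine ⟨hT2, ?_⟩
      have : ((normSq (exp σ * S (z, star z, σ)) : ℝ) : ℂ) = (gnorm β p z : ℂ) := by
        rw [← Complex.mul_conj, ← RCLike.star_def, hst, ← hρ,
          ← hSS (z, star z, σ) (by rw [hρ]; exact_mod_cast hpos.ne')]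
        have : exp σ * exp (-σ) = 1 := by rw [← exp_add]; simp
        linear_combination (S (z, star z, σ)) ^ 2 * this
      exact_mod_cast this
    have := hT1 hmem
    simp only [ψ]
    convert this using 2
    simp only [Prod.mk.injEq, ψ]
    refine ⟨trivial, ?_⟩
    ext1
    · rfl
    · exact hst.symm
  have hK0 := eventually_eq_zero_of_conj_fixed
    (c := fun T : (Fin n → ℂ) × (Fin n → ℂ) × ℂ => (star T.2.1, star T.1, - star T.2.2))
    (by intro x y; simp; ring) (by intro t x; ext <;> simp) (by intro x; simp)
    (by
      intro x
      simp only [Prod.norm_def, norm_neg, norm_star]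
      rw [max_left_comm]) hK hfix
  let σ : (Fin n → ℂ) × (Fin n → ℂ) × ℂ → (Fin n → ℂ) × (Fin n → ℂ) × ℂ :=
    fun T => (T.1, T.2.1, log T.2.2 - log (r T) / 2)
  have hσc : Tendsto σ (𝓝 (0, 0, 1)) (𝓝 0) := by
    have : ContinuousAt σ (0, 0, 1) := by
      have h1 : ContinuousAt (fun T => log (r T)) (0, 0, 1) :=
        hrc.continuousAt.clog ((hslit 1).self_of_nhds)
      have h2 : ContinuousAt (fun T : (Fin n → ℂ) × (Fin n → ℂ) × ℂ => log T.2.2) (0, 0, 1) :=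
        ContinuousAt.clog (by fun_prop) (by simp)
      fun_prop
    have h0 : σ (0, 0, 1) = 0 := by simp [σ, hr0]
    rw [← h0]
    exact this
  have hne : ∀ᶠ T in 𝓝 ((0, 0, 1) : (Fin n → ℂ) × (Fin n → ℂ) × ℂ), T.2.2 ≠ 0 := by
    have : Continuous fun T : (Fin n → ℂ) × (Fin n → ℂ) × ℂ => T.2.2 := by fun_prop
    exact this.continuousAt.eventually_ne (by simp)
  filter_upwards [hσc.eventually hK0, hslit 1, hne] with T h1 h2 h3
  have hr' : r (σ T) = r T := rfl
  have hrT : r T ≠ 0 := slitPlane_ne_zero h2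
  convert h1 using 2
  simp only [ψ, σ]
  have e1 : exp (log T.2.2 - log (r T) / 2) * S T = T.2.2 := by
    simp only [S]
    rw [← exp_add, sub_add_cancel, exp_log h3]
  have e2 : exp (-(log T.2.2 - log (r T) / 2)) * S T = rhoK β p T.1 T.2.1 / T.2.2 := by
    simp only [S]
    rw [← exp_add, show -(log T.2.2 - log (r T) / 2) + log (r T) / 2 = log (r T) - log T.2.2 by ring,
      exp_sub, exp_log hrT, exp_log h3]
  ext1
  · ext1
    · rfl
    · exact e1.symm
  · ext1
    · rfl
    · exact e2.symm

end Polarization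

lemma DifferentiableAt.complex_div {E : Type*} [NormedAddCommGroup E] [NormedSpace ℂ E]
    {f g : E → ℂ} {x : E} (hf : DifferentiableAt ℂ f x) (hg : DifferentiableAt ℂ g x)
    (h : g x ≠ 0) : DifferentiableAt ℂ (fun y => f y / g y) x := by
  simp only [div_eq_mul_inv]
  exact hf.fun_mul (hg.inv h)

section Automorphisms

variable {n l : ℕ}

/-- The tube `Ω × ℂ` over the product of balls. -/
def tube (β : Fin n → Fin l) : Set ((Fin n → ℂ) × ℂ) := {P | P.1 ∈ prodBalls β}

lemma isOpen_tube (β : Fin n → Fin l) : IsOpen (tube β) :=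
  (isOpen_prodBalls β).preimage continuous_fst

lemma discBundle_subset_tube (β : Fin n → Fin l) (p : Fin l → ℕ) : discBundle β p ⊆ tube β :=
  fun _ h => h.1

lemma one_sub_bilK_ne_zero {β : Fin n → Fin l} {z a : Fin n → ℂ} (hz : z ∈ prodBalls β)
    (ha : a ∈ prodBalls β) (i : Fin l) : 1 - bilK β i z (star a) ≠ 0 := by
  intro h
  have h1 : ‖bilK β i z (star a)‖ ≤ (blockSq β i z + blockSq β i a) / 2 := by
    unfold bilK blockSq
    rw [← Finset.sum_add_distrib, Finset.sum_div]
    refine (norm_sum_le _ _).trans (Finset.sum_le_sum fun j _ => ?_)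
    rw [norm_mul, Pi.star_apply, norm_star, normSq_eq_norm_sq, normSq_eq_norm_sq]
    nlinarith [sq_nonneg (‖z j‖ - ‖a j‖)]
  rw [← sub_eq_zero.1 h, norm_one] at h1
  linarith [hz i, ha i]

/-- The radius parameter `√(1 - ‖aᵢ‖²)` of the ball automorphism `phi`. -/
def rad (β : Fin n → Fin l) (a : Fin n → ℂ) (i : Fin l) : ℝ := Real.sqrt (1 - blockSq β i a)

lemma rad_pos {β : Fin n → Fin l} {a : Fin n → ℂ} (ha : a ∈ prodBalls β) (i : Fin l) :
    0 < rad β a i := Real.sqrt_pos.2 (sub_pos.2 (ha i))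

lemma rad_sq {β : Fin n → Fin l} {a : Fin n → ℂ} (ha : a ∈ prodBalls β) (i : Fin l) :
    rad β a i ^ 2 = 1 - blockSq β i a := Real.sq_sqrt (sub_pos.2 (ha i)).le

lemma rad_sq' {β : Fin n → Fin l} {a : Fin n → ℂ} (ha : a ∈ prodBalls β) (i : Fin l) :
    (rad β a i : ℂ) ^ 2 = 1 - bilK β i a (star a) := by
  rw [bilK_star]; exact_mod_cast rad_sq ha i

lemma one_add_rad_ne {β : Fin n → Fin l} {a : Fin n → ℂ} (ha : a ∈ prodBalls β) (i : Fin l) :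
    (1 + (rad β a i : ℂ)) ≠ 0 := by
  have := rad_pos ha i
  exact_mod_cast (by positivity : (1 + rad β a i) ≠ 0)

/-- The involutive automorphism of the product of balls exchanging `0` and `a`. -/
def phi (β : Fin n → Fin l) (a z : Fin n → ℂ) : Fin n → ℂ := fun j =>
  ((1 - bilK β (β j) z (star a) / (1 + rad β a (β j))) * a j - rad β a (β j) * z j) /
    (1 - bilK β (β j) z (star a))

lemma bilK_phi_left (β : Fin n → Fin l) (a z w : Fin n → ℂ) (i : Fin l) :
    bilK β i (phi β a z) w = ((1 - bilK β i z (star a) / (1 + rad β a i)) * bilK β i a w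
      - rad β a i * bilK β i z w) / (1 - bilK β i z (star a)) := by
  have : bilK β i (phi β a z) w = ∑ j ∈ Finset.univ.filter (fun j => β j = i),
      ((1 - bilK β i z (star a) / (1 + rad β a i)) * a j - rad β a i * z j) /
    (1 - bilK β i z (star a)) * w j := by
    unfold bilK
    refine Finset.sum_congr rfl fun j hj => ?_
    rw [Finset.mem_filter] at hj
    simp only [phi, hj.2]
    rfl
  rw [this]
  generalize bilK β i z (star a) = u
  unfold bilK
  rw [Finset.mul_sum, Finset.mul_sum, ← Finset.sum_sub_distrib, Finset.sum_div]
  exact Finset.sum_congr rfl fun j _ => by ring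

lemma one_sub_bilK_phi {β : Fin n → Fin l} {a z : Fin n → ℂ} (ha : a ∈ prodBalls β)
    (hz : z ∈ prodBalls β) (i : Fin l) :
    1 - bilK β i (phi β a z) (star a) = (rad β a i : ℂ) ^ 2 / (1 - bilK β i z (star a)) := by
  rw [bilK_phi_left]
  have h1 := one_sub_bilK_ne_zero hz ha i
  have h2 := one_add_rad_ne ha i
  have h3 := rad_sq' ha i
  have h4 : bilK β i a (star a) = (1 - rad β a i) * (1 + rad β a i) := by linear_combination h3
  rw [h4]
  field_simp
  ring

lemma one_sub_bilK_phi_phi {β : Fin n → Fin l} {a z : Fin n → ℂ} (ha : a ∈ prodBalls β)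
    (hz : z ∈ prodBalls β) (i : Fin l) :
    1 - bilK β i (phi β a z) (star (phi β a z)) =
      (rad β a i : ℂ) ^ 2 * (1 - bilK β i z (star z)) /
        ((1 - bilK β i z (star a)) * star (1 - bilK β i z (star a))) := by
  have h1 := one_sub_bilK_ne_zero hz ha i
  have h2 := one_add_rad_ne ha i
  have h3 := rad_sq' ha i
  have h4 : bilK β i a (star a) = (1 - rad β a i) * (1 + rad β a i) := by linear_combination h3
  have h5 : star (1 - bilK β i z (star a)) ≠ 0 := star_ne_zero.2 h1
  have hsw : ∀ w, bilK β i w (star (phi β a z)) = star (bilK β i (phi β a z) (star w)) := by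
    intro w; rw [star_bilK, star_star, bilK_comm]
  have hstr : star (rad β a i : ℂ) = rad β a i := by simp
  have hz' : star (bilK β i z (star z)) = bilK β i z (star z) := by
    rw [bilK_star]; simp
  have haz : bilK β i a (star z) = star (bilK β i z (star a)) := by
    rw [star_bilK, star_star, bilK_comm]
  rw [bilK_phi_left, hsw, hsw, bilK_phi_left, bilK_phi_left, h4, haz]
  simp only [star_div₀, star_sub, star_mul', star_add, star_one, hstr, star_star, hz'] at h5 ⊢
  set u := bilK β i z (star a)
  set v := star u
  field_simp
  ring

lemma phi_mem {β : Fin n → Fin l} {a z : Fin n → ℂ} (ha : a ∈ prodBalls β)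
    (hz : z ∈ prodBalls β) : phi β a z ∈ prodBalls β := by
  intro i
  have h := one_sub_bilK_phi_phi ha hz i
  have h1 := one_sub_bilK_ne_zero hz ha i
  rw [bilK_star, bilK_star, RCLike.star_def, Complex.mul_conj] at h
  have h' : 1 - blockSq β i (phi β a z) = rad β a i ^ 2 * (1 - blockSq β i z) /
      normSq (1 - bilK β i z (star a)) := by exact_mod_cast h
  have : 0 < 1 - blockSq β i (phi β a z) := by
    rw [h']
    have := rad_pos ha i
    have := sub_pos.2 (hz i)
    have := normSq_pos.2 h1
    positivity
  linarith

lemma phi_phi {β : Fin n → Fin l} {a z : Fin n → ℂ} (ha : a ∈ prodBalls β)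
    (hz : z ∈ prodBalls β) : phi β a (phi β a z) = z := by
  funext j
  have h := one_sub_bilK_phi ha hz (β j)
  have h1 := one_sub_bilK_ne_zero hz ha (β j)
  have h2 := one_add_rad_ne ha (β j)
  have hr : (rad β a (β j) : ℂ) ≠ 0 := by exact_mod_cast (rad_pos ha (β j)).ne'
  have h' : bilK β (β j) (phi β a z) (star a) =
      1 - (rad β a (β j) : ℂ) ^ 2 / (1 - bilK β (β j) z (star a)) := by
    linear_combination -h
  rw [phi.eq_def β a (phi β a z)]
  simp only [h']
  rw [phi]
  field_simp
  ring

/-- The automorphism of the disc bundle sending the base point to `A`. -/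
def autT (β : Fin n → Fin l) (p : Fin l → ℕ) (A P : (Fin n → ℂ) × ℂ) : (Fin n → ℂ) × ℂ :=
  (phi β A.1 P.1, A.2 * P.2 / rhoK β p P.1 (star A.1))

/-- The point whose automorphism is inverse to that of `A`. -/
def bar2 (A : (Fin n → ℂ) × ℂ) : (Fin n → ℂ) × ℂ := (A.1, star A.2)

@[simp] lemma bar2_bar2 (A : (Fin n → ℂ) × ℂ) : bar2 (bar2 A) = A := by simp [bar2]

lemma bar2_mem {β : Fin n → Fin l} {p : Fin l → ℕ} {A : (Fin n → ℂ) × ℂ}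
    (hA : A ∈ circBundle β p) : bar2 A ∈ circBundle β p :=
  ⟨hA.1, by simpa [bar2] using hA.2⟩

lemma rhoK_ne_zero {β : Fin n → Fin l} {p : Fin l → ℕ} {z a : Fin n → ℂ} (hz : z ∈ prodBalls β)
    (ha : a ∈ prodBalls β) : rhoK β p z (star a) ≠ 0 :=
  Finset.prod_ne_zero_iff.2 fun i _ => pow_ne_zero _ (one_sub_bilK_ne_zero hz ha i)

lemma prod_rad_sq {β : Fin n → Fin l} {p : Fin l → ℕ} {A : (Fin n → ℂ) × ℂ}
    (hA : A ∈ circBundle β p) : ∏ i, ((rad β A.1 i : ℂ) ^ 2) ^ p i = normSq A.2 := by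
  rw [hA.2, gnorm]
  push_cast
  refine Finset.prod_congr rfl fun i _ => ?_
  rw [rad_sq' hA.1 i, bilK_star]

lemma gnorm_autT {β : Fin n → Fin l} {p : Fin l → ℕ} {A P : (Fin n → ℂ) × ℂ}
    (hA : A ∈ circBundle β p) (hP : P ∈ tube β) :
    gnorm β p (autT β p A P).1 =
      normSq A.2 / normSq (rhoK β p P.1 (star A.1)) * gnorm β p P.1 := by
  have : (gnorm β p (autT β p A P).1 : ℂ) =
      (normSq A.2 / normSq (rhoK β p P.1 (star A.1)) * gnorm β p P.1 : ℝ) := by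
    push_cast
    rw [← rhoK_star, ← rhoK_star, ← prod_rad_sq hA, ← Complex.mul_conj]
    simp only [rhoK, map_prod, ← Finset.prod_mul_distrib, ← Finset.prod_div_distrib]
    refine Finset.prod_congr rfl fun i _ => ?_
    simp only [autT, one_sub_bilK_phi_phi hA.1 hP i, map_pow, ← mul_pow, ← div_pow,
      RCLike.star_def]
    congr 1
    ring
  exact_mod_cast this

lemma normSq_autT (β : Fin n → Fin l) (p : Fin l → ℕ) (A P : (Fin n → ℂ) × ℂ) :
    normSq (autT β p A P).2 =
      normSq A.2 / normSq (rhoK β p P.1 (star A.1)) * normSq P.2 := by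
  simp only [autT, map_div₀, map_mul]
  ring

lemma normSq_snd_pos {β : Fin n → Fin l} {p : Fin l → ℕ} {A : (Fin n → ℂ) × ℂ}
    (hA : A ∈ circBundle β p) : 0 < normSq A.2 := by
  rw [hA.2]; exact gnorm_pos hA.1

lemma snd_ne_zero {β : Fin n → Fin l} {p : Fin l → ℕ} {A : (Fin n → ℂ) × ℂ}
    (hA : A ∈ circBundle β p) : A.2 ≠ 0 := normSq_pos.1 (normSq_snd_pos hA)

lemma autT_mem_circBundle {β : Fin n → Fin l} {p : Fin l → ℕ} {A P : (Fin n → ℂ) × ℂ}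
    (hA : A ∈ circBundle β p) (hP : P ∈ circBundle β p) : autT β p A P ∈ circBundle β p := by
  refine ⟨phi_mem hA.1 hP.1, ?_⟩
  rw [gnorm_autT hA hP.1, normSq_autT, hP.2]

lemma autT_mem_discBundle {β : Fin n → Fin l} {p : Fin l → ℕ} {A P : (Fin n → ℂ) × ℂ}
    (hA : A ∈ circBundle β p) (hP : P ∈ discBundle β p) : autT β p A P ∈ discBundle β p := by
  refine ⟨phi_mem hA.1 hP.1, ?_⟩
  rw [gnorm_autT hA hP.1, normSq_autT]
  have := normSq_snd_pos hA
  have := normSq_pos.2 (rhoK_ne_zero (p := p) hP.1 hA.1)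
  have := hP.2
  gcongr

lemma autT_bar2_autT {β : Fin n → Fin l} {p : Fin l → ℕ} {A P : (Fin n → ℂ) × ℂ}
    (hA : A ∈ circBundle β p) (hP : P ∈ tube β) : autT β p (bar2 A) (autT β p A P) = P := by
  ext1
  · exact phi_phi hA.1 hP
  · have h1 : rhoK β p (phi β A.1 P.1) (star A.1) = normSq A.2 / rhoK β p P.1 (star A.1) := by
      rw [← prod_rad_sq hA]
      simp only [rhoK, ← Finset.prod_div_distrib, ← div_pow]
      exact Finset.prod_congr rfl fun i _ => by rw [one_sub_bilK_phi hA.1 hP i]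
    have h2 := rhoK_ne_zero (p := p) hP hA.1
    have h3 := snd_ne_zero hA
    have h4 : (starRingEnd ℂ) A.2 ≠ 0 := by simpa using h3
    simp only [autT, bar2, h1, RCLike.star_def, ← Complex.mul_conj]
    field_simp

lemma autT_autT_bar2 {β : Fin n → Fin l} {p : Fin l → ℕ} {A P : (Fin n → ℂ) × ℂ}
    (hA : A ∈ circBundle β p) (hP : P ∈ tube β) : autT β p A (autT β p (bar2 A) P) = P := by
  simpa using autT_bar2_autT (bar2_mem hA) hP

lemma autT_x0 (β : Fin n → Fin l) (p : Fin l → ℕ) (A : (Fin n → ℂ) × ℂ) :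
    autT β p A x0 = A := by
  ext1
  · funext j; simp [autT, phi]
  · simp [autT]

lemma autT_bar2_self {β : Fin n → Fin l} {p : Fin l → ℕ} {A : (Fin n → ℂ) × ℂ}
    (hA : A ∈ circBundle β p) : autT β p (bar2 A) A = x0 := by
  have := autT_bar2_autT (P := x0) hA (zero_mem_prodBalls β)
  rwa [autT_x0] at this

lemma differentiableAt_autT {β : Fin n → Fin l} {p : Fin l → ℕ} {A P : (Fin n → ℂ) × ℂ}
    (hA : A ∈ circBundle β p) (hP : P ∈ tube β) : DifferentiableAt ℂ (autT β p A) P := by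
  have hb : ∀ i, DifferentiableAt ℂ (fun P : (Fin n → ℂ) × ℂ => bilK β i P.1 (star A.1)) P :=
    fun i => DifferentiableAt.bilK (by fun_prop) (by fun_prop)
  have hr : DifferentiableAt ℂ (fun P : (Fin n → ℂ) × ℂ => rhoK β p P.1 (star A.1)) P :=
    DifferentiableAt.rhoK (by fun_prop) (by fun_prop)
  refine DifferentiableAt.prodMk (differentiableAt_pi.2 fun j => ?_) ?_
  · have := hb (β j)
    have hz : DifferentiableAt ℂ (fun P : (Fin n → ℂ) × ℂ => P.1 j) P := by fun_prop
    exact DifferentiableAt.complex_div (by fun_prop) (by fun_prop) (one_sub_bilK_ne_zero hP hA.1 _)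
  · exact DifferentiableAt.complex_div (differentiableAt_snd.const_mul _) hr (rhoK_ne_zero hP hA.1)

end Automorphisms

section LogDerivative

variable {ι : Type*} [Fintype ι]

lemma hasDerivAt_prod_one_sub {x x' : ι → ℂ → ℂ} {p : ι → ℕ} {t : ℂ}
    (hx : ∀ i, HasDerivAt (x i) (x' i t) t) (h1 : ∀ i, 1 - x i t ≠ 0) :
    HasDerivAt (fun s => ∏ i, (1 - x i s) ^ p i)
      ((∏ i, (1 - x i t) ^ p i) * -∑ i, p i * (x' i t / (1 - x i t))) t := by
  classical
  have h := HasDerivAt.finsetProd (u := Finset.univ) (f := fun i s => (1 - x i s) ^ p i)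
    (f' := fun i => p i * (1 - x i t) ^ (p i - 1) * (-x' i t)) (x := t)
    (fun i _ => by simpa using ((hx i).const_sub 1).fun_pow (p i))
  rw [show (∏ i, fun s => (1 - x i s) ^ p i) = fun s => ∏ i, (1 - x i s) ^ p i by
    funext s; simp] at h
  refine h.congr_deriv (Eq.symm ?_)
  rw [← Finset.sum_neg_distrib, Finset.mul_sum]
  refine Finset.sum_congr rfl fun i _ => ?_
  rw [← Finset.mul_prod_erase Finset.univ _ (Finset.mem_univ i), smul_eq_mul]
  rcases Nat.eq_zero_or_pos (p i) with hp | hp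
  · simp [hp]
  · obtain ⟨k, hk⟩ : ∃ k, p i = k + 1 := ⟨p i - 1, by omega⟩
    rw [hk, Nat.add_sub_cancel, pow_succ]
    have := h1 i
    field_simp

lemma sum_div_eq_zero_of_prod_eq_one {x x' : ι → ℂ → ℂ} {p : ι → ℕ} {t : ℂ}
    (hx : ∀ i, HasDerivAt (x i) (x' i t) t) (h1 : ∀ i, 1 - x i t ≠ 0)
    (h : ∀ᶠ s in 𝓝 t, ∏ i, (1 - x i s) ^ p i = 1) :
    ∑ i, p i * (x' i t / (1 - x i t)) = 0 := by
  have h2 := (hasDerivAt_prod_one_sub (p := p) hx h1).unique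
    ((hasDerivAt_const t (1 : ℂ)).congr_of_eventuallyEq h)
  rw [h.self_of_nhds, one_mul, neg_eq_zero] at h2
  exact h2

/-- Second order consequence of `∏ (1 - xᵢ)^pᵢ = 1`. -/
lemma sum_second_order {x x' : ι → ℂ → ℂ} {x'' : ι → ℂ} {p : ι → ℕ}
    (hx : ∀ i, ∀ᶠ t in 𝓝 0, HasDerivAt (x i) (x' i t) t) (h0 : ∀ i, x i 0 = 0)
    (hx' : ∀ i, HasDerivAt (x' i) (x'' i) 0)
    (h : ∀ᶠ s in 𝓝 0, ∏ i, (1 - x i s) ^ p i = 1) :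
    ∑ i, p i * (x'' i + x' i 0 ^ 2) = 0 := by
  have hne : ∀ i, ∀ᶠ t in 𝓝 0, 1 - x i t ≠ 0 := by
    intro i
    have hc : ContinuousAt (fun t => 1 - x i t) 0 :=
      continuousAt_const.sub (hx i).self_of_nhds.continuousAt
    exact hc.eventually_ne (by simp [h0])
  have h1 : ∀ᶠ t in 𝓝 0, ∑ i, p i * (x' i t / (1 - x i t)) = 0 := by
    filter_upwards [eventually_all.2 hx, eventually_all.2 hne, h.eventually_nhds] with t h1 h2 h3
    exact sum_div_eq_zero_of_prod_eq_one h1 h2 h3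
  have h2 : HasDerivAt (fun t => ∑ i, p i * (x' i t / (1 - x i t)))
      (∑ i, p i * (x'' i + x' i 0 ^ 2)) 0 := by
    apply HasDerivAt.fun_sum
    intro i _
    have := (hx' i).fun_div ((hx i).self_of_nhds.const_sub 1) (by simp [h0])
    refine (this.const_mul (p i : ℂ)).congr_deriv ?_
    simp [h0]
    left; ring
  exact h2.unique ((hasDerivAt_const (0 : ℂ) (0 : ℂ)).congr_of_eventuallyEq h1)

end LogDerivative

section BilinearForm

variable {n l : ℕ}

/-- The weighted bilinear form `∑ pᵢ zᵢ·wᵢ`. -/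
def bilS (β : Fin n → Fin l) (p : Fin l → ℕ) (z w : Fin n → ℂ) : ℂ :=
  ∑ i, p i * bilK β i z w

lemma bilS_eq (β : Fin n → Fin l) (p : Fin l → ℕ) (z w : Fin n → ℂ) :
    bilS β p z w = ∑ j, p (β j) * (z j * w j) := by
  simp only [bilS, bilK, Finset.mul_sum]
  rw [← Finset.sum_fiberwise (s := Finset.univ) (g := β)]
  refine Finset.sum_congr rfl fun i _ => Finset.sum_congr rfl fun j hj => ?_
  rw [(Finset.mem_filter.1 hj).2]

lemma bilS_add_left (β : Fin n → Fin l) (p : Fin l → ℕ) (z z' w : Fin n → ℂ) :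
    bilS β p (z + z') w = bilS β p z w + bilS β p z' w := by
  simp [bilS, bilK_add_left, mul_add, Finset.sum_add_distrib]

lemma bilS_smul_left (β : Fin n → Fin l) (p : Fin l → ℕ) (t : ℂ) (z w : Fin n → ℂ) :
    bilS β p (t • z) w = t * bilS β p z w := by
  simp only [bilS, bilK_smul_left, Finset.mul_sum]
  exact Finset.sum_congr rfl fun i _ => by ring

lemma bilS_comm (β : Fin n → Fin l) (p : Fin l → ℕ) (z w : Fin n → ℂ) :
    bilS β p z w = bilS β p w z := by
  simp [bilS, bilK_comm]

lemma bilS_add_right (β : Fin n → Fin l) (p : Fin l → ℕ) (z w w' : Fin n → ℂ) :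
    bilS β p z (w + w') = bilS β p z w + bilS β p z w' := by
  simp only [bilS_comm β p z, bilS_add_left]

lemma bilS_smul_right (β : Fin n → Fin l) (p : Fin l → ℕ) (t : ℂ) (z w : Fin n → ℂ) :
    bilS β p z (t • w) = t * bilS β p z w := by
  simp only [bilS_comm β p z, bilS_smul_left]

lemma star_bilS (β : Fin n → Fin l) (p : Fin l → ℕ) (z w : Fin n → ℂ) :
    star (bilS β p z w) = bilS β p (star z) (star w) := by
  simp [bilS, ← star_bilK]

@[simp] lemma bilS_zero_left (β : Fin n → Fin l) (p : Fin l → ℕ) (w : Fin n → ℂ) :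
    bilS β p 0 w = 0 := by simp [bilS]

@[simp] lemma bilS_zero_right (β : Fin n → Fin l) (p : Fin l → ℕ) (w : Fin n → ℂ) :
    bilS β p w 0 = 0 := by simp [bilS]

lemma bilS_single_right (β : Fin n → Fin l) (p : Fin l → ℕ) (z : Fin n → ℂ) (m : Fin n) (t : ℂ) :
    bilS β p z (Pi.single m t) = p (β m) * (z m * t) := by
  rw [bilS_eq, Finset.sum_eq_single m]
  · simp
  · intro j _ hj; simp [Pi.single_eq_of_ne hj]
  · simp

lemma bilS_nondegenerate {β : Fin n → Fin l} {p : Fin l → ℕ} (hp : ∀ i, 0 < p i) {z : Fin n → ℂ}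
    (h : ∀ w, bilS β p z w = 0) : z = 0 := by
  funext m
  have := h (Pi.single m 1)
  rw [bilS_single_right] at this
  have hp' : (p (β m) : ℂ) ≠ 0 := by exact_mod_cast (hp _).ne'
  simpa [hp'] using this

lemma bilS_star_self (β : Fin n → Fin l) (p : Fin l → ℕ) (z : Fin n → ℂ) :
    bilS β p z (star z) = ((∑ j, p (β j) * normSq (z j) : ℝ) : ℂ) := by
  rw [bilS_eq]
  push_cast
  simp [Complex.mul_conj]

lemma eq_zero_of_bilS_star_self {β : Fin n → Fin l} {p : Fin l → ℕ} (hp : ∀ i, 0 < p i)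
    {z : Fin n → ℂ} (h : bilS β p z (star z) = 0) : z = 0 := by
  rw [bilS_star_self] at h
  have h' : ∑ j, (p (β j) : ℝ) * normSq (z j) = 0 := by exact_mod_cast h
  rw [Finset.sum_eq_zero_iff_of_nonneg (fun j _ => by
    have := normSq_nonneg (z j); positivity)] at h'
  funext j
  have := h' j (Finset.mem_univ j)
  have hp' : (p (β j) : ℝ) ≠ 0 := by exact_mod_cast (hp _).ne'
  simpa [hp'] using this

lemma hasDerivAt_bilK_left {β : Fin n → Fin l} {i : Fin l} {f : ℂ → Fin n → ℂ} {f' : Fin n → ℂ}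
    {t : ℂ} (hf : HasDerivAt f f' t) (w : Fin n → ℂ) :
    HasDerivAt (fun s => bilK β i (f s) w) (bilK β i f' w) t := by
  unfold bilK
  exact HasDerivAt.fun_sum fun j _ => (hasDerivAt_pi.1 hf j).mul_const _

lemma hasDerivAt_bilK_right {β : Fin n → Fin l} {i : Fin l} {f : ℂ → Fin n → ℂ} {f' : Fin n → ℂ}
    {t : ℂ} (hf : HasDerivAt f f' t) (z : Fin n → ℂ) :
    HasDerivAt (fun s => bilK β i z (f s)) (bilK β i z f') t := by
  simp only [bilK_comm β i z]
  exact hasDerivAt_bilK_left hf z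

lemma hasDerivAt_bilS_left {β : Fin n → Fin l} {p : Fin l → ℕ} {f : ℂ → Fin n → ℂ}
    {f' : Fin n → ℂ} {t : ℂ} (hf : HasDerivAt f f' t) (w : Fin n → ℂ) :
    HasDerivAt (fun s => bilS β p (f s) w) (bilS β p f' w) t := by
  unfold bilS
  exact HasDerivAt.fun_sum fun j _ => (hasDerivAt_bilK_left hf w).const_mul _

/-- First order expansion of `rhoK` at a zero of the second argument. -/
lemma hasDerivAt_rhoK_right {β : Fin n → Fin l} {p : Fin l → ℕ} {f : ℂ → Fin n → ℂ}
    {f' : Fin n → ℂ} {t : ℂ} (hf : HasDerivAt f f' t) (h0 : f t = 0) (z : Fin n → ℂ) :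
    HasDerivAt (fun s => rhoK β p z (f s)) (-bilS β p z f') t := by
  have := hasDerivAt_prod_one_sub (p := p) (x := fun i s => bilK β i z (f s))
    (x' := fun i _ => bilK β i z f') (t := t) (fun i => hasDerivAt_bilK_right hf z)
    (by simp [h0])
  simpa [h0, rhoK, bilS] using this

end BilinearForm

section Germs

variable {n l l' : ℕ}

/-- A germ at `x` of a holomorphic map sending the circle bundle of `(β₁, p)` to that of
`(β₂, q)`. -/
structure CRGerm (β₁ : Fin n → Fin l) (p : Fin l → ℕ) (β₂ : Fin n → Fin l') (q : Fin l' → ℕ)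
    (F : (Fin n → ℂ) × ℂ → (Fin n → ℂ) × ℂ) (x : (Fin n → ℂ) × ℂ) : Prop where
  diff : ∀ᶠ P in 𝓝 x, DifferentiableAt ℂ F P
  map : ∀ᶠ P in 𝓝 x, P ∈ circBundle β₁ p → F P ∈ circBundle β₂ q
  mem : x ∈ circBundle β₁ p

/-- A germ at the base point fixing the base point. -/
structure NGerm (β₁ : Fin n → Fin l) (p : Fin l → ℕ) (β₂ : Fin n → Fin l') (q : Fin l' → ℕ)
    (F : (Fin n → ℂ) × ℂ → (Fin n → ℂ) × ℂ) : Prop extends CRGerm β₁ p β₂ q F x0 where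
  base : F x0 = x0

/-- The conjugate map `P ↦ conj (F (conj P))`. -/
def conjMap (F : (Fin n → ℂ) × ℂ → (Fin n → ℂ) × ℂ) (P : (Fin n → ℂ) × ℂ) : (Fin n → ℂ) × ℂ :=
  star (F (star P))

/-- The tangential derivative at the base point. -/
def dA (F : (Fin n → ℂ) × ℂ → (Fin n → ℂ) × ℂ) : (Fin n → ℂ) →ₗ[ℂ] (Fin n → ℂ) :=
  LinearMap.fst ℂ _ _ ∘ₗ (fderiv ℂ F x0).toLinearMap ∘ₗ LinearMap.inl ℂ _ _

/-- The first component of the transversal derivative at the base point. -/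
def dC (F : (Fin n → ℂ) × ℂ → (Fin n → ℂ) × ℂ) : Fin n → ℂ := (fderiv ℂ F x0 (0, 1)).1

/-- The second component of the transversal derivative at the base point. -/
def dD (F : (Fin n → ℂ) × ℂ → (Fin n → ℂ) × ℂ) : ℂ := (fderiv ℂ F x0 (0, 1)).2

lemma dA_apply (F : (Fin n → ℂ) × ℂ → (Fin n → ℂ) × ℂ) (v : Fin n → ℂ) :
    dA F v = (fderiv ℂ F x0 (v, 0)).1 := rfl

/-- The conjugate of `dA`. -/
def dAs (F : (Fin n → ℂ) × ℂ → (Fin n → ℂ) × ℂ) : (Fin n → ℂ) →ₗ[ℂ] (Fin n → ℂ) where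
  toFun w := star (dA F (star w))
  map_add' x y := by simp
  map_smul' t x := by simp

lemma dAs_apply (F : (Fin n → ℂ) × ℂ → (Fin n → ℂ) × ℂ) (w : Fin n → ℂ) :
    dAs F w = star (dA F (star w)) := rfl

variable {β₁ : Fin n → Fin l} {p : Fin l → ℕ} {β₂ : Fin n → Fin l'} {q : Fin l' → ℕ}
  {F : (Fin n → ℂ) × ℂ → (Fin n → ℂ) × ℂ}

lemma tendsto_star_x0 : Tendsto (star : (Fin n → ℂ) × ℂ → (Fin n → ℂ) × ℂ) (𝓝 x0) (𝓝 x0) := by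
  have : Continuous (star : (Fin n → ℂ) × ℂ → (Fin n → ℂ) × ℂ) := continuous_star
  exact this.tendsto' _ _ star_x0

lemma hasDerivAt_fst_comp {E G : Type*} [NormedAddCommGroup E] [NormedSpace ℂ E]
    [NormedAddCommGroup G] [NormedSpace ℂ G] {f : ℂ → E × G} {f' : E × G} {t : ℂ}
    (h : HasDerivAt f f' t) : HasDerivAt (fun s => (f s).1) f'.1 t :=
  HasFDerivAt.comp_hasDerivAt (l' := ContinuousLinearMap.fst ℂ E G) t hasFDerivAt_fst h

lemma hasDerivAt_snd_comp {E G : Type*} [NormedAddCommGroup E] [NormedSpace ℂ E]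
    [NormedAddCommGroup G] [NormedSpace ℂ G] {f : ℂ → E × G} {f' : E × G} {t : ℂ}
    (h : HasDerivAt f f' t) : HasDerivAt (fun s => (f s).2) f'.2 t :=
  HasFDerivAt.comp_hasDerivAt (l' := ContinuousLinearMap.snd ℂ E G) t hasFDerivAt_snd h

namespace NGerm

lemma diff_conj (h : NGerm β₁ p β₂ q F) :
    ∀ᶠ P in 𝓝 x0, DifferentiableAt ℂ (conjMap F) P := by
  filter_upwards [tendsto_star_x0.eventually h.diff] with P hP
  have := hP.star_star
  rw [star_star] at this
  exact this

lemma conj_base (h : NGerm β₁ p β₂ q F) : conjMap F x0 = x0 := by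
  simp [conjMap, h.base]

lemma hasFDerivAt (h : NGerm β₁ p β₂ q F) : HasFDerivAt F (fderiv ℂ F x0) x0 :=
  h.diff.self_of_nhds.hasFDerivAt

lemma hasFDerivAt_conj (h : NGerm β₁ p β₂ q F) :
    HasFDerivAt (conjMap F) (fderiv ℂ (conjMap F) x0) x0 :=
  h.diff_conj.self_of_nhds.hasFDerivAt

lemma fderiv_conj_apply (h : NGerm β₁ p β₂ q F) (v : (Fin n → ℂ) × ℂ) :
    fderiv ℂ (conjMap F) x0 v = star (fderiv ℂ F x0 (star v)) := by
  have h1 : HasFDerivAt F (fderiv ℂ F x0) x0 := h.hasFDerivAt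
  have := h1.star_star
  rw [star_x0] at this
  rw [show conjMap F = star ∘ F ∘ star from rfl, this.fderiv]
  rfl

/-- The polarized mapping equation. -/
lemma polar (h : NGerm β₁ p β₂ q F) :
    ∀ᶠ T : (Fin n → ℂ) × (Fin n → ℂ) × ℂ in 𝓝 (0, 0, 1),
      (F (T.1, T.2.2)).2 * (conjMap F (T.2.1, rhoK β₁ p T.1 T.2.1 / T.2.2)).2 =
      rhoK β₂ q (F (T.1, T.2.2)).1 (conjMap F (T.2.1, rhoK β₁ p T.1 T.2.1 / T.2.2)).1 := by
  have := polarize β₁ p (H := fun Q => (F Q.1).2 * (conjMap F Q.2).2 -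
    rhoK β₂ q (F Q.1).1 (conjMap F Q.2).1) ?_ ?_
  · filter_upwards [this] with T hT using sub_eq_zero.1 hT
  · have h1 : ∀ᶠ Q : ((Fin n → ℂ) × ℂ) × ((Fin n → ℂ) × ℂ) in 𝓝 (x0, x0),
        DifferentiableAt ℂ F Q.1 := Tendsto.eventually continuousAt_fst h.diff
    have h2 : ∀ᶠ Q : ((Fin n → ℂ) × ℂ) × ((Fin n → ℂ) × ℂ) in 𝓝 (x0, x0),
        DifferentiableAt ℂ (conjMap F) Q.2 := Tendsto.eventually continuousAt_snd h.diff_conj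
    filter_upwards [h1, h2] with Q hQ1 hQ2
    have h3 : DifferentiableAt ℂ (fun Q : ((Fin n → ℂ) × ℂ) × ((Fin n → ℂ) × ℂ) => F Q.1) Q :=
      hQ1.comp Q differentiableAt_fst
    have h4 : DifferentiableAt ℂ
        (fun Q : ((Fin n → ℂ) × ℂ) × ((Fin n → ℂ) × ℂ) => conjMap F Q.2) Q :=
      hQ2.comp Q differentiableAt_snd
    exact (h3.snd.fun_mul h4.snd).fun_sub (DifferentiableAt.rhoK h3.fst h4.fst)
  · filter_upwards [h.map] with P hP hPm
    have := (hP hPm).2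
    simp only [conjMap, star_star]
    rw [sub_eq_zero, Prod.fst_star, rhoK_star, ← this, Prod.snd_star, ← Complex.mul_conj]
    rfl

lemma snd_eq_one (h : NGerm β₁ p β₂ q F) : ∀ᶠ z in 𝓝 0, (F (z, 1)).2 = 1 := by
  have ht : Tendsto (fun z : Fin n → ℂ => (z, (0 : Fin n → ℂ), (1 : ℂ))) (𝓝 0) (𝓝 (0, 0, 1)) :=
    Continuous.tendsto' (by fun_prop) _ _ rfl
  filter_upwards [ht.eventually h.polar] with z hz
  have hb : conjMap F (0, 1) = x0 := h.conj_base
  simpa [hb] using hz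

lemma snd_conj_eq_one (h : NGerm β₁ p β₂ q F) : ∀ᶠ w in 𝓝 0, (conjMap F (w, 1)).2 = 1 := by
  have ht : Tendsto (star : (Fin n → ℂ) → (Fin n → ℂ)) (𝓝 0) (𝓝 0) :=
    Continuous.tendsto' continuous_star _ _ (star_zero _)
  filter_upwards [ht.eventually h.snd_eq_one] with w hw
  have : star (w, (1 : ℂ)) = (star w, (1 : ℂ)) := by ext1 <;> simp
  simp [conjMap, this, hw]

lemma equation (h : NGerm β₁ p β₂ q F) :
    ∀ᶠ T : (Fin n → ℂ) × (Fin n → ℂ) in 𝓝 (0, 0),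
      (conjMap F (T.2, rhoK β₁ p T.1 T.2)).2 =
      rhoK β₂ q (F (T.1, 1)).1 (conjMap F (T.2, rhoK β₁ p T.1 T.2)).1 := by
  have ht : Tendsto (fun T : (Fin n → ℂ) × (Fin n → ℂ) => (T.1, T.2, (1 : ℂ)))
      (𝓝 (0, 0)) (𝓝 (0, 0, 1)) :=
    Continuous.tendsto' (by fun_prop) _ _ rfl
  have h1 : ∀ᶠ T : (Fin n → ℂ) × (Fin n → ℂ) in 𝓝 (0, 0), (F (T.1, 1)).2 = 1 :=
    Tendsto.eventually (continuousAt_fst (p := ((0, 0) : (Fin n → ℂ) × (Fin n → ℂ))))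
      h.snd_eq_one
  filter_upwards [ht.eventually h.polar, h1] with T hT hT1
  simpa [hT1] using hT

lemma fderiv_snd (h : NGerm β₁ p β₂ q F) (v : Fin n → ℂ) : (fderiv ℂ F x0 (v, 0)).2 = 0 := by
  have h1 : HasDerivAt (fun t : ℂ => (t • v, (1 : ℂ))) (v, 0) 0 := by
    have := ((hasDerivAt_id (0 : ℂ)).smul_const v).prodMk (hasDerivAt_const (0 : ℂ) (1 : ℂ))
    simpa using this
  have h2 : HasFDerivAt F (fderiv ℂ F x0) ((fun t : ℂ => (t • v, (1 : ℂ))) 0) := by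
    simpa [x0] using h.hasFDerivAt
  have h3 := hasDerivAt_snd_comp (h2.comp_hasDerivAt (0 : ℂ) h1)
  have ht : Tendsto (fun t : ℂ => t • v) (𝓝 0) (𝓝 0) :=
    Continuous.tendsto' (by fun_prop) _ _ (by simp)
  have h4 : HasDerivAt (fun t : ℂ => (1 : ℂ)) (fderiv ℂ F x0 (v, 0)).2 0 :=
    h3.congr_of_eventuallyEq (by
      filter_upwards [ht.eventually h.snd_eq_one] with t ht using ht.symm)
  exact h4.unique (hasDerivAt_const _ _)

lemma fderiv_eq (h : NGerm β₁ p β₂ q F) (v : Fin n → ℂ) (t : ℂ) :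
    fderiv ℂ F x0 (v, t) = (dA F v + t • dC F, t * dD F) := by
  have : ((v, t) : (Fin n → ℂ) × ℂ) = (v, 0) + t • (0, 1) := by ext <;> simp
  rw [this, map_add, map_smul]
  ext1
  · simp [dA_apply, dC]
  · simp [h.fderiv_snd, dD]

lemma fderiv_conj_eq (h : NGerm β₁ p β₂ q F) (v : Fin n → ℂ) (t : ℂ) :
    fderiv ℂ (conjMap F) x0 (v, t) = (dAs F v + t • star (dC F), t * star (dD F)) := by
  rw [h.fderiv_conj_apply, show star (v, t) = (star v, star t) from rfl, h.fderiv_eq]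
  ext1
  · simp [dAs_apply]
  · simp

/-- First order expansion of the mapping equation in the second variable. -/
lemma first_order (h : NGerm β₁ p β₂ q F) : ∀ᶠ z in 𝓝 0, ∀ w,
    bilS β₂ q (F (z, 1)).1 (dAs F w) =
      bilS β₁ p z w * (star (dD F) + bilS β₂ q (F (z, 1)).1 (star (dC F))) := by
  filter_upwards [h.equation.curry_nhds] with z hz w
  have hw : HasDerivAt (fun t : ℂ => t • w) w 0 := by
    simpa using (hasDerivAt_id (0 : ℂ)).smul_const w
  have hr := hasDerivAt_rhoK_right (β := β₁) (p := p) hw (by simp) z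
  have h1 := hw.prodMk hr
  have h2 : HasFDerivAt (conjMap F) (fderiv ℂ (conjMap F) x0)
      ((fun t : ℂ => (t • w, rhoK β₁ p z (t • w))) 0) := by
    simpa [x0] using h.hasFDerivAt_conj
  have h3 := h2.comp_hasDerivAt (0 : ℂ) h1
  rw [h.fderiv_conj_eq] at h3
  have h4 := hasDerivAt_rhoK_right (β := β₂) (p := q) (hasDerivAt_fst_comp h3) (by
    have := h.conj_base
    rw [x0] at this
    simp [this]) (F (z, 1)).1
  have ht : Tendsto (fun t : ℂ => t • w) (𝓝 0) (𝓝 0) :=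
    Continuous.tendsto' (by fun_prop) _ _ (by simp)
  have h5 := (hasDerivAt_snd_comp h3).unique (h4.congr_of_eventuallyEq (by
    filter_upwards [ht.eventually hz] with t ht using ht))
  simp only [bilS_add_right, bilS_smul_right] at h5
  linear_combination h5

lemma bilS_dA (h : NGerm β₁ p β₂ q F) (z w : Fin n → ℂ) :
    bilS β₂ q (dA F z) (dAs F w) = bilS β₁ p z w * star (dD F) := by
  have hz : HasDerivAt (fun t : ℂ => t • z) z 0 := by
    simpa using (hasDerivAt_id (0 : ℂ)).smul_const z
  have h1 := hz.prodMk (hasDerivAt_const (0 : ℂ) (1 : ℂ))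
  have h2 : HasFDerivAt F (fderiv ℂ F x0) ((fun t : ℂ => (t • z, (1 : ℂ))) 0) := by
    simpa [x0] using h.hasFDerivAt
  have h3 := hasDerivAt_fst_comp (h2.comp_hasDerivAt (0 : ℂ) h1)
  rw [h.fderiv_eq] at h3
  simp only [zero_smul, add_zero] at h3
  have h4 := hasDerivAt_bilS_left (β := β₂) (p := q) h3 (dAs F w)
  have h5 := (hasDerivAt_bilS_left (β := β₁) (p := p) hz w).fun_mul
    ((hasDerivAt_bilS_left (β := β₂) (p := q) h3 (star (dC F))).const_add (star (dD F)))
  have ht : Tendsto (fun t : ℂ => t • z) (𝓝 0) (𝓝 0) :=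
    Continuous.tendsto' (by fun_prop) _ _ (by simp)
  have h6 := h4.unique (h5.congr_of_eventuallyEq (by
    filter_upwards [ht.eventually h.first_order] with t ht using ht w))
  have hb : F (0, 1) = x0 := h.base
  simpa [hb] using h6

lemma dichotomy (h : NGerm β₁ p β₂ q F) (hp : ∀ i, 0 < p i) (hq : ∀ i, 0 < q i) :
    Function.Injective (fderiv ℂ F x0) ∨ ∀ v, fderiv ℂ F x0 (v, 0) = 0 := by
  by_cases hd : dD F = 0
  · right
    intro v
    have h1 := h.bilS_dA v (star v)
    rw [hd, star_zero, mul_zero, dAs_apply, star_star] at h1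
    rw [h.fderiv_eq, eq_zero_of_bilS_star_self hq h1]
    simp
  · left
    rw [injective_iff_map_eq_zero]
    rintro ⟨v, t⟩ hv
    rw [h.fderiv_eq] at hv
    have ht : t = 0 := by simpa [hd] using congrArg Prod.snd hv
    subst ht
    have hA : dA F v = 0 := by simpa using congrArg Prod.fst hv
    have : v = 0 := by
      refine bilS_nondegenerate (β := β₁) hp fun w => ?_
      have h1 := h.bilS_dA v w
      rw [hA, bilS_zero_left] at h1
      simpa [hd] using h1.symm
    rw [this]; rfl

end NGerm

end Germs

section InjectiveCase

variable {n l l' : ℕ}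

/-- The primitive of `ε ↦ exp (-t ε)` vanishing at `0`. -/
def expPrim (t ε : ℂ) : ℂ := if t = 0 then ε else (1 - exp (-t * ε)) / t

lemma hasDerivAt_exp_neg_mul (t ε : ℂ) :
    HasDerivAt (fun e => exp (-t * e)) (-t * exp (-t * ε)) ε := by
  have := ((hasDerivAt_id ε).const_mul (-t)).cexp
  simpa [mul_comm] using this

lemma hasDerivAt_expPrim (t ε : ℂ) : HasDerivAt (expPrim t) (exp (-t * ε)) ε := by
  unfold expPrim
  by_cases ht : t = 0
  · simp only [ht, if_true, neg_zero, zero_mul, exp_zero]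
    exact hasDerivAt_id ε
  · simp only [ht, if_false]
    have := ((hasDerivAt_exp_neg_mul t ε).const_sub 1).div_const t
    refine this.congr_deriv ?_
    field_simp

@[simp] lemma expPrim_zero (t : ℂ) : expPrim t 0 = 0 := by
  unfold expPrim; split_ifs <;> simp

lemma one_sub_expPrim_mul (t ε : ℂ) : 1 - expPrim t ε * t = exp (-t * ε) := by
  unfold expPrim
  split_ifs with ht
  · simp [ht]
  · field_simp; ring

lemma bilK_blockwise_mul (β : Fin n → Fin l) (i : Fin l) (a : Fin l → ℂ) (z w : Fin n → ℂ) :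
    bilK β i (fun m => a (β m) * z m) w = a i * bilK β i z w := by
  simp only [bilK, Finset.mul_sum]
  refine Finset.sum_congr rfl fun j hj => ?_
  rw [(Finset.mem_filter.1 hj).2]; ring

/-- Second order consequence of a relation `∏ (1 - N i / (1 - L)) ^ q i = 1` along a curve. -/
lemma sum_second_order_div {ι : Type*} [Fintype ι] {N N' : ι → ℂ → ℂ} {N'' : ι → ℂ} {L L' : ℂ → ℂ}
    {L'' : ℂ} {q : ι → ℕ}
    (hN : ∀ i t, HasDerivAt (N i) (N' i t) t) (hN' : ∀ i, HasDerivAt (N' i) (N'' i) 0)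
    (hL : ∀ t, HasDerivAt L (L' t) t) (hL' : HasDerivAt L' L'' 0)
    (hN0 : ∀ i, N i 0 = 0) (hL0 : L 0 = 0)
    (h : ∀ᶠ s in 𝓝 0, ∏ i, (1 - N i s / (1 - L s)) ^ q i = 1) :
    ∑ i, q i * N'' i + 2 * L' 0 * ∑ i, q i * N' i 0 + ∑ i, q i * N' i 0 ^ 2 = 0 := by
  have hL1 : ∀ᶠ t in 𝓝 0, 1 - L t ≠ 0 := by
    have : ContinuousAt (fun t => 1 - L t) 0 := continuousAt_const.sub (hL 0).continuousAt
    exact this.eventually_ne (by simp [hL0])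
  have := sum_second_order (p := q) (x := fun i t => N i t / (1 - L t))
    (x' := fun i t => (N' i t * (1 - L t) - N i t * (- L' t)) / (1 - L t) ^ 2)
    (x'' := fun i => N'' i + 2 * L' 0 * N' i 0) ?_ ?_ ?_ h
  · refine Eq.trans ?_ this
    rw [Finset.mul_sum, ← Finset.sum_add_distrib, ← Finset.sum_add_distrib]
    refine Finset.sum_congr rfl fun i _ => ?_
    simp only [hN0, hL0]
    ring
  · intro i
    filter_upwards [hL1] with t ht
    exact (hN i t).fun_div ((hL t).const_sub 1) ht
  · intro i; simp [hN0]
  · intro i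
    have h1 := ((hN' i).fun_mul ((hL 0).const_sub 1)).fun_sub ((hN i 0).fun_mul hL'.fun_neg)
    have h2 := h1.fun_div (((hL 0).const_sub 1).fun_pow 2) (by simp [hL0])
    refine h2.congr_deriv ?_
    simp only [hN0, hL0]
    ring

variable {β₁ : Fin n → Fin l} {p : Fin l → ℕ} {β₂ : Fin n → Fin l'} {q : Fin l' → ℕ}
  {F : (Fin n → ℂ) × ℂ → (Fin n → ℂ) × ℂ}

/-- The linear form in the denominator of the restriction of `F` to `ξ = 1`. -/
def lam (β₂ : Fin n → Fin l') (q : Fin l' → ℕ) (F : (Fin n → ℂ) × ℂ → (Fin n → ℂ) × ℂ)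
    (z : Fin n → ℂ) : ℂ :=
  bilS β₂ q (dA F z) (star (dC F)) / star (dD F)

/-- The conjugate of `lam`. -/
def lamS (β₂ : Fin n → Fin l') (q : Fin l' → ℕ) (F : (Fin n → ℂ) × ℂ → (Fin n → ℂ) × ℂ)
    (w : Fin n → ℂ) : ℂ :=
  bilS β₂ q (dAs F w) (dC F) / dD F

lemma star_lam (w : Fin n → ℂ) : star (lam β₂ q F (star w)) = lamS β₂ q F w := by
  simp only [lam, lamS, star_div₀, star_bilS, star_star, dAs_apply]

namespace NGerm

lemma dA_injective (h : NGerm β₁ p β₂ q F) (hp : ∀ i, 0 < p i) (hd : dD F ≠ 0) :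
    Function.Injective (dA F) := by
  rw [injective_iff_map_eq_zero]
  intro v hv
  refine bilS_nondegenerate (β := β₁) hp fun w => ?_
  have h1 := h.bilS_dA v w
  rw [hv, bilS_zero_left] at h1
  simpa [hd] using h1.symm

lemma dA_surjective (h : NGerm β₁ p β₂ q F) (hp : ∀ i, 0 < p i) (hd : dD F ≠ 0) :
    Function.Surjective (dA F) :=
  LinearMap.injective_iff_surjective.1 (h.dA_injective hp hd)

lemma dAs_surjective (h : NGerm β₁ p β₂ q F) (hp : ∀ i, 0 < p i) (hd : dD F ≠ 0) :
    Function.Surjective (dAs F) := fun w => by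
  obtain ⟨v, hv⟩ := h.dA_surjective hp hd (star w)
  exact ⟨star v, by rw [dAs_apply, star_star, hv, star_star]⟩

lemma fst_formula (h : NGerm β₁ p β₂ q F) (hp : ∀ i, 0 < p i) (hq : ∀ i, 0 < q i)
    (hd : dD F ≠ 0) : ∀ᶠ z in 𝓝 0,
      (1 - lam β₂ q F z) ≠ 0 ∧ (F (z, 1)).1 = (1 - lam β₂ q F z)⁻¹ • dA F z := by
  have hd' : star (dD F) ≠ 0 := star_ne_zero.2 hd
  filter_upwards [h.first_order] with z hz
  set μ : ℂ := 1 + bilS β₂ q (F (z, 1)).1 (star (dC F)) / star (dD F) with hμ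
  have h1 : (F (z, 1)).1 = μ • dA F z := by
    rw [← sub_eq_zero, sub_eq_add_neg, ← neg_one_smul ℂ]
    refine bilS_nondegenerate (β := β₂) hq fun w => ?_
    obtain ⟨w, rfl⟩ := h.dAs_surjective hp hd w
    rw [bilS_add_left, bilS_smul_left, bilS_smul_left, hz, h.bilS_dA, hμ]
    field_simp
    ring
  have h2 : μ * (1 - lam β₂ q F z) = 1 := by
    have : bilS β₂ q (F (z, 1)).1 (star (dC F)) / star (dD F) = μ * lam β₂ q F z := by
      rw [h1, bilS_smul_left, lam]; ring
    rw [this] at hμ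
    linear_combination hμ
  have h3 : 1 - lam β₂ q F z ≠ 0 := right_ne_zero_of_mul_eq_one h2
  exact ⟨h3, by rw [h1, eq_inv_of_mul_eq_one_left h2]⟩

lemma fst_conj_formula (h : NGerm β₁ p β₂ q F) (hp : ∀ i, 0 < p i) (hq : ∀ i, 0 < q i)
    (hd : dD F ≠ 0) : ∀ᶠ w in 𝓝 0, (1 - lamS β₂ q F w) ≠ 0 ∧
      (conjMap F (w, 1)).1 = (1 - lamS β₂ q F w)⁻¹ • dAs F w := by
  have ht : Tendsto (star : (Fin n → ℂ) → (Fin n → ℂ)) (𝓝 0) (𝓝 0) :=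
    Continuous.tendsto' continuous_star _ _ (star_zero _)
  filter_upwards [ht.eventually (h.fst_formula hp hq hd)] with w hw
  have h1 : (1 - lamS β₂ q F w) = star (1 - lam β₂ q F (star w)) := by simp [← star_lam]
  have : star (w, (1 : ℂ)) = (star w, (1 : ℂ)) := by ext1 <;> simp
  rw [h1]
  refine ⟨star_ne_zero.2 hw.1, ?_⟩
  rw [conjMap, this, Prod.fst_star, hw.2, star_smul, star_inv₀, dAs_apply]

lemma rhoK_eq_one (h : NGerm β₁ p β₂ q F) :
    ∀ᶠ T : (Fin n → ℂ) × (Fin n → ℂ) in 𝓝 (0, 0), rhoK β₁ p T.2 T.1 = 1 →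
      rhoK β₂ q (F (T.2, 1)).1 (conjMap F (T.1, 1)).1 = 1 := by
  have ht : Tendsto (fun T : (Fin n → ℂ) × (Fin n → ℂ) => (T.2, T.1)) (𝓝 (0, 0)) (𝓝 (0, 0)) :=
    Continuous.tendsto' (by fun_prop) _ _ rfl
  have h1 : ∀ᶠ T : (Fin n → ℂ) × (Fin n → ℂ) in 𝓝 (0, 0), (conjMap F (T.1, 1)).2 = 1 :=
    Tendsto.eventually (continuousAt_fst (p := ((0, 0) : (Fin n → ℂ) × (Fin n → ℂ))))
      h.snd_conj_eq_one
  filter_upwards [ht.eventually h.equation, h1] with T hT hT1 hr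
  simp only [hr, hT1] at hT
  exact hT.symm

/-- The second order relation between blocks. -/
lemma second_order (h : NGerm β₁ p β₂ q F) (hp : ∀ i, 0 < p i) (hq : ∀ i, 0 < q i)
    (hd : dD F ≠ 0) : ∀ᶠ w in 𝓝 0, ∀ z, bilS β₁ p z w = 0 →
      star (dD F) * (1 - lamS β₂ q F w) * ∑ i, p i * bilK β₁ i z w ^ 2 =
        ∑ j, q j * bilK β₂ j (dA F z) (dAs F w) ^ 2 := by
  filter_upwards [h.rhoK_eq_one.curry_nhds, h.fst_conj_formula hp hq hd] with w hw hb z hs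
  obtain ⟨hb1, hb⟩ := hb
  set b := (conjMap F (w, 1)).1
  set c : ℂ → Fin n → ℂ := fun ε m => expPrim (bilK β₁ (β₁ m) z w) ε * z m with hc
  set c' : ℂ → Fin n → ℂ := fun ε m => exp (-bilK β₁ (β₁ m) z w * ε) * z m with hc'
  set c'' : Fin n → ℂ := fun m => -bilK β₁ (β₁ m) z w * z m with hc''
  have hcd : ∀ ε, HasDerivAt c (c' ε) ε := fun ε =>
    hasDerivAt_pi.2 fun m => (hasDerivAt_expPrim _ ε).mul_const _
  have hcd' : HasDerivAt c' c'' 0 :=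
    hasDerivAt_pi.2 fun m => by
      refine ((hasDerivAt_exp_neg_mul _ 0).mul_const _).congr_deriv ?_
      simp [hc'']
  have hc0 : c 0 = 0 := by funext m; simp [hc]
  have hc'0 : c' 0 = z := by funext m; simp [hc']
  let A : (Fin n → ℂ) →L[ℂ] (Fin n → ℂ) := (dA F).toContinuousLinearMap
  have hA : ∀ {f : ℂ → Fin n → ℂ} {f' : Fin n → ℂ} {t : ℂ}, HasDerivAt f f' t →
      HasDerivAt (fun s => dA F (f s)) (dA F f') t := fun hf =>
    A.hasFDerivAt.comp_hasDerivAt _ hf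
  have hr : ∀ ε, rhoK β₁ p (c ε) w = 1 := by
    intro ε
    have h1 : ∀ i, bilK β₁ i (c ε) w = expPrim (bilK β₁ i z w) ε * bilK β₁ i z w := fun i =>
      bilK_blockwise_mul β₁ i (fun i => expPrim (bilK β₁ i z w) ε) z w
    simp only [rhoK, h1, one_sub_expPrim_mul, ← Complex.exp_nat_mul]
    rw [← Complex.exp_sum]
    have : ∑ i, (p i : ℂ) * (-bilK β₁ i z w * ε) = - ε * bilS β₁ p z w := by
      rw [bilS, Finset.mul_sum]
      exact Finset.sum_congr rfl fun i _ => by ring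
    rw [this, hs]; simp
  have hct : Tendsto c (𝓝 0) (𝓝 0) := by
    have := (hcd 0).continuousAt.tendsto
    rwa [hc0] at this
  have key := sum_second_order_div (q := q)
    (N := fun j ε => bilK β₂ j (dA F (c ε)) b) (N' := fun j ε => bilK β₂ j (dA F (c' ε)) b)
    (N'' := fun j => bilK β₂ j (dA F c'') b)
    (L := fun ε => lam β₂ q F (c ε)) (L' := fun ε => lam β₂ q F (c' ε))
    (L'' := lam β₂ q F c'')
    (fun j ε => hasDerivAt_bilK_left (hA (hcd ε)) b)
    (fun j => hasDerivAt_bilK_left (hA hcd') b)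
    (fun ε => (hasDerivAt_bilS_left (hA (hcd ε)) _).div_const _)
    ((hasDerivAt_bilS_left (hA hcd') _).div_const _)
    (fun j => by simp [hc0]) (by simp [hc0, lam]) ?_
  · have e1 : ∑ j, (q j : ℂ) * bilK β₂ j (dA F c'') b =
        (1 - lamS β₂ q F w)⁻¹ * (-(∑ i, p i * bilK β₁ i z w ^ 2) * star (dD F)) := by
      have : ∑ j, (q j : ℂ) * bilK β₂ j (dA F c'') b = bilS β₂ q (dA F c'') b := rfl
      rw [this, hb, bilS_smul_right, h.bilS_dA]
      congr 2
      rw [bilS, ← Finset.sum_neg_distrib]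
      refine Finset.sum_congr rfl fun i _ => ?_
      have := bilK_blockwise_mul β₁ i (fun i => -bilK β₁ i z w) z w
      rw [show c'' = fun m => (fun i => -bilK β₁ i z w) (β₁ m) * z m from rfl, this]
      ring
    have e2 : ∑ j, (q j : ℂ) * bilK β₂ j (dA F (c' 0)) b = 0 := by
      have : ∑ j, (q j : ℂ) * bilK β₂ j (dA F (c' 0)) b = bilS β₂ q (dA F (c' 0)) b := rfl
      rw [this, hb, bilS_smul_right, h.bilS_dA, hc'0, hs]; ring
    have e3 : ∑ j, (q j : ℂ) * bilK β₂ j (dA F (c' 0)) b ^ 2 =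
        (1 - lamS β₂ q F w)⁻¹ ^ 2 * ∑ j, q j * bilK β₂ j (dA F z) (dAs F w) ^ 2 := by
      rw [Finset.mul_sum, hc'0, hb]
      refine Finset.sum_congr rfl fun j _ => ?_
      rw [bilK_smul_right]; ring
    rw [e1, e2, e3] at key
    field_simp at key
    linear_combination -key
  · filter_upwards [hct.eventually hw, hct.eventually (h.fst_formula hp hq hd)] with ε hε hf
    have := hε (hr ε)
    rw [hf.2] at this
    simp only [rhoK, bilK_smul_left] at this
    refine Eq.trans ?_ this
    refine Finset.prod_congr rfl fun j _ => ?_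
    rw [div_eq_inv_mul]

/-- Homogeneous form of `second_order`. -/
lemma second_order_homogeneous (h : NGerm β₁ p β₂ q F) (hp : ∀ i, 0 < p i) (hq : ∀ i, 0 < q i)
    (hd : dD F ≠ 0) {z w : Fin n → ℂ} (hs : bilS β₁ p z w = 0) :
    (star (dD F) * ∑ i, p i * bilK β₁ i z w ^ 2 =
        ∑ j, q j * bilK β₂ j (dA F z) (dAs F w) ^ 2) ∧
      lamS β₂ q F w * ∑ i, p i * bilK β₁ i z w ^ 2 = 0 := by
  have ht1 : Tendsto (fun ε : ℂ => ε • w) (𝓝[≠] 0) (𝓝 0) :=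
    (Continuous.tendsto' (by fun_prop) _ _ (by simp)).mono_left nhdsWithin_le_nhds
  have ht2 : Tendsto (fun ε : ℂ => (2 * ε) • w) (𝓝[≠] 0) (𝓝 0) :=
    (Continuous.tendsto' (by fun_prop) _ _ (by simp)).mono_left nhdsWithin_le_nhds
  have hε : ∀ᶠ ε : ℂ in 𝓝[≠] 0, ε ≠ 0 := eventually_mem_nhdsWithin
  obtain ⟨ε, ⟨h1, h2⟩, hε⟩ := (((ht1.eventually (h.second_order hp hq hd)).and
    (ht2.eventually (h.second_order hp hq hd))).and hε).exists
  have key : ∀ e : ℂ, e ≠ 0 → (∀ z, bilS β₁ p z (e • w) = 0 →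
      star (dD F) * (1 - lamS β₂ q F (e • w)) * ∑ i, p i * bilK β₁ i z (e • w) ^ 2 =
        ∑ j, q j * bilK β₂ j (dA F z) (dAs F (e • w)) ^ 2) →
      star (dD F) * (1 - e * lamS β₂ q F w) * ∑ i, p i * bilK β₁ i z w ^ 2 =
        ∑ j, q j * bilK β₂ j (dA F z) (dAs F w) ^ 2 := by
    intro e he h3
    have h4 := h3 z (by rw [bilS_smul_right, hs, mul_zero])
    have e1 : lamS β₂ q F (e • w) = e * lamS β₂ q F w := by
      rw [lamS, map_smul, bilS_smul_left, lamS, mul_div_assoc]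
    have e2 : ∑ i, (p i : ℂ) * bilK β₁ i z (e • w) ^ 2 =
        e ^ 2 * ∑ i, p i * bilK β₁ i z w ^ 2 := by
      rw [Finset.mul_sum]
      exact Finset.sum_congr rfl fun i _ => by rw [bilK_smul_right]; ring
    have e3 : ∑ j, (q j : ℂ) * bilK β₂ j (dA F z) (dAs F (e • w)) ^ 2 =
        e ^ 2 * ∑ j, q j * bilK β₂ j (dA F z) (dAs F w) ^ 2 := by
      rw [Finset.mul_sum, map_smul]
      exact Finset.sum_congr rfl fun i _ => by rw [bilK_smul_right]; ring
    rw [e1, e2, e3] at h4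
    have he2 : e ^ 2 ≠ 0 := pow_ne_zero 2 he
    apply mul_left_cancel₀ he2
    linear_combination h4
  have k1 := key ε hε h1
  have k2 := key (2 * ε) (by simpa using hε) h2
  have hd' : star (dD F) ≠ 0 := star_ne_zero.2 hd
  have k3 : lamS β₂ q F w * ∑ i, p i * bilK β₁ i z w ^ 2 = 0 := by
    apply mul_left_cancel₀ (mul_ne_zero hd' hε)
    linear_combination k1 - k2
  exact ⟨by linear_combination k1 + star (dD F) * ε * k3, k3⟩

end NGerm

lemma bilK_single_left (β : Fin n → Fin l) (i : Fin l) (m : Fin n) (a : ℂ) (w : Fin n → ℂ) :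
    bilK β i (Pi.single m a) w = if β m = i then a * w m else 0 := by
  unfold bilK
  split_ifs with h
  · rw [Finset.sum_eq_single m]
    · simp
    · intro j _ hj; simp [Pi.single_eq_of_ne hj]
    · intro hm; simp [h] at hm
  · refine Finset.sum_eq_zero fun j hj => ?_
    have : j ≠ m := by
      rintro rfl
      exact h (Finset.mem_filter.1 hj).2
    simp [Pi.single_eq_of_ne this]

lemma exists_bilS_eq_zero {β : Fin n → Fin l} {p : Fin l → ℕ} (hp : ∀ i, 0 < p i) {m m' : Fin n}
    (hm : β m ≠ β m') {w : Fin n → ℂ} (hw : w m ≠ 0) (hw' : w m' ≠ 0) :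
    ∃ z, bilS β p z w = 0 ∧ ∑ i, p i * bilK β i z w ^ 2 ≠ 0 := by
  have hb : ∀ i, bilK β i (Pi.single m (p (β m') / w m) + Pi.single m' (-p (β m) / w m')) w =
      (if β m = i then (p (β m') : ℂ) else 0) + (if β m' = i then -(p (β m) : ℂ) else 0) := by
    intro i
    rw [bilK_add_left, bilK_single_left, bilK_single_left, div_mul_cancel₀ _ hw,
      div_mul_cancel₀ _ hw']
  refine ⟨Pi.single m (p (β m') / w m) + Pi.single m' (-p (β m) / w m'), ?_, ?_⟩
  · simp only [bilS, hb, mul_add, Finset.sum_add_distrib, mul_ite, mul_zero, Finset.sum_ite_eq,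
      Finset.mem_univ, if_true]
    ring
  · have : ∑ i, (p i : ℂ) * bilK β i
        (Pi.single m (p (β m') / w m) + Pi.single m' (-p (β m) / w m')) w ^ 2 =
        ∑ i, ((if β m = i then (p i : ℂ) * (p (β m') : ℂ) ^ 2 else 0) +
          (if β m' = i then (p i : ℂ) * (p (β m) : ℂ) ^ 2 else 0)) := by
      refine Finset.sum_congr rfl fun i _ => ?_
      rw [hb]
      by_cases h1 : β m = i
      · have h2 : β m' ≠ i := fun h2 => hm (h1.trans h2.symm)
        simp [h1, h2]
      · simp only [h1, if_false, zero_add]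
        split_ifs <;> simp
    rw [this, Finset.sum_add_distrib, Finset.sum_ite_eq, Finset.sum_ite_eq]
    simp only [Finset.mem_univ, if_true]
    have h1 := hp (β m)
    have h2 := hp (β m')
    have : 0 < p (β m) * p (β m') ^ 2 + p (β m') * p (β m) ^ 2 := by positivity
    exact_mod_cast this.ne'

lemma sum_sq_eq_zero_of_subsingleton {l : ℕ} {p : Fin l → ℕ} (hp : ∀ i, 0 < p i)
    (hl : ∀ i i' : Fin l, i = i') {t : Fin l → ℂ} (h : ∑ i, p i * t i = 0) :
    ∑ i, p i * t i ^ 2 = 0 := by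
  refine Finset.sum_eq_zero fun i _ => ?_
  have h1 : ∑ i, p i * t i = p i * t i :=
    Finset.sum_eq_single i (fun j _ hj => absurd (hl j i) hj) (by simp)
  have : t i = 0 := by
    rw [h] at h1
    simpa [(hp i).ne'] using h1
  simp [this]

namespace NGerm

lemma subsingleton_target (h : NGerm β₁ p β₂ q F) (hp : ∀ i, 0 < p i) (hq : ∀ i, 0 < q i)
    (hd : dD F ≠ 0) (hβ₂ : Function.Surjective β₂) (hl : ∀ i i' : Fin l, i = i') :
    ∀ j j' : Fin l', j = j' := by
  intro j j'
  by_contra hne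
  obtain ⟨m, rfl⟩ := hβ₂ j
  obtain ⟨m', rfl⟩ := hβ₂ j'
  obtain ⟨z, hz1, hz2⟩ := exists_bilS_eq_zero (w := fun _ => 1) hq hne one_ne_zero one_ne_zero
  obtain ⟨z, rfl⟩ := h.dA_surjective hp hd z
  obtain ⟨w, hw⟩ := h.dAs_surjective hp hd fun _ => 1
  rw [← hw] at hz1 hz2
  have hs : bilS β₁ p z w = 0 := by
    rw [h.bilS_dA] at hz1
    simpa [hd] using hz1
  have h1 := (h.second_order_homogeneous hp hq hd hs).1
  rw [sum_sq_eq_zero_of_subsingleton hp hl hs, mul_zero] at h1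
  exact hz2 h1.symm

lemma dC_eq_zero (h : NGerm β₁ p β₂ q F) (hp : ∀ i, 0 < p i) (hq : ∀ i, 0 < q i)
    (hd : dD F ≠ 0) {m m' : Fin n} (hm : β₁ m ≠ β₁ m') : dC F = 0 := by
  have h1 : ∀ w : Fin n → ℂ, w m ≠ 0 → w m' ≠ 0 → lamS β₂ q F w = 0 := by
    intro w hw hw'
    obtain ⟨z, hz1, hz2⟩ := exists_bilS_eq_zero hp hm hw hw'
    exact (mul_eq_zero.1 (h.second_order_homogeneous hp hq hd hz1).2).resolve_right hz2
  have h2 : ∀ w, lamS β₂ q F w = 0 := by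
    intro w
    obtain ⟨κ, hκ⟩ := ({-w m, -w m'} : Finset ℂ).exists_notMem
    simp only [Finset.mem_insert, Finset.mem_singleton, not_or] at hκ
    have h3 := h1 (w + κ • fun _ => 1)
      (by simpa [add_eq_zero_iff_eq_neg', eq_comm] using hκ.1)
      (by simpa [add_eq_zero_iff_eq_neg', eq_comm] using hκ.2)
    have h4 := h1 (fun _ => 1) one_ne_zero one_ne_zero
    have h5 : lamS β₂ q F (w + κ • fun _ => 1) =
        lamS β₂ q F w + κ * lamS β₂ q F fun _ => 1 := by
      simp only [lamS, map_add, map_smul, bilS_add_left, bilS_smul_left]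
      ring
    rw [h5, h4] at h3
    simpa using h3
  refine bilS_nondegenerate (β := β₂) hq fun w => ?_
  obtain ⟨w, rfl⟩ := h.dAs_surjective hp hd w
  rw [bilS_comm]
  simpa [lamS, hd] using h2 w

end NGerm

end InjectiveCase

section Moving

variable {n l l' : ℕ}

lemma hasFDerivAt_autT_x0 {β : Fin n → Fin l} {p : Fin l → ℕ} {A : (Fin n → ℂ) × ℂ}
    (hA : A ∈ circBundle β p) :
    HasFDerivAt (autT β p A) (fderiv ℂ (autT β p A) x0) x0 :=
  (differentiableAt_autT hA (zero_mem_prodBalls β)).hasFDerivAt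

lemma fderiv_autT_bar2_apply {β : Fin n → Fin l} {p : Fin l → ℕ} {A : (Fin n → ℂ) × ℂ}
    (hA : A ∈ circBundle β p) (u : (Fin n → ℂ) × ℂ) :
    fderiv ℂ (autT β p (bar2 A)) A (fderiv ℂ (autT β p A) x0 u) = u := by
  have h1 : HasFDerivAt (autT β p (bar2 A)) (fderiv ℂ (autT β p (bar2 A)) A) (autT β p A x0) := by
    rw [autT_x0]
    exact (differentiableAt_autT (bar2_mem hA) hA.1).hasFDerivAt
  have h2 := h1.comp x0 (hasFDerivAt_autT_x0 hA)
  have h3 : HasFDerivAt (id : (Fin n → ℂ) × ℂ → (Fin n → ℂ) × ℂ)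
      ((fderiv ℂ (autT β p (bar2 A)) A).comp (fderiv ℂ (autT β p A) x0)) x0 := by
    refine h2.congr_of_eventuallyEq ?_
    filter_upwards [(isOpen_tube β).mem_nhds (zero_mem_prodBalls β : x0 ∈ tube β)] with P hP
    exact (autT_bar2_autT hA hP).symm
  have := h3.unique (hasFDerivAt_id x0)
  exact congrArg (fun L => L u) this

lemma fderiv_autT_surjective {β : Fin n → Fin l} {p : Fin l → ℕ} {A : (Fin n → ℂ) × ℂ}
    (hA : A ∈ circBundle β p) : Function.Surjective (fderiv ℂ (autT β p A) x0) := by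
  have : Function.Injective (fderiv ℂ (autT β p A) x0 :
      (Fin n → ℂ) × ℂ →ₗ[ℂ] (Fin n → ℂ) × ℂ) :=
    Function.LeftInverse.injective (g := fderiv ℂ (autT β p (bar2 A)) A)
      (fderiv_autT_bar2_apply hA)
  exact LinearMap.injective_iff_surjective.1 this

lemma fderiv_autT_injective {β : Fin n → Fin l} {p : Fin l → ℕ} {A : (Fin n → ℂ) × ℂ}
    (hA : A ∈ circBundle β p) : Function.Injective (fderiv ℂ (autT β p A) x0) :=
  Function.LeftInverse.injective (g := fderiv ℂ (autT β p (bar2 A)) A)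
    (fderiv_autT_bar2_apply hA)

lemma fderiv_autT_vertical {β : Fin n → Fin l} {p : Fin l → ℕ} {A : (Fin n → ℂ) × ℂ}
    (hA : A ∈ circBundle β p) (t : ℂ) : fderiv ℂ (autT β p A) x0 (0, t) = (0, A.2 * t) := by
  have h1 : HasDerivAt (fun s : ℂ => ((0 : Fin n → ℂ), 1 + s * t)) (0, t) 0 := by
    refine HasDerivAt.prodMk (hasDerivAt_const _ _) ?_
    simpa using ((hasDerivAt_id (0 : ℂ)).mul_const t).const_add 1
  have h2 : HasFDerivAt (autT β p A) (fderiv ℂ (autT β p A) x0)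
      ((fun s : ℂ => ((0 : Fin n → ℂ), 1 + s * t)) 0) := by
    simpa [x0] using hasFDerivAt_autT_x0 hA
  have h3 := h2.comp_hasDerivAt (0 : ℂ) h1
  have h4 : HasDerivAt (fun s : ℂ => (A.1, A.2 * (1 + s * t))) (0, A.2 * t) 0 := by
    refine HasDerivAt.prodMk (hasDerivAt_const _ _) ?_
    simpa using (((hasDerivAt_id (0 : ℂ)).mul_const t).const_add 1).const_mul A.2
  refine h3.unique (h4.congr_of_eventuallyEq (Eventually.of_forall fun s => ?_))
  ext1
  · funext j; simp [autT, phi]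
  · simp [autT]

variable {β₁ : Fin n → Fin l} {p : Fin l → ℕ} {β₂ : Fin n → Fin l'} {q : Fin l' → ℕ}
  {F : (Fin n → ℂ) × ℂ → (Fin n → ℂ) × ℂ} {x : (Fin n → ℂ) × ℂ}

/-- The germ `F` at `x` transported to the base points. -/
def normGerm (β₁ : Fin n → Fin l) (p : Fin l → ℕ) (β₂ : Fin n → Fin l') (q : Fin l' → ℕ)
    (F : (Fin n → ℂ) × ℂ → (Fin n → ℂ) × ℂ) (x P : (Fin n → ℂ) × ℂ) : (Fin n → ℂ) × ℂ :=
  autT β₂ q (bar2 (F x)) (F (autT β₁ p x P))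

namespace CRGerm

lemma eventually (h : CRGerm β₁ p β₂ q F x) :
    ∀ᶠ x' in 𝓝 x, x' ∈ circBundle β₁ p → CRGerm β₁ p β₂ q F x' := by
  filter_upwards [h.diff.eventually_nhds, h.map.eventually_nhds] with x' h1 h2 h3
  exact ⟨h1, h2, h3⟩

lemma apply_mem (h : CRGerm β₁ p β₂ q F x) : F x ∈ circBundle β₂ q := h.map.self_of_nhds h.mem

lemma tendsto_autT (h : CRGerm β₁ p β₂ q F x) : Tendsto (autT β₁ p x) (𝓝 x0) (𝓝 x) := by
  have := (hasFDerivAt_autT_x0 h.mem).continuousAt.tendsto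
  rwa [autT_x0] at this

lemma eventually_mem_tube (h : CRGerm β₁ p β₂ q F x) : ∀ᶠ P in 𝓝 x, F P ∈ tube β₂ :=
  h.diff.self_of_nhds.continuousAt.tendsto.eventually
    ((isOpen_tube β₂).mem_nhds h.apply_mem.1)

lemma comp_autT (h : CRGerm β₁ p β₂ q F x) : CRGerm β₁ p β₂ q (F ∘ autT β₁ p x) x0 where
  diff := by
    filter_upwards [h.tendsto_autT.eventually h.diff,
      (isOpen_tube β₁).mem_nhds (zero_mem_prodBalls β₁ : x0 ∈ tube β₁)] with P h1 h2
    exact h1.comp P (differentiableAt_autT h.mem h2)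
  map := by
    filter_upwards [h.tendsto_autT.eventually h.map] with P h1 h2
    exact h1 (autT_mem_circBundle h.mem h2)
  mem := x0_mem_circBundle _ _

lemma normalize (h : CRGerm β₁ p β₂ q F x) : NGerm β₁ p β₂ q (normGerm β₁ p β₂ q F x) where
  diff := by
    filter_upwards [h.comp_autT.diff, h.tendsto_autT.eventually h.eventually_mem_tube] with P h1 h2
    exact (differentiableAt_autT (bar2_mem h.apply_mem) h2).comp P h1
  map := by
    filter_upwards [h.comp_autT.map] with P h1 h2
    exact autT_mem_circBundle (bar2_mem h.apply_mem) (h1 h2)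
  mem := x0_mem_circBundle _ _
  base := by rw [normGerm, autT_x0, autT_bar2_self h.apply_mem]

lemma autT_normalize (h : CRGerm β₁ p β₂ q F x) :
    ∀ᶠ P in 𝓝 x0, autT β₂ q (F x) (normGerm β₁ p β₂ q F x P) = F (autT β₁ p x P) := by
  filter_upwards [h.tendsto_autT.eventually h.eventually_mem_tube] with P hP
  exact autT_autT_bar2 h.apply_mem hP

lemma fderiv_normalize (h : CRGerm β₁ p β₂ q F x) (u : (Fin n → ℂ) × ℂ) :
    fderiv ℂ F x (fderiv ℂ (autT β₁ p x) x0 u) =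
      fderiv ℂ (autT β₂ q (F x)) x0 (fderiv ℂ (normGerm β₁ p β₂ q F x) x0 u) := by
  have h1 : HasFDerivAt F (fderiv ℂ F x) (autT β₁ p x x0) := by
    rw [autT_x0]; exact h.diff.self_of_nhds.hasFDerivAt
  have h2 := h1.comp x0 (hasFDerivAt_autT_x0 h.mem)
  have h3 : HasFDerivAt (autT β₂ q (F x)) (fderiv ℂ (autT β₂ q (F x)) x0)
      (normGerm β₁ p β₂ q F x x0) := by
    rw [h.normalize.base]; exact hasFDerivAt_autT_x0 h.apply_mem
  have h4 := h3.comp x0 h.normalize.hasFDerivAt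
  have h5 := h2.unique (h4.congr_of_eventuallyEq (by
    filter_upwards [h.autT_normalize] with P hP using hP.symm))
  exact congrArg (fun L => L u) h5

lemma normalize_injective (h : CRGerm β₁ p β₂ q F x) (hi : Function.Injective (fderiv ℂ F x)) :
    Function.Injective (fderiv ℂ (normGerm β₁ p β₂ q F x) x0) := by
  rw [injective_iff_map_eq_zero]
  intro u hu
  have := h.fderiv_normalize u
  rw [hu, map_zero] at this
  exact (injective_iff_map_eq_zero _).1 (fderiv_autT_injective h.mem) _
    ((injective_iff_map_eq_zero _).1 hi _ this)

lemma injective_of_normalize (h : CRGerm β₁ p β₂ q F x)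
    (hi : Function.Injective (fderiv ℂ (normGerm β₁ p β₂ q F x) x0)) :
    Function.Injective (fderiv ℂ F x) := by
  rw [injective_iff_map_eq_zero]
  intro u hu
  obtain ⟨u, rfl⟩ := fderiv_autT_surjective h.mem u
  rw [h.fderiv_normalize] at hu
  have := (injective_iff_map_eq_zero _).1 hi _
    ((injective_iff_map_eq_zero _).1 (fderiv_autT_injective h.apply_mem) _ hu)
  rw [this, map_zero]

end CRGerm

lemma NGerm.dD_ne_zero (h : NGerm β₁ p β₂ q F) (hq : ∀ i, 0 < q i)
    (hi : Function.Injective (fderiv ℂ F x0)) : dD F ≠ 0 := by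
  intro hd
  have h1 : ∀ v : Fin n → ℂ, v = 0 := by
    intro v
    have h1 := h.bilS_dA v (star v)
    rw [hd, star_zero, mul_zero, dAs_apply, star_star] at h1
    have h2 : fderiv ℂ F x0 (v, 0) = 0 := by
      rw [h.fderiv_eq, eq_zero_of_bilS_star_self hq h1]
      simp
    exact congrArg Prod.fst ((injective_iff_map_eq_zero _).1 hi _ h2)
  have h2 : fderiv ℂ F x0 (0, 1) = 0 := by
    rw [h.fderiv_eq, h1 (dC F), hd]
    simp
  exact one_ne_zero (congrArg Prod.snd ((injective_iff_map_eq_zero _).1 hi _ h2))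

/-- The image of the slice `ξ = 1` under an automorphism is a Segre variety. -/
lemma autT_slice {β : Fin n → Fin l} {A : (Fin n → ℂ) × ℂ} (hA : A ∈ circBundle β p)
    {u : Fin n → ℂ} (hu : u ∈ prodBalls β) :
    autT β p A (phi β A.1 u, 1) = (u, rhoK β p u (star A.1) / star A.2) := by
  have h1 : rhoK β p (phi β A.1 u) (star A.1) = normSq A.2 / rhoK β p u (star A.1) := by
    rw [← prod_rad_sq hA]
    simp only [rhoK, ← Finset.prod_div_distrib, ← div_pow]
    exact Finset.prod_congr rfl fun i _ => by rw [one_sub_bilK_phi hA.1 hu i]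
  have h2 : A.2 ≠ 0 := snd_ne_zero hA
  have h3 : star A.2 ≠ 0 := star_ne_zero.2 h2
  ext1
  · exact phi_phi hA.1 hu
  · have h4 := rhoK_ne_zero (p := p) hu hA.1
    simp only [autT, h1, mul_one]
    rw [← Complex.mul_conj]
    change A.2 / (A.2 * star A.2 / _) = _
    field_simp

/-- The second component of the complex tangent vector to the circle bundle over `v`. -/
def tangSnd (β : Fin n → Fin l) (p : Fin l → ℕ) (v : Fin n → ℂ) (P Q : (Fin n → ℂ) × ℂ) : ℂ :=
  P.2 * -∑ i, p i * (bilK β i v Q.1 / (1 - bilK β i P.1 Q.1))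

/-- At a point of the circle bundle either the derivative is injective or it kills the complex
tangent space. -/
lemma CRGerm.dichotomy (h : CRGerm β₁ p β₂ q F x) (hp : ∀ i, 0 < p i) (hq : ∀ i, 0 < q i) :
    Function.Injective (fderiv ℂ F x) ∨
      ∀ v, fderiv ℂ F x (v, tangSnd β₁ p v x (star x)) = 0 := by
  rcases h.normalize.dichotomy hp hq with hi | h0
  · exact Or.inl (h.injective_of_normalize hi)
  right
  intro v
  have hx2 : star x.2 ≠ 0 := star_ne_zero.2 (snd_ne_zero h.mem)
  have hl : HasDerivAt (fun t : ℂ => x.1 + t • v) v 0 := by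
    simpa using ((hasDerivAt_id (0 : ℂ)).smul_const v).const_add x.1
  have hl0 : x.1 + (0 : ℂ) • v = x.1 := by simp
  -- the curve in the Segre variety
  have hc : HasDerivAt (fun t : ℂ => (x.1 + t • v, rhoK β₁ p (x.1 + t • v) (star x.1) / star x.2))
      (v, tangSnd β₁ p v x (star x)) 0 := by
    refine hl.prodMk ?_
    have h1 := (hasDerivAt_prod_one_sub (p := p)
      (x := fun i t => bilK β₁ i (x.1 + t • v) (star x.1))
      (x' := fun i _ => bilK β₁ i v (star x.1)) (t := 0)
      (fun i => hasDerivAt_bilK_left hl _)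
      (fun i => by simpa [hl0] using one_sub_bilK_ne_zero h.mem.1 h.mem.1 i)).div_const (star x.2)
    refine h1.congr_deriv ?_
    have h2 : ∏ i, (1 - bilK β₁ i x.1 (star x.1)) ^ p i = x.2 * star x.2 := by
      have := rhoK_star β₁ p x.1
      rw [← h.mem.2, ← Complex.mul_conj] at this
      exact this
    simp only [hl0, h2, tangSnd, Prod.fst_star]
    field_simp
  have hφ : DifferentiableAt ℂ (fun t : ℂ => phi β₁ x.1 (x.1 + t • v)) 0 := by
    have h1 : DifferentiableAt ℂ (autT β₁ p x) ((fun t : ℂ => (x.1 + t • v, (1 : ℂ))) 0) := by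
      refine differentiableAt_autT h.mem ?_
      simpa [tube] using h.mem.1
    have h2 := h1.comp (0 : ℂ) (hl.differentiableAt.prodMk (differentiableAt_const (1 : ℂ)))
    exact h2.fst
  have hφ0 : phi β₁ x.1 x.1 = 0 := by
    have := congrArg Prod.fst (autT_bar2_self h.mem)
    exact this
  have h3 := hφ.hasDerivAt.prodMk (hasDerivAt_const (0 : ℂ) (1 : ℂ))
  have h4 : HasFDerivAt (autT β₁ p x) (fderiv ℂ (autT β₁ p x) x0)
      ((fun t : ℂ => (phi β₁ x.1 (x.1 + t • v), (1 : ℂ))) 0) := by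
    simpa [hφ0, x0] using hasFDerivAt_autT_x0 h.mem
  have h5 := h4.comp_hasDerivAt (0 : ℂ) h3
  have hmem : ∀ᶠ t : ℂ in 𝓝 0, x.1 + t • v ∈ prodBalls β₁ := by
    refine hl.continuousAt.tendsto.eventually ((isOpen_prodBalls β₁).mem_nhds ?_)
    simpa using h.mem.1
  have h6 := hc.unique (h5.congr_of_eventuallyEq (by
    filter_upwards [hmem] with t ht using (autT_slice h.mem ht).symm))
  rw [h6, h.fderiv_normalize, h0, map_zero]

lemma differentiableAt_tangSnd {E : Type*} [NormedAddCommGroup E] [NormedSpace ℂ E]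
    (v : Fin n → ℂ) {f g : E → (Fin n → ℂ) × ℂ} {y : E} (hf : DifferentiableAt ℂ f y)
    (hg : DifferentiableAt ℂ g y) (h1 : ∀ i, 1 - bilK β₁ i (f y).1 (g y).1 ≠ 0) :
    DifferentiableAt ℂ (fun y => tangSnd β₁ p v (f y) (g y)) y := by
  unfold tangSnd
  refine hf.snd.fun_mul (DifferentiableAt.fun_neg (DifferentiableAt.fun_sum fun i _ => ?_))
  exact (differentiableAt_const _).fun_mul (DifferentiableAt.complex_div
    (DifferentiableAt.bilK (differentiableAt_const v) hg.fst)
    ((differentiableAt_const _).fun_sub (DifferentiableAt.bilK hf.fst hg.fst)) (h1 i))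

lemma CRGerm.fderiv_eq_zero (h : CRGerm β₁ p β₂ q F x0) (hn : 1 ≤ n) (hp : ∀ i, 0 < p i)
    (hq : ∀ i, 0 < q i)
    (hi : ∀ᶠ x in 𝓝 x0, x ∈ circBundle β₁ p → ¬ Function.Injective (fderiv ℂ F x)) :
    ∀ᶠ P in 𝓝 x0, fderiv ℂ F P = 0 := by
  have hpol : ∀ v, ∀ᶠ T : (Fin n → ℂ) × (Fin n → ℂ) × ℂ in 𝓝 (0, 0, 1),
      fderiv ℂ F (T.1, T.2.2) (v, tangSnd β₁ p v (T.1, T.2.2) (T.2.1, 1)) = 0 := by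
    intro v
    have := polarize β₁ p (H := fun Q => fderiv ℂ F Q.1 (v, tangSnd β₁ p v Q.1 Q.2)) ?_ ?_
    · exact this
    · have h1 : ∀ᶠ Q : ((Fin n → ℂ) × ℂ) × ((Fin n → ℂ) × ℂ) in 𝓝 (x0, x0),
          DifferentiableAt ℂ (fderiv ℂ F) Q.1 :=
        Tendsto.eventually continuousAt_fst (eventually_differentiableAt_fderiv h.diff)
      have h2 : ∀ᶠ Q : ((Fin n → ℂ) × ℂ) × ((Fin n → ℂ) × ℂ) in 𝓝 (x0, x0),
          ∀ i, 1 - bilK β₁ i Q.1.1 Q.2.1 ≠ 0 := by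
        refine eventually_all.2 fun i => ?_
        have : ContinuousAt (fun Q : ((Fin n → ℂ) × ℂ) × ((Fin n → ℂ) × ℂ) =>
            1 - bilK β₁ i Q.1.1 Q.2.1) (x0, x0) :=
          DifferentiableAt.continuousAt (𝕜 := ℂ) ((differentiableAt_const _).fun_sub
            (DifferentiableAt.bilK (by fun_prop) (by fun_prop)))
        exact this.eventually_ne (by simp)
      filter_upwards [h1, h2] with Q hQ1 hQ2
      have h3 : DifferentiableAt ℂ
          (fun Q : ((Fin n → ℂ) × ℂ) × ((Fin n → ℂ) × ℂ) => fderiv ℂ F Q.1) Q :=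
        hQ1.comp Q differentiableAt_fst
      exact h3.clm_apply ((differentiableAt_const v).prodMk
        (differentiableAt_tangSnd v differentiableAt_fst differentiableAt_snd hQ2))
    · filter_upwards [h.eventually, hi] with P hP1 hP2 hP
      exact ((hP1 hP).dichotomy hp hq).resolve_left (hP2 hP) v
  have hpol' := eventually_all.2 fun m : Fin n => hpol (Pi.single m 1)
  have ht : Tendsto (fun Q : ((Fin n → ℂ) × ℂ) × ℂ =>
      (Q.1.1, Q.2 • (fun _ => 1 : Fin n → ℂ), Q.1.2)) (𝓝 (x0, 0)) (𝓝 (0, 0, 1)) :=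
    Continuous.tendsto' (by fun_prop) _ _ (by simp)
  have h1 := (ht.eventually hpol').curry_nhds
  have hne : ∀ᶠ P in 𝓝 (x0 : (Fin n → ℂ) × ℂ), P.2 ≠ 0 :=
    continuousAt_snd.eventually_ne (by simp)
  filter_upwards [h1, hne] with P hP hP2
  have hz : ∀ m, fderiv ℂ F P (Pi.single m 1, 0) = 0 := by
    intro m
    simpa [tangSnd] using hP.self_of_nhds m
  let m : Fin n := ⟨0, hn⟩
  have hv : fderiv ℂ F P (0, 1) = 0 := by
    have hc : ∀ᶠ t : ℂ in 𝓝[≠] 0, 1 - bilK β₁ (β₁ m) P.1 (t • fun _ => 1) ≠ 0 := by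
      have : ContinuousAt (fun t : ℂ => 1 - bilK β₁ (β₁ m) P.1 (t • fun _ => 1)) 0 :=
        DifferentiableAt.continuousAt (𝕜 := ℂ) ((differentiableAt_const _).fun_sub
            (DifferentiableAt.bilK (by fun_prop) (by fun_prop)))
      exact (this.eventually_ne (by simp)).filter_mono nhdsWithin_le_nhds
    have hne0 : ∀ᶠ t : ℂ in 𝓝[≠] 0, t ≠ 0 := eventually_mem_nhdsWithin
    obtain ⟨t, ⟨ht1, ht2⟩, ht3⟩ := (((hP.filter_mono nhdsWithin_le_nhds).and hc).and hne0).exists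
    have h2 := ht1 m
    set τ := tangSnd β₁ p (Pi.single m 1) P (t • (fun _ => 1), 1) with hτ
    have hτ0 : τ ≠ 0 := by
      rw [hτ, tangSnd, Finset.sum_eq_single (β₁ m)]
      · rw [bilK_single_left]
        simp [hP2, ht3, ht2, (hp (β₁ m)).ne']
      · intro i _ hi
        rw [bilK_single_left, if_neg hi.symm]; simp
      · simp
    have h3 : ((Pi.single m 1, τ) : (Fin n → ℂ) × ℂ) = (Pi.single m 1, 0) + τ • (0, 1) := by
      ext <;> simp
    have h2' : fderiv ℂ F P (Pi.single m 1, τ) = 0 := h2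
    rw [h3, map_add, hz, zero_add, map_smul] at h2'
    exact (smul_eq_zero.1 h2').resolve_left hτ0
  refine ContinuousLinearMap.ext fun u => ?_
  have hu : u = (∑ m, u.1 m • (Pi.single m 1, (0 : ℂ))) + u.2 • (0, 1) := by
    ext1
    · simp only [Prod.fst_add, Prod.fst_sum, Prod.smul_fst, smul_zero, add_zero]
      funext m
      simp [Finset.sum_apply, Pi.single_apply]
    · simp [Prod.snd_sum]
  rw [hu, map_add, map_sum, map_smul, hv, smul_zero, add_zero]
  exact Finset.sum_eq_zero fun m _ => by rw [map_smul, hz, smul_zero]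

/-- A nonconstant map between circle bundles is a local biholomorphism at some point. -/
lemma exists_injective_fderiv (hn : 1 ≤ n) (hp : ∀ i, 0 < p i) (hq : ∀ i, 0 < q i)
    {U : Set ((Fin n → ℂ) × ℂ)} (hUopen : IsOpen U) (hUconn : IsPreconnected U)
    (hUS : (U ∩ circBundle β₁ p).Nonempty) (hF : DifferentiableOn ℂ F U)
    (hFnc : ¬ ∃ c, Set.EqOn F (fun _ => c) U)
    (hFmap : Set.MapsTo F (U ∩ circBundle β₁ p) (circBundle β₂ q)) :
    ∃ x ∈ U, CRGerm β₁ p β₂ q F x ∧ Function.Injective (fderiv ℂ F x) := by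
  obtain ⟨x, hxU, hx⟩ := hUS
  have hg : ∀ x ∈ U, x ∈ circBundle β₁ p → CRGerm β₁ p β₂ q F x := by
    intro x hxU hx
    refine ⟨?_, ?_, hx⟩
    · filter_upwards [hUopen.mem_nhds hxU] with P hP
      exact hF.differentiableAt (hUopen.mem_nhds hP)
    · filter_upwards [hUopen.mem_nhds hxU] with P hP hP'
      exact hFmap ⟨hP, hP'⟩
  by_contra! hcon
  have h := hg x hxU hx
  refine hFnc ⟨F x, ?_⟩
  refine eqOn_const_of_eventually hUopen hUconn hF hxU ?_
  have h0 := h.comp_autT.fderiv_eq_zero hn hp hq (by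
    filter_upwards [h.tendsto_autT.eventually (hUopen.mem_nhds hxU),
      h.comp_autT.diff, h.tendsto_autT.eventually h.diff,
      (isOpen_tube β₁).mem_nhds (zero_mem_prodBalls β₁ : x0 ∈ tube β₁)] with P h1 h2 h3 h5 h4 hi
    have h6 := autT_mem_circBundle h.mem h4
    refine hcon _ h1 (hg _ h1 h6) ?_
    -- `DF ∘ DT` injective implies `DF` injective by equality of dimensions
    rw [fderiv_comp P h3 (differentiableAt_autT h.mem h5)] at hi
    have h7 : Function.Injective
        (fderiv ℂ (autT β₁ p x) P : (Fin n → ℂ) × ℂ →ₗ[ℂ] (Fin n → ℂ) × ℂ) := by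
      intro a b hab
      exact hi (congrArg (fderiv ℂ F (autT β₁ p x P)) hab)
    have h8 := LinearMap.injective_iff_surjective.1 h7
    intro a b hab
    obtain ⟨a, rfl⟩ := h8 a
    obtain ⟨b, rfl⟩ := h8 b
    exact congrArg _ (hi hab))
  obtain ⟨r, hr, hball⟩ := Metric.eventually_nhds_iff_ball.1 (h0.and h.comp_autT.diff)
  have hconst : ∀ P ∈ ball x0 r, F (autT β₁ p x P) = F x := by
    intro P hP
    have := (convex_ball (x0 : (Fin n → ℂ) × ℂ) r).is_const_of_fderivWithin_eq_zero (𝕜 := ℂ)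
      (f := F ∘ autT β₁ p x)
      (fun y hy => (hball y hy).2.differentiableWithinAt)
      (fun y hy => by
        rw [fderivWithin_of_isOpen isOpen_ball hy]
        exact (hball y hy).1) hP (mem_ball_self hr)
    rw [Function.comp_apply, Function.comp_apply, autT_x0] at this
    exact this
  have hinv : Tendsto (autT β₁ p (bar2 x)) (𝓝 x) (𝓝 x0) := by
    have := (differentiableAt_autT (p := p) (bar2_mem hx) hx.1).continuousAt.tendsto
    rwa [autT_bar2_self hx] at this
  filter_upwards [hinv.eventually (ball_mem_nhds x0 hr),
    (isOpen_tube β₁).mem_nhds hx.1] with P hP hP'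
  have := hconst _ hP
  rwa [autT_autT_bar2 hx hP'] at this

end Moving

section Classification

variable {n l l' : ℕ}

lemma blockSq_eq_zero {β : Fin n → Fin l} {i : Fin l} {z : Fin n → ℂ} :
    blockSq β i z = 0 ↔ ∀ m, β m = i → z m = 0 := by
  rw [blockSq, Finset.sum_eq_zero_iff_of_nonneg fun _ _ => normSq_nonneg _]
  simp

lemma blockSq_congr {β : Fin n → Fin l} {i : Fin l} {z w : Fin n → ℂ}
    (h : ∀ m, β m = i → z m = w m) : blockSq β i z = blockSq β i w :=
  Finset.sum_congr rfl fun m hm => by rw [h m (Finset.mem_filter.1 hm).2]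

lemma blockSq_parallelogram (β : Fin n → Fin l) (i : Fin l) (z w : Fin n → ℂ) :
    blockSq β i (z + w) + blockSq β i (z - w) = 2 * blockSq β i z + 2 * blockSq β i w := by
  simp only [blockSq, Finset.mul_sum, ← Finset.sum_add_distrib]
  refine Finset.sum_congr rfl fun m _ => ?_
  simp only [Pi.add_apply, Pi.sub_apply, normSq_apply, add_re, add_im, sub_re, sub_im]
  ring

lemma blockSq_single (β : Fin n → Fin l) (i : Fin l) (m : Fin n) :
    blockSq β i (Pi.single m 1) = if β m = i then 1 else 0 := by
  have h := bilK_single_left β i m 1 (star (Pi.single m 1))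
  rw [bilK_star] at h
  have h2 : (blockSq β i (Pi.single m 1) : ℂ) = ((if β m = i then 1 else 0 : ℝ) : ℂ) := by
    rw [h]; split_ifs <;> simp
  exact_mod_cast h2

/-- The component of `z` in the `i`-th block. -/
def blk (β : Fin n → Fin l) (i : Fin l) (z : Fin n → ℂ) : Fin n → ℂ :=
  fun m => if β m = i then z m else 0

lemma sum_blk (β : Fin n → Fin l) (z : Fin n → ℂ) : ∑ i, blk β i z = z := by
  funext m
  simp [blk, Finset.sum_apply]

lemma blk_add (β : Fin n → Fin l) (i : Fin l) (z w : Fin n → ℂ) :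
    blk β i (z + w) = blk β i z + blk β i w := by
  funext m; simp only [blk, Pi.add_apply]; split_ifs <;> simp

lemma blk_sub (β : Fin n → Fin l) (i : Fin l) (z w : Fin n → ℂ) :
    blk β i (z - w) = blk β i z - blk β i w := by
  funext m; simp only [blk, Pi.sub_apply]; split_ifs <;> simp

lemma blockSq_blk (β : Fin n → Fin l) (i i' : Fin l) (z : Fin n → ℂ) :
    blockSq β i' (blk β i z) = if i' = i then blockSq β i z else 0 := by
  split_ifs with h
  · subst h
    exact blockSq_congr fun m hm => by simp [blk, hm]
  · rw [blockSq_eq_zero]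
    rintro m rfl
    simp [blk, h]

variable {β₁ : Fin n → Fin l} {p : Fin l → ℕ} {β₂ : Fin n → Fin l'} {q : Fin l' → ℕ}
  {M : (Fin n → ℂ) →ₗ[ℂ] (Fin n → ℂ)} {d : ℝ}

/-- If the source block norms take only the values `0` and `X`, so do the target ones. -/
lemma blockSq_eq_zero_or_of_power_sums (hq : ∀ j, 0 < q j)
    (hk : ∀ z, ∀ k : ℕ, 1 ≤ k →
      d * ∑ i, p i * blockSq β₁ i z ^ k = ∑ j, q j * blockSq β₂ j (M z) ^ k)
    {z : Fin n → ℂ} {X : ℝ} (hX : ∀ i, blockSq β₁ i z = 0 ∨ blockSq β₁ i z = X) (j : Fin l') :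
    blockSq β₂ j (M z) = 0 ∨ blockSq β₂ j (M z) = X := by
  have h1 := hk z 1 le_rfl
  have h2 := hk z 2 (by norm_num)
  have h3 := hk z 3 (by norm_num)
  have e1 : ∑ j, q j * (blockSq β₂ j (M z) * (blockSq β₂ j (M z) - X) ^ 2) =
      d * ∑ i, p i * (blockSq β₁ i z * (blockSq β₁ i z - X) ^ 2) := by
    have e2 : ∀ {k : ℕ} (a : Fin k → ℕ) (Y : Fin k → ℝ), ∑ j, a j * (Y j * (Y j - X) ^ 2) =
        ∑ j, a j * Y j ^ 3 - 2 * X * ∑ j, a j * Y j ^ 2 + X ^ 2 * ∑ j, a j * Y j ^ 1 := by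
      intro k a Y
      rw [Finset.mul_sum, Finset.mul_sum, ← Finset.sum_sub_distrib, ← Finset.sum_add_distrib]
      exact Finset.sum_congr rfl fun _ _ => by ring
    rw [e2, e2, ← h1, ← h2, ← h3]
    ring
  have e3 : ∑ i, p i * (blockSq β₁ i z * (blockSq β₁ i z - X) ^ 2) = 0 :=
    Finset.sum_eq_zero fun i _ => by rcases hX i with h | h <;> simp [h]
  rw [e3, mul_zero, Finset.sum_eq_zero_iff_of_nonneg (fun j _ => by
    have := blockSq_nonneg β₂ j (M z); positivity)] at e1
  have := e1 j (Finset.mem_univ j)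
  have hj : (q j : ℝ) ≠ 0 := by exact_mod_cast (hq j).ne'
  rcases mul_eq_zero.1 ((mul_eq_zero.1 this).resolve_left hj) with h | h
  · exact Or.inl h
  · right; nlinarith [pow_eq_zero_iff (two_ne_zero) |>.1 h]

/-- Linear maps respecting the power sums of the block norms permute the blocks. -/
theorem exists_block_equiv (hβ₁ : Function.Surjective β₁) (hβ₂ : Function.Surjective β₂)
    (hq : ∀ j, 0 < q j) (hp : ∀ i, 0 < p i) (hp1 : ∃ i, p i = 1) (hq1 : ∃ j, q j = 1)
    (hM : Function.Surjective M) (hd : 0 < d)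
    (hk : ∀ z, ∀ k : ℕ, 1 ≤ k →
      d * ∑ i, p i * blockSq β₁ i z ^ k = ∑ j, q j * blockSq β₂ j (M z) ^ k) :
    d = 1 ∧ ∃ τ : Fin l' ≃ Fin l, ∀ j,
      q j = p (τ j) ∧ ∀ z, blockSq β₂ j (M z) = blockSq β₁ (τ j) z := by
  have hblk : ∀ i j z, blockSq β₂ j (M (blk β₁ i z)) = 0 ∨
      blockSq β₂ j (M (blk β₁ i z)) = blockSq β₁ i z := fun i j z =>
    blockSq_eq_zero_or_of_power_sums hq hk (fun i' => by
      rw [blockSq_blk]; split_ifs <;> simp) j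
  have hdich : ∀ i j, (∀ z, blockSq β₂ j (M (blk β₁ i z)) = 0) ∨
      ∀ z, blockSq β₂ j (M (blk β₁ i z)) = blockSq β₁ i z := by
    intro i j
    by_contra! hcon
    obtain ⟨⟨u, hu⟩, v, hv⟩ := hcon
    have hv0 := (hblk i j v).resolve_right hv
    have hu1 := (hblk i j u).resolve_left hu
    have hv' := blockSq_eq_zero.1 hv0
    have h1 : blockSq β₂ j (M (blk β₁ i (u + v))) = blockSq β₂ j (M (blk β₁ i u)) :=
      blockSq_congr fun m hm => by rw [blk_add, map_add, Pi.add_apply, hv' m hm, add_zero]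
    have h2 : blockSq β₂ j (M (blk β₁ i (u - v))) = blockSq β₂ j (M (blk β₁ i u)) :=
      blockSq_congr fun m hm => by rw [blk_sub, map_sub, Pi.sub_apply, hv' m hm, sub_zero]
    have h3 := (hblk i j (u + v)).resolve_left (by rw [h1]; exact hu)
    have h4 := (hblk i j (u - v)).resolve_left (by rw [h2]; exact hu)
    have h5 := blockSq_parallelogram β₁ i u v
    apply hv
    rw [hv0]
    linarith
  have huniq : ∀ j i i', (∀ z, blockSq β₂ j (M (blk β₁ i z)) = blockSq β₁ i z) →
      (∀ z, blockSq β₂ j (M (blk β₁ i' z)) = blockSq β₁ i' z) → i = i' := by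
    intro j i i' hi hi'
    by_contra hne
    obtain ⟨m, rfl⟩ := hβ₁ i
    obtain ⟨m', rfl⟩ := hβ₁ i'
    have hs : ∀ m : Fin n, blk β₁ (β₁ m) (Pi.single m 1) = Pi.single m 1 := by
      intro m; funext k
      by_cases hk : k = m
      · subst hk; simp [blk]
      · simp [blk, Pi.single_eq_of_ne hk]
    have h1 := hi (Pi.single m 1)
    have h2 := hi' (Pi.single m' 1)
    rw [hs, blockSq_single, if_pos rfl] at h1 h2
    have hX : ∀ c : ℂ, normSq c = 1 → ∀ i, blockSq β₁ i (Pi.single m 1 + c • Pi.single m' 1) = 0 ∨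
        blockSq β₁ i (Pi.single m 1 + c • Pi.single m' 1) = 1 := by
      intro c hc i
      by_cases h : β₁ m = i
      · right
        have := blockSq_single β₁ i m
        rw [if_pos h] at this
        rw [← this]
        refine blockSq_congr fun k hk => ?_
        have hk' : k ≠ m' := by rintro rfl; exact hne (h.trans hk.symm)
        simp [Pi.single_eq_of_ne hk']
      · have e : blockSq β₁ i (Pi.single m 1 + c • Pi.single m' 1) =
            blockSq β₁ i (Pi.single m' 1) := by
          unfold blockSq
          refine Finset.sum_congr rfl fun k hk => ?_
          have hk' : k ≠ m := by rintro rfl; exact h (Finset.mem_filter.1 hk).2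
          simp [Pi.single_eq_of_ne hk', hc]
        rw [e, blockSq_single]; split_ifs <;> simp
    have h3 := blockSq_eq_zero_or_of_power_sums hq hk (hX 1 (by simp)) j
    have h4 := blockSq_eq_zero_or_of_power_sums hq hk (hX (-1) (by simp)) j
    have h5 := blockSq_parallelogram β₂ j (M (Pi.single m 1)) (M (Pi.single m' 1))
    rw [one_smul, map_add] at h3
    rw [neg_one_smul, ← sub_eq_add_neg, map_sub] at h4
    rcases h3 with h3 | h3 <;> rcases h4 with h4 | h4 <;> linarith
  have hex : ∀ j, ∃ i, ∀ z, blockSq β₂ j (M (blk β₁ i z)) = blockSq β₁ i z := by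
    intro j
    by_contra hcon
    have h0 : ∀ i z, blockSq β₂ j (M (blk β₁ i z)) = 0 := fun i =>
      (hdich i j).resolve_right fun h => hcon ⟨i, h⟩
    obtain ⟨m, rfl⟩ := hβ₂ j
    obtain ⟨z, hz⟩ := hM (Pi.single m 1)
    have h1 : M z m = 0 := by
      conv_lhs => rw [← sum_blk β₁ z, map_sum, Finset.sum_apply]
      exact Finset.sum_eq_zero fun i _ => blockSq_eq_zero.1 (h0 i z) m rfl
    rw [hz] at h1
    simp at h1
  choose τ hτ using hex
  have hY : ∀ j z, blockSq β₂ j (M z) = blockSq β₁ (τ j) z := by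
    intro j z
    rw [← hτ j z]
    refine blockSq_congr fun m hm => ?_
    conv_lhs => rw [← sum_blk β₁ z, map_sum, Finset.sum_apply]
    refine Finset.sum_eq_single (τ j) (fun i _ hi => ?_) (by simp)
    have := (hdich i j).resolve_right fun h => hi (huniq j i (τ j) h (hτ j))
    exact blockSq_eq_zero.1 (this z) m hm
  have hinj : Function.Injective τ := by
    intro j j' hjj
    by_contra hne
    obtain ⟨m, rfl⟩ := hβ₂ j
    obtain ⟨z, hz⟩ := hM (Pi.single m 1)
    have h1 := hY (β₂ m) z
    have h2 := hY j' z
    rw [hz, blockSq_single] at h1 h2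
    rw [← hjj, ← h1] at h2
    simp [hne] at h2
  have hsum : ∀ m : Fin n, d * p (β₁ m) = ∑ j, if β₁ m = τ j then (q j : ℝ) else 0 := by
    intro m
    have := hk (Pi.single m 1) 1 le_rfl
    simpa [hY, blockSq_single] using this
  have hsurj : Function.Surjective τ := by
    intro i
    obtain ⟨m, rfl⟩ := hβ₁ i
    by_contra! hcon
    have h1 := hsum m
    rw [Finset.sum_eq_zero fun j _ => if_neg fun h => hcon j h.symm] at h1
    have : (0 : ℝ) < p (β₁ m) := by exact_mod_cast hp _
    exact (mul_pos hd this).ne' h1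
  have hdp : ∀ j, d * p (τ j) = q j := by
    intro j
    obtain ⟨m, hm⟩ := hβ₁ (τ j)
    rw [← hm, hsum m, hm]
    rw [Finset.sum_eq_single j (fun j' _ hj' => if_neg fun h => hj' (hinj h.symm)) (by simp)]
    simp
  have hd1 : d = 1 := by
    apply le_antisymm
    · obtain ⟨j, hj⟩ := hq1
      have h1 := hdp j
      rw [hj] at h1
      have h2 : (1 : ℝ) ≤ p (τ j) := by exact_mod_cast hp _
      push_cast at h1
      nlinarith
    · obtain ⟨i, hi⟩ := hp1
      obtain ⟨j, rfl⟩ := hsurj i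
      have h1 := hdp j
      have h2 : (1 : ℝ) ≤ q j := by exact_mod_cast hq j
      rw [hi] at h1
      push_cast at h1
      linarith
  refine ⟨hd1, Equiv.ofBijective τ ⟨hinj, hsurj⟩, fun j => ⟨?_, hY j⟩⟩
  have := hdp j
  rw [hd1, one_mul] at this
  exact_mod_cast this.symm

end Classification

section PowerSums

variable {l l' : ℕ}

/-- Equality of two logarithmic derivatives gives equality of weighted power sums. -/
lemma power_sums_of_sum_div_eq {x : Fin l → ℂ} {y : Fin l' → ℂ} {p : Fin l → ℕ} {q : Fin l' → ℕ}
    {d : ℂ} (h : ∀ᶠ u in 𝓝 (0 : ℂ),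
      d * ∑ i, p i * (x i / (1 - u * x i)) = ∑ j, q j * (y j / (1 - u * y j)))
    {k : ℕ} (hk : 1 ≤ k) : d * ∑ i, p i * x i ^ k = ∑ j, q j * y j ^ k := by
  have hne : ∀ {m : ℕ} (x : Fin m → ℂ), ∀ᶠ u in 𝓝 (0 : ℂ), ∀ i, 1 - u * x i ≠ 0 := by
    intro m x
    rw [eventually_all]
    intro i
    have : Tendsto (fun u : ℂ => 1 - u * x i) (𝓝 0) (𝓝 1) :=
      Continuous.tendsto' (by fun_prop) _ _ (by simp)
    exact this.eventually_ne one_ne_zero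
  have hder : ∀ {m : ℕ} (x : Fin m → ℂ) (p : Fin m → ℕ) (k : ℕ) (u : ℂ),
      (∀ i, 1 - u * x i ≠ 0) →
      HasDerivAt (fun u : ℂ => ∑ i, (p i : ℂ) * (x i / (1 - u * x i)) ^ (k + 1))
        ((k + 1) * ∑ i, (p i : ℂ) * (x i / (1 - u * x i)) ^ (k + 2)) u := by
    intro m x p k u hu
    rw [Finset.mul_sum]
    refine HasDerivAt.fun_sum fun i _ => ?_
    have h1 : HasDerivAt (fun u : ℂ => 1 - u * x i) (-x i) u := by
      refine (((hasDerivAt_id u).mul_const (x i)).const_sub 1).congr_deriv ?_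
      simp
    have h2 := ((((hasDerivAt_const u (x i)).fun_div h1 (hu i)).fun_pow (k + 1)).const_mul
      (p i : ℂ))
    refine h2.congr_deriv ?_
    have h3 : (0 * (1 - u * x i) - x i * -x i) / (1 - u * x i) ^ 2 = (x i / (1 - u * x i)) ^ 2 := by
      rw [div_pow]; ring
    rw [h3, Nat.add_sub_cancel]
    push_cast
    ring
  have key : ∀ k : ℕ, ∀ᶠ u in 𝓝 (0 : ℂ),
      d * ∑ i, p i * (x i / (1 - u * x i)) ^ (k + 1) =
        ∑ j, q j * (y j / (1 - u * y j)) ^ (k + 1) := by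
    intro k
    induction k with
    | zero => simpa using h
    | succ k ih =>
      filter_upwards [ih.eventually_nhds, hne x, hne y] with u hu hx hy
      have h1 := (hder x p k u hx).const_mul d
      have h2 := h1.unique ((hder y q k u hy).congr_of_eventuallyEq hu)
      have h3 : ((k : ℂ) + 1) ≠ 0 := by exact_mod_cast Nat.succ_ne_zero k
      exact mul_left_cancel₀ h3 (by linear_combination h2)
  obtain ⟨k, rfl⟩ := Nat.exists_eq_add_of_le' hk
  simpa using (key k).self_of_nhds

end PowerSums

section SeveralBlocks

variable {n l l' : ℕ} {β₁ : Fin n → Fin l} {p : Fin l → ℕ} {β₂ : Fin n → Fin l'} {q : Fin l' → ℕ}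
  {F : (Fin n → ℂ) × ℂ → (Fin n → ℂ) × ℂ}

lemma eventually_injective_fderiv {x : (Fin n → ℂ) × ℂ}
    (h : ∀ᶠ P in 𝓝 x, DifferentiableAt ℂ F P)
    (hi : Function.Injective (fderiv ℂ F x)) :
    ∀ᶠ P in 𝓝 x, Function.Injective (fderiv ℂ F P) :=
  (differentiableAt_fderiv h).continuousAt.tendsto.eventually
    (ContinuousLinearMap.isOpen_injective.mem_nhds hi)

namespace NGerm

lemma fderiv_vertical_fst (h : NGerm β₁ p β₂ q F) (hp : ∀ i, 0 < p i) (hq : ∀ i, 0 < q i)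
    (hi : Function.Injective (fderiv ℂ F x0)) {m m' : Fin n} (hm : β₁ m ≠ β₁ m') :
    ∀ᶠ P in 𝓝 x0, (fderiv ℂ F P (0, 1)).1 = 0 := by
  have h1 : ∀ᶠ P in 𝓝 x0, P ∈ circBundle β₁ p → (fderiv ℂ F P (0, 1)).1 = 0 := by
    filter_upwards [h.toCRGerm.eventually, eventually_injective_fderiv h.diff hi] with x hx hxi hxm
    have hg := hx hxm
    have hN := hg.normalize
    have hc := hN.dC_eq_zero hp hq (hN.dD_ne_zero hq (hg.normalize_injective hxi)) hm
    have h2 := hg.fderiv_normalize (0, 1)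
    have h3 : fderiv ℂ (normGerm β₁ p β₂ q F x) x0 (0, 1) =
        (0, dD (normGerm β₁ p β₂ q F x)) := Prod.ext hc rfl
    rw [h3, fderiv_autT_vertical hxm, fderiv_autT_vertical hg.apply_mem] at h2
    have h4 : ((0, x.2 * 1) : (Fin n → ℂ) × ℂ) = x.2 • (0, 1) := by ext <;> simp
    rw [h4, map_smul] at h2
    have h5 := congrArg Prod.fst h2
    exact (smul_eq_zero.1 h5).resolve_left (snd_ne_zero hxm)
  have h2 := polarize β₁ p (H := fun Q => (fderiv ℂ F Q.1 (0, 1)).1) ?_ h1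
  · have ht : Tendsto (fun P : (Fin n → ℂ) × ℂ => (P.1, (0 : Fin n → ℂ), P.2)) (𝓝 x0)
        (𝓝 (0, 0, 1)) := Continuous.tendsto' (by fun_prop) _ _ rfl
    exact ht.eventually h2
  · have h3 : ∀ᶠ Q : ((Fin n → ℂ) × ℂ) × ((Fin n → ℂ) × ℂ) in 𝓝 (x0, x0),
        ∀ᶠ P in 𝓝 Q.1, DifferentiableAt ℂ F P :=
      (continuousAt_fst (p := ((x0, x0) : ((Fin n → ℂ) × ℂ) × ((Fin n → ℂ) × ℂ)))).eventually
        h.diff.eventually_nhds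
    filter_upwards [h3] with Q hQ
    exact ((differentiableAt_fderiv_apply (0, 1) hQ).comp Q differentiableAt_fst).fst

/-- With several blocks in the source, the first component is linear. -/
lemma fst_eq_dA (h : NGerm β₁ p β₂ q F) (hp : ∀ i, 0 < p i) (hq : ∀ i, 0 < q i)
    (hi : Function.Injective (fderiv ℂ F x0)) {m m' : Fin n} (hm : β₁ m ≠ β₁ m') :
    ∀ᶠ P in 𝓝 x0, (F P).1 = dA F P.1 := by
  have hd := h.dD_ne_zero hq hi
  have hc := h.dC_eq_zero hp hq hd hm
  obtain ⟨r, hr, hb⟩ := Metric.eventually_nhds_iff_ball.1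
    (h.diff.and (h.fderiv_vertical_fst hp hq hi hm))
  have h1 : ∀ᶠ P : (Fin n → ℂ) × ℂ in 𝓝 x0, (F (P.1, 1)).1 = dA F P.1 := by
    have : ∀ᶠ z in 𝓝 (0 : Fin n → ℂ), (F (z, 1)).1 = dA F z := by
      filter_upwards [h.fst_formula hp hq hd] with z hz
      rw [hz.2, lam, hc]
      simp
    exact (continuousAt_fst (p := (x0 : (Fin n → ℂ) × ℂ))).eventually this
  filter_upwards [h1, ball_mem_nhds _ hr] with P hP hPr
  rw [← hP]
  have hball : ∀ ξ, (P.1, ξ) ∈ ball x0 r ↔ P.1 ∈ ball 0 r ∧ ξ ∈ ball 1 r := by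
    intro ξ
    rw [x0, ← ball_prod_same]; rfl
  have hP1 := (hball P.2).1 hPr
  have hc : ∀ ξ ∈ ball (1 : ℂ) r, HasDerivAt (fun ξ => (F (P.1, ξ)).1) 0 ξ := by
    intro ξ hξ
    obtain ⟨h1, h2⟩ := hb (P.1, ξ) ((hball ξ).2 ⟨hP1.1, hξ⟩)
    have h3 := hasDerivAt_fst_comp (h1.hasFDerivAt.comp_hasDerivAt ξ
      ((hasDerivAt_const ξ P.1).prodMk (hasDerivAt_id ξ)))
    exact h3.congr_deriv h2
  refine (convex_ball (1 : ℂ) r).is_const_of_fderivWithin_eq_zero (𝕜 := ℂ)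
    (f := fun ξ => (F (P.1, ξ)).1)
    (fun ξ hξ => (hc ξ hξ).differentiableAt.differentiableWithinAt) (fun ξ hξ => ?_) hP1.2
    (mem_ball_self hr)
  rw [fderivWithin_of_isOpen isOpen_ball hξ, (hc ξ hξ).hasFDerivAt.fderiv]
  ext; simp

end NGerm
end SeveralBlocks

section SeveralBlocksFibre

variable {n l l' : ℕ} {β₁ : Fin n → Fin l} {p : Fin l → ℕ} {β₂ : Fin n → Fin l'} {q : Fin l' → ℕ}
  {F : (Fin n → ℂ) × ℂ → (Fin n → ℂ) × ℂ}

/-- The restriction of the conjugate map to the fibre over `0`. -/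
def fibre (F : (Fin n → ℂ) × ℂ → (Fin n → ℂ) × ℂ) (η : ℂ) : ℂ := (conjMap F (0, η)).2

namespace NGerm

lemma fibre_one (h : NGerm β₁ p β₂ q F) : fibre F 1 = 1 := by
  have : conjMap F (0, 1) = x0 := h.conj_base
  rw [fibre, this, x0_snd]

lemma differentiableAt_fibre (h : NGerm β₁ p β₂ q F) :
    ∀ᶠ η in 𝓝 1, DifferentiableAt ℂ (fibre F) η := by
  have ht : Tendsto (fun η : ℂ => ((0 : Fin n → ℂ), η)) (𝓝 1) (𝓝 x0) :=
    Continuous.tendsto' (by fun_prop) _ _ rfl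
  filter_upwards [ht.eventually h.diff_conj] with η hη
  have h1 := hη.comp η (f := fun η : ℂ => ((0 : Fin n → ℂ), η)) (by fun_prop)
  exact h1.snd

/-- The fibre coordinate of a germ whose first component is linear. -/
lemma snd_mul_fibre (h : NGerm β₁ p β₂ q F) (hf : ∀ᶠ P in 𝓝 x0, (F P).1 = dA F P.1) :
    ∀ᶠ P in 𝓝 x0, (F P).2 * fibre F (1 / P.2) = 1 := by
  have ht : Tendsto (fun P : (Fin n → ℂ) × ℂ => (P.1, (0 : Fin n → ℂ), P.2)) (𝓝 x0)
      (𝓝 (0, 0, 1)) := Continuous.tendsto' (by fun_prop) _ _ rfl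
  have ht' : Tendsto (fun P : (Fin n → ℂ) × ℂ => ((0 : Fin n → ℂ), 1 / P.2)) (𝓝 x0) (𝓝 x0) := by
    have : ContinuousAt (fun P : (Fin n → ℂ) × ℂ => ((0 : Fin n → ℂ), 1 / P.2)) x0 :=
      continuousAt_const.prodMk (continuousAt_const.div continuousAt_snd (by simp))
    simpa [ContinuousAt, x0] using this
  filter_upwards [ht.eventually h.polar,
    (tendsto_star_x0.comp ht').eventually hf] with P hP hP'
  have h1 : (conjMap F (0, 1 / P.2)).1 = 0 := by
    rw [conjMap, Prod.fst_star]
    simp only [Function.comp] at hP'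
    rw [hP', Prod.fst_star]
    simp
  rw [one_div] at h1
  simpa [h1, fibre] using hP

lemma snd_conj_eq_fibre (h : NGerm β₁ p β₂ q F) (hf : ∀ᶠ P in 𝓝 x0, (F P).1 = dA F P.1) :
    ∀ᶠ P in 𝓝 x0, (conjMap F P).2 = fibre F P.2 := by
  have ht : Tendsto (fun P : (Fin n → ℂ) × ℂ => ((0 : Fin n → ℂ), P.1, 1 / P.2)) (𝓝 x0)
      (𝓝 (0, 0, 1)) := by
    have : ContinuousAt (fun P : (Fin n → ℂ) × ℂ => ((0 : Fin n → ℂ), P.1, 1 / P.2)) x0 :=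
      continuousAt_const.prodMk (continuousAt_fst.prodMk
        (continuousAt_const.div continuousAt_snd (by simp)))
    simpa [ContinuousAt, x0] using this
  have ht' : Tendsto (fun P : (Fin n → ℂ) × ℂ => ((0 : Fin n → ℂ), 1 / P.2)) (𝓝 x0) (𝓝 x0) := by
    have : ContinuousAt (fun P : (Fin n → ℂ) × ℂ => ((0 : Fin n → ℂ), 1 / P.2)) x0 :=
      continuousAt_const.prodMk (continuousAt_const.div continuousAt_snd (by simp))
    simpa [ContinuousAt, x0] using this
  filter_upwards [ht.eventually h.polar, ht'.eventually hf,
    ht'.eventually (h.snd_mul_fibre hf)] with P h1 h2 h3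
  have h4 : (F (0, 1 / P.2)).1 = 0 := by rw [h2]; simp
  simp only [rhoK_zero_left, h4, one_div_one_div] at h1 h3
  exact mul_left_cancel₀ (left_ne_zero_of_mul_eq_one h3) (h1.trans h3.symm)

lemma fibre_mul (h : NGerm β₁ p β₂ q F) (hf : ∀ᶠ P in 𝓝 x0, (F P).1 = dA F P.1) :
    ∀ᶠ T : ℂ × (Fin n → ℂ) × (Fin n → ℂ) in 𝓝 (1, 0, 0),
      fibre F (rhoK β₁ p T.2.1 T.2.2 * T.1) =
        fibre F T.1 * rhoK β₂ q (dA F T.2.1) (dAs F T.2.2) := by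
  have hc : ContinuousAt (fun T : ℂ × (Fin n → ℂ) × (Fin n → ℂ) => 1 / T.1) (1, 0, 0) :=
    continuousAt_const.div continuousAt_fst (by simp)
  have hr : ContinuousAt (fun T : ℂ × (Fin n → ℂ) × (Fin n → ℂ) => rhoK β₁ p T.2.1 T.2.2)
      (1, 0, 0) :=
    (DifferentiableAt.rhoK (by fun_prop) (by fun_prop)).continuousAt
  have ht1 : Tendsto (fun T : ℂ × (Fin n → ℂ) × (Fin n → ℂ) => (T.2.1, T.2.2, 1 / T.1))
      (𝓝 (1, 0, 0)) (𝓝 (0, 0, 1)) := by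
    have : ContinuousAt (fun T : ℂ × (Fin n → ℂ) × (Fin n → ℂ) => (T.2.1, T.2.2, 1 / T.1))
      (1, 0, 0) := (by fun_prop : ContinuousAt _ _).prodMk ((by fun_prop : ContinuousAt _ _).prodMk hc)
    simpa [ContinuousAt] using this
  have ht2 : Tendsto (fun T : ℂ × (Fin n → ℂ) × (Fin n → ℂ) => (T.2.1, 1 / T.1))
      (𝓝 (1, 0, 0)) (𝓝 x0) := by
    have : ContinuousAt (fun T : ℂ × (Fin n → ℂ) × (Fin n → ℂ) => (T.2.1, 1 / T.1))
      (1, 0, 0) := (by fun_prop : ContinuousAt _ _).prodMk hc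
    simpa [ContinuousAt, x0] using this
  have ht3 : Tendsto (fun T : ℂ × (Fin n → ℂ) × (Fin n → ℂ) => (T.2.2, rhoK β₁ p T.2.1 T.2.2 * T.1))
      (𝓝 (1, 0, 0)) (𝓝 x0) := by
    have : ContinuousAt (fun T : ℂ × (Fin n → ℂ) × (Fin n → ℂ) =>
      (T.2.2, rhoK β₁ p T.2.1 T.2.2 * T.1))
      (1, 0, 0) := (by fun_prop : ContinuousAt _ _).prodMk (hr.mul continuousAt_fst)
    simpa [ContinuousAt, x0] using this
  filter_upwards [ht1.eventually h.polar, ht2.eventually hf, ht2.eventually (h.snd_mul_fibre hf),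
    ht3.eventually (h.snd_conj_eq_fibre hf),
    (tendsto_star_x0.comp ht3).eventually hf] with T h1 h2 h3 h4 h5
  have h6 : (conjMap F (T.2.2, rhoK β₁ p T.2.1 T.2.2 * T.1)).1 = dAs F T.2.2 := by
    simp only [Function.comp] at h5
    rw [conjMap, Prod.fst_star, h5, dAs_apply, Prod.fst_star]
  simp only [one_div, div_inv_eq_mul, one_mul] at h1 h2 h3 h4
  rw [h6, h4, h2] at h1
  rw [← h1]
  linear_combination (-fibre F (rhoK β₁ p T.2.1 T.2.2 * T.1)) * h3

/-- The fibre function satisfies the differential equation of a power function. -/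
lemma hasDerivAt_fibre (h : NGerm β₁ p β₂ q F) (hf : ∀ᶠ P in 𝓝 x0, (F P).1 = dA F P.1)
    (hp : ∀ i, 0 < p i) (m : Fin n) :
    ∀ᶠ η in 𝓝 1, ∃ G', HasDerivAt (fibre F) G' η ∧ G' * η = star (dD F) * fibre F η := by
  have h1 := (h.fibre_mul hf).curry_nhds
  filter_upwards [h1, h.differentiableAt_fibre] with η hη hdiff
  refine ⟨_, hdiff.hasDerivAt, ?_⟩
  have h2 := hη.curry_nhds
  have ht : Tendsto (fun c : ℂ => c • (Pi.single m 1 : Fin n → ℂ)) (𝓝[≠] 0) (𝓝 0) :=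
    (Continuous.tendsto' (by fun_prop) _ _ (by simp)).mono_left nhdsWithin_le_nhds
  obtain ⟨c, hc, hc0⟩ := ((ht.eventually h2).and self_mem_nhdsWithin).exists
  set e : Fin n → ℂ := Pi.single m 1 with he
  have hw : HasDerivAt (fun t : ℂ => t • e) e 0 := by
    simpa using (hasDerivAt_id (0 : ℂ)).smul_const e
  have hw' : HasDerivAt (fun t : ℂ => dAs F (t • e)) (dAs F e) 0 := by
    simpa using (hasDerivAt_id (0 : ℂ)).smul_const (dAs F e)
  have h3 := (hasDerivAt_rhoK_right (β := β₁) (p := p) hw (by simp) (c • e)).mul_const η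
  have h4 := (hasDerivAt_rhoK_right (β := β₂) (p := q) hw' (by simp) (dA F (c • e))).const_mul
    (fibre F η)
  have h5 : HasDerivAt (fibre F) (deriv (fibre F) η)
      ((fun t : ℂ => rhoK β₁ p (c • e) (t • e) * η) 0) := by
    simpa using hdiff.hasDerivAt
  have h6 := (h5.comp (0 : ℂ) h3)
  have ht0 : Tendsto (fun t : ℂ => t • e) (𝓝 0) (𝓝 0) :=
    Continuous.tendsto' (by fun_prop) _ _ (by simp)
  have h7 := h6.unique (h4.congr_of_eventuallyEq (by
    filter_upwards [ht0.eventually hc] with t ht using ht))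
  rw [h.bilS_dA] at h7
  have h8 : bilS β₁ p (c • e) e ≠ 0 := by
    rw [bilS_smul_left, he, bilS_single_right]
    simp only [Pi.single_eq_same, mul_one]
    exact mul_ne_zero hc0 (by simpa using (hp (β₁ m)).ne')
  exact mul_left_cancel₀ h8 (by linear_combination -h7)

lemma power_sums (h : NGerm β₁ p β₂ q F) (hf : ∀ᶠ P in 𝓝 x0, (F P).1 = dA F P.1)
    (hp : ∀ i, 0 < p i) (m : Fin n) (z : Fin n → ℂ) {k : ℕ} (hk : 1 ≤ k) :
    star (dD F) * ∑ i, p i * (blockSq β₁ i z : ℂ) ^ k =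
      ∑ j, q j * (blockSq β₂ j (dA F z) : ℂ) ^ k := by
  refine power_sums_of_sum_div_eq ?_ hk
  have h1 := ((h.fibre_mul hf).curry_nhds.self_of_nhds).curry_nhds
  have ht : Tendsto (fun c : ℂ => c • z) (𝓝[≠] 0) (𝓝 0) :=
    (Continuous.tendsto' (by fun_prop) _ _ (by simp)).mono_left nhdsWithin_le_nhds
  obtain ⟨c, hc, hc0 : c ≠ 0⟩ := ((ht.eventually h1).and self_mem_nhdsWithin).exists
  have ht' : Tendsto (fun u : ℂ => (u / c) • star z) (𝓝 0) (𝓝 0) :=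
    Continuous.tendsto' (by fun_prop) _ _ (by simp)
  have h2 : ∀ᶠ u in 𝓝 (0 : ℂ), fibre F (∏ i, (1 - u * (blockSq β₁ i z : ℂ)) ^ p i) =
      ∏ j, (1 - u * (blockSq β₂ j (dA F z) : ℂ)) ^ q j := by
    filter_upwards [ht'.eventually hc] with u hu
    have h3 : u / c * c = u := div_mul_cancel₀ u hc0
    simp only [map_smul, rhoK, bilK_smul_left, bilK_smul_right, bilK_star, mul_one,
      dAs_apply, star_star, h.fibre_one, one_mul] at hu
    simpa only [← mul_assoc, h3] using hu
  have hne : ∀ {m : ℕ} (x : Fin m → ℂ), ∀ᶠ u in 𝓝 (0 : ℂ), ∀ i, 1 - u * x i ≠ 0 := by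
    intro m x
    rw [eventually_all]
    intro i
    have : Tendsto (fun u : ℂ => 1 - u * x i) (𝓝 0) (𝓝 1) :=
      Continuous.tendsto' (by fun_prop) _ _ (by simp)
    exact this.eventually_ne one_ne_zero
  have hA : Tendsto (fun u : ℂ => ∏ i, (1 - u * (blockSq β₁ i z : ℂ)) ^ p i) (𝓝 0) (𝓝 1) :=
    Continuous.tendsto' (by fun_prop) _ _ (by simp)
  filter_upwards [h2.eventually_nhds, hA.eventually (h.hasDerivAt_fibre hf hp m),
    hne (fun i => (blockSq β₁ i z : ℂ)), hne (fun j => (blockSq β₂ j (dA F z) : ℂ))]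
    with u hu hG hx hy
  obtain ⟨G', hG1, hG2⟩ := hG
  have h3 := hasDerivAt_prod_one_sub (p := p) (x := fun i s => s * (blockSq β₁ i z : ℂ))
    (x' := fun i _ => (blockSq β₁ i z : ℂ)) (t := u)
    (fun i => ((hasDerivAt_id u).mul_const _).congr_deriv (one_mul _)) hx
  have h4 := hasDerivAt_prod_one_sub (p := q) (x := fun i s => s * (blockSq β₂ i (dA F z) : ℂ))
    (x' := fun i _ => (blockSq β₂ i (dA F z) : ℂ)) (t := u)
    (fun i => ((hasDerivAt_id u).mul_const _).congr_deriv (one_mul _)) hy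
  have h6 := hG1.comp u h3
  have h5 := h6.unique (h4.congr_of_eventuallyEq hu)
  rw [hu.self_of_nhds] at hG2
  have h7 : ∏ j, (1 - u * (blockSq β₂ j (dA F z) : ℂ)) ^ q j ≠ 0 :=
    Finset.prod_ne_zero_iff.2 fun j _ => pow_ne_zero _ (hy j)
  refine mul_left_cancel₀ h7 ?_
  linear_combination -h5 - (∑ i, (p i : ℂ) * (↑(blockSq β₁ i z) / (1 - u * ↑(blockSq β₁ i z)))) * hG2

lemma dD_pos (h : NGerm β₁ p β₂ q F) (hp : ∀ i, 0 < p i) (hd : dD F ≠ 0) (m : Fin n) :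
    ∃ d : ℝ, 0 < d ∧ dD F = d := by
  have h1 := h.bilS_dA (Pi.single m 1) (star (Pi.single m 1))
  rw [dAs_apply, star_star, bilS_star_self, bilS_star_self] at h1
  set a : ℝ := ∑ j, p (β₁ j) * normSq ((Pi.single m 1 : Fin n → ℂ) j)
  set b : ℝ := ∑ j, q (β₂ j) * normSq (dA F (Pi.single m 1) j)
  have ha : 0 < a := by
    refine Finset.sum_pos' (fun j _ => mul_nonneg (Nat.cast_nonneg _) (normSq_nonneg _))
      ⟨m, Finset.mem_univ _, ?_⟩
    simpa using hp (β₁ m)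
  have hb : 0 ≤ b := Finset.sum_nonneg fun j _ =>
    mul_nonneg (Nat.cast_nonneg _) (normSq_nonneg _)
  have h2 : dD F = ((b / a : ℝ) : ℂ) := by
    rw [← star_star (dD F), ← conj_ofReal]
    refine congrArg star ?_
    rw [ofReal_div, eq_div_iff (by exact_mod_cast ha.ne'), h1, mul_comm]
  refine ⟨b / a, lt_of_le_of_ne (by positivity) fun h0 => hd ?_, h2⟩
  rw [h2, ← h0, ofReal_zero]

/-- With several blocks in the source, a germ with injective derivative is linear and
matches the blocks. -/
lemma eq_linear (h : NGerm β₁ p β₂ q F) (hβ₁ : Function.Surjective β₁)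
    (hβ₂ : Function.Surjective β₂) (hp : ∀ i, 0 < p i) (hq : ∀ i, 0 < q i)
    (hp1 : ∃ i, p i = 1) (hq1 : ∃ j, q j = 1)
    (hi : Function.Injective (fderiv ℂ F x0)) {m m' : Fin n} (hm : β₁ m ≠ β₁ m') :
    (∀ᶠ P in 𝓝 x0, F P = (dA F P.1, P.2)) ∧ ∃ τ : Fin l' ≃ Fin l, ∀ j,
      q j = p (τ j) ∧ ∀ z, blockSq β₂ j (dA F z) = blockSq β₁ (τ j) z := by
  have hd := h.dD_ne_zero hq hi
  have hf := h.fst_eq_dA hp hq hi hm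
  have hps := fun z k hk => h.power_sums hf hp m z (k := k) hk
  obtain ⟨d, hd0, hdd⟩ := h.dD_pos hp hd m
  obtain ⟨hd1, τ, hτ⟩ := exists_block_equiv hβ₁ hβ₂ hq hp hp1 hq1 (h.dA_surjective hp hd) hd0
    (fun z k hk => by
      have := hps z k hk
      rw [hdd, star_def, conj_ofReal] at this
      exact_mod_cast this)
  refine ⟨?_, τ, hτ⟩
  rw [hd1, ofReal_one] at hdd
  have hG : ∀ᶠ η in 𝓝 1, fibre F η = η := by
    obtain ⟨r, hr, hb⟩ := Metric.eventually_nhds_iff_ball.1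
      ((h.hasDerivAt_fibre hf hp m).and (eventually_ne_nhds (one_ne_zero (α := ℂ))))
    have hc : ∀ η ∈ ball (1 : ℂ) r, HasDerivAt (fun η => fibre F η / η) 0 η := by
      intro η hη
      obtain ⟨⟨G', h1, h2⟩, h3⟩ := hb η hη
      refine (h1.fun_div (hasDerivAt_id η) h3).congr_deriv ?_
      rw [hdd, star_one, one_mul] at h2
      simp [h2]
    filter_upwards [ball_mem_nhds _ hr] with η hη
    have h1 := (convex_ball (1 : ℂ) r).is_const_of_fderivWithin_eq_zero (𝕜 := ℂ)
      (f := fun η => fibre F η / η)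
      (fun ξ hξ => (hc ξ hξ).differentiableAt.differentiableWithinAt) (fun ξ hξ => by
        rw [fderivWithin_of_isOpen isOpen_ball hξ, (hc ξ hξ).hasFDerivAt.fderiv]
        ext; simp) hη (mem_ball_self hr)
    simp only [h.fibre_one, div_one] at h1
    exact (div_eq_one_iff_eq (hb η hη).2).1 h1
  have ht : Tendsto (fun P : (Fin n → ℂ) × ℂ => 1 / P.2) (𝓝 x0) (𝓝 1) := by
    have : ContinuousAt (fun P : (Fin n → ℂ) × ℂ => 1 / P.2) x0 :=
      continuousAt_const.div continuousAt_snd (by simp)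
    simpa [ContinuousAt, x0] using this
  have hne : ∀ᶠ P : (Fin n → ℂ) × ℂ in 𝓝 x0, P.2 ≠ 0 :=
    ContinuousAt.eventually_ne continuousAt_snd (by simp)
  filter_upwards [hf, h.snd_mul_fibre hf, ht.eventually hG, hne] with P h1 h2 h3 h4
  refine Prod.ext h1 ?_
  rw [h3] at h2
  field_simp at h2
  exact h2

end NGerm
end SeveralBlocksFibre

section SingleBlock

variable {n l l' : ℕ} {β₁ : Fin n → Fin l} {p : Fin l → ℕ} {β₂ : Fin n → Fin l'} {q : Fin l' → ℕ}
  {F : (Fin n → ℂ) × ℂ → (Fin n → ℂ) × ℂ}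

lemma DifferentiableAt.bilS {E : Type*} [NormedAddCommGroup E] [NormedSpace ℂ E]
    {β : Fin n → Fin l} {p : Fin l → ℕ} {f g : E → Fin n → ℂ} {x : E}
    (hf : DifferentiableAt ℂ f x) (hg : DifferentiableAt ℂ g x) :
    DifferentiableAt ℂ (fun y => bilS β p (f y) (g y)) x := by
  unfold _root_.bilS
  exact DifferentiableAt.fun_sum fun i _ => (DifferentiableAt.bilK hf hg).const_mul _

namespace NGerm

/-- The combination of the components of the conjugate map which is proportional to `dAs F w`. -/
def adj (F : (Fin n → ℂ) × ℂ → (Fin n → ℂ) × ℂ) (Q : (Fin n → ℂ) × ℂ) : Fin n → ℂ :=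
  (conjMap F Q).1 + ((1 - (conjMap F Q).2) / star (dD F)) • star (dC F)

lemma bilS_adj (h : NGerm β₁ p β₂ q F) (hp : ∀ i, 0 < p i) (hq : ∀ i, 0 < q i)
    (hd : dD F ≠ 0) (h₁ : ∀ z w, rhoK β₁ p z w = 1 - bilS β₁ p z w)
    (h₂ : ∀ z w, rhoK β₂ q z w = 1 - bilS β₂ q z w) :
    ∀ᶠ Q in 𝓝 x0, ∀ z, (1 - Q.2) * bilS β₂ q (dA F z) (adj F Q) =
      (1 - (conjMap F Q).2) * bilS β₁ p z Q.1 := by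
  have ht : Tendsto (fun T : (Fin n → ℂ) × (Fin n → ℂ) => (T.2, T.1)) (𝓝 (0, 0)) (𝓝 (0, 0)) :=
    Continuous.tendsto' (by fun_prop) _ _ rfl
  have h3 : ∀ᶠ w in 𝓝 (0 : Fin n → ℂ), ∀ z, bilS β₁ p z w ≠ 0 → ∀ᶠ η in 𝓝 (1 : ℂ),
      (1 - η) * bilS β₂ q (dA F z) (adj F (w, η)) =
      (1 - (conjMap F (w, η)).2) * bilS β₁ p z w := by
    filter_upwards [(ht.eventually h.equation).curry_nhds] with w hw z hz
    have ht' : Tendsto (fun η : ℂ => ((1 - η) / bilS β₁ p z w) • z) (𝓝 1) (𝓝 0) :=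
      Continuous.tendsto' (by fun_prop) _ _ (by simp)
    filter_upwards [ht'.eventually hw, ht'.eventually (h.fst_formula hp hq hd)] with η h4 h5
    rw [h₁, h₂, h5.2, bilS_smul_left, div_mul_cancel₀ _ hz, sub_sub_cancel, map_smul,
      bilS_smul_left, bilS_smul_left] at h4
    have h6 := h5.1
    have h7 : lam β₂ q F (((1 - η) / bilS β₁ p z w) • z) =
        (1 - η) / bilS β₁ p z w * (bilS β₂ q (dA F z) (star (dC F)) / star (dD F)) := by
      rw [lam, map_smul, bilS_smul_left, mul_div_assoc]
    rw [h7] at h4 h6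
    have hd' : star (dD F) ≠ 0 := star_ne_zero.2 hd
    rw [adj, bilS_add_right, bilS_smul_right]
    generalize bilS β₂ q (dA F z) (star (dC F)) = x1 at *
    generalize bilS β₂ q (dA F z) (conjMap F (w, η)).1 = x2 at *
    generalize bilS β₁ p z w = x3 at *
    generalize (conjMap F (w, η)).2 = x4 at *
    generalize star (dD F) = x5 at *
    field_simp at h4 h6 ⊢
    have h8 := (div_ne_zero_iff.1 h6).1
    rw [eq_sub_iff_add_eq, add_div' _ _ _ h8, div_eq_iff h8] at h4
    linear_combination h4
  obtain ⟨r, hr, hb⟩ := Metric.eventually_nhds_iff_ball.1 h3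
  obtain ⟨s, hs, hc⟩ := Metric.eventually_nhds_iff_ball.1 h.diff_conj
  set ε := min r s
  have hε : 0 < ε := lt_min hr hs
  have hball : ∀ w η, (w, η) ∈ ball (x0 : (Fin n → ℂ) × ℂ) ε ↔ w ∈ ball 0 ε ∧ η ∈ ball 1 ε := by
    intro w η
    rw [x0, ← ball_prod_same]; rfl
  set E : (Fin n → ℂ) → (Fin n → ℂ) × ℂ → ℂ := fun z Q =>
    (1 - Q.2) * bilS β₂ q (dA F z) (adj F Q) - (1 - (conjMap F Q).2) * bilS β₁ p z Q.1 with hE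
  have hEd : ∀ z, ∀ Q ∈ ball (x0 : (Fin n → ℂ) × ℂ) ε, DifferentiableAt ℂ (E z) Q := by
    intro z Q hQ
    have h4 := hc Q (ball_subset_ball (min_le_right _ _) hQ)
    have h5 : DifferentiableAt ℂ (adj F) Q :=
      h4.fst.fun_add ((DifferentiableAt.complex_div (h4.snd.const_sub 1)
        (differentiableAt_const _) (star_ne_zero.2 hd)).smul_const _)
    exact ((differentiableAt_snd.const_sub 1).fun_mul
      (DifferentiableAt.bilS (differentiableAt_const _) h5)).fun_sub
      ((h4.snd.const_sub 1).fun_mul (DifferentiableAt.bilS (differentiableAt_const _)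
        differentiableAt_fst))
  have hE0 : ∀ z, ∀ Q ∈ ball (x0 : (Fin n → ℂ) × ℂ) ε, bilS β₁ p z Q.1 ≠ 0 → E z Q = 0 := by
    rintro z ⟨w, η⟩ hQ hz
    obtain ⟨hw, hη⟩ := (hball w η).1 hQ
    have h4 := hb w (ball_subset_ball (min_le_left _ _) hw) z hz
    have ht1 : Tendsto (fun t : ℂ => 1 + t) (𝓝[≠] 0) (𝓝 1) :=
      (Continuous.tendsto' (by fun_prop) _ _ (by simp)).mono_left nhdsWithin_le_nhds
    have h5 := eq_zero_on_line (f := E z) (a := (w, 1)) (b := (0, 1)) (t := η - 1) (hEd z)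
      ((hball w 1).2 ⟨hw, mem_ball_self hε⟩) (by
        refine Eventually.frequently ?_
        filter_upwards [ht1.eventually h4] with t ht
        simp only [hE, Prod.smul_mk, smul_zero, smul_eq_mul, mul_one, Prod.mk_add_mk, add_zero]
        exact sub_eq_zero.2 ht) (by simpa using hQ)
    simpa using h5
  filter_upwards [ball_mem_nhds _ hε] with Q hQ z
  refine sub_eq_zero.1 (?_ : E z Q = 0)
  by_cases hz : z = 0
  · simp [hE, hz]
  by_cases hzw : bilS β₁ p z Q.1 = 0
  swap
  · exact hE0 z Q hQ hzw
  have h6 : bilS β₁ p z (star z) ≠ 0 := fun h0 => hz (eq_zero_of_bilS_star_self hp h0)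
  have ht2 : Tendsto (fun t : ℂ => (Q.1 + t • star z, Q.2)) (𝓝[≠] 0) (𝓝 Q) :=
    (Continuous.tendsto' (by fun_prop) _ _ (by simp)).mono_left nhdsWithin_le_nhds
  have h7 := (hEd z Q hQ).continuousAt.tendsto.comp ht2
  refine tendsto_nhds_unique h7 (tendsto_const_nhds.congr' ?_)
  filter_upwards [ht2.eventually (isOpen_ball.mem_nhds hQ), self_mem_nhdsWithin] with t ht ht0
  refine (hE0 z _ ht ?_).symm
  rw [bilS_add_right, hzw, bilS_smul_right, zero_add]
  exact mul_ne_zero ht0 h6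

lemma fst_conj_proportional (h : NGerm β₁ p β₂ q F) (hp : ∀ i, 0 < p i) (hq : ∀ i, 0 < q i)
    (hd : dD F ≠ 0) (h₁ : ∀ z w, rhoK β₁ p z w = 1 - bilS β₁ p z w)
    (h₂ : ∀ z w, rhoK β₂ q z w = 1 - bilS β₂ q z w) :
    ∀ᶠ Q in 𝓝 x0, (1 - Q.2) • (conjMap F Q).1 =
      ((1 - (conjMap F Q).2) / star (dD F)) • (dAs F Q.1 - (1 - Q.2) • star (dC F)) := by
  have hd' : star (dD F) ≠ 0 := star_ne_zero.2 hd
  filter_upwards [h.bilS_adj hp hq hd h₁ h₂] with Q hQ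
  have h3 : (1 - Q.2) • adj F Q + (-((1 - (conjMap F Q).2) / star (dD F))) • dAs F Q.1 = 0 := by
    refine bilS_nondegenerate (β := β₂) hq fun w => ?_
    obtain ⟨z, rfl⟩ := h.dA_surjective hp hd w
    rw [bilS_comm, bilS_add_right, bilS_smul_right, bilS_smul_right, hQ, h.bilS_dA]
    field_simp
    ring
  rw [neg_smul, ← sub_eq_add_neg, sub_eq_zero, adj, smul_add] at h3
  rw [smul_sub, ← h3, smul_smul, smul_smul, mul_comm (1 - Q.2)]
  abel

lemma fst_proportional (h : NGerm β₁ p β₂ q F) (hp : ∀ i, 0 < p i) (hq : ∀ i, 0 < q i)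
    (hd : dD F ≠ 0) (h₁ : ∀ z w, rhoK β₁ p z w = 1 - bilS β₁ p z w)
    (h₂ : ∀ z w, rhoK β₂ q z w = 1 - bilS β₂ q z w) :
    ∀ᶠ P in 𝓝 x0, (1 - P.2) • (F P).1 =
      ((1 - (F P).2) / dD F) • (dA F P.1 - (1 - P.2) • dC F) := by
  filter_upwards [tendsto_star_x0.eventually (h.fst_conj_proportional hp hq hd h₁ h₂)] with P hP
  have := congrArg star hP
  simpa [conjMap, dAs_apply] using this

end NGerm
end SingleBlock

section SingleBlockFormula

variable {n l l' : ℕ} {β₁ : Fin n → Fin l} {p : Fin l → ℕ} {β₂ : Fin n → Fin l'} {q : Fin l' → ℕ}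
  {F : (Fin n → ℂ) × ℂ → (Fin n → ℂ) × ℂ}

/-- The quantity which is constant for a linear fractional germ. -/
def kap (β₂ : Fin n → Fin l') (q : Fin l' → ℕ) (F : (Fin n → ℂ) × ℂ → (Fin n → ℂ) × ℂ)
    (P : (Fin n → ℂ) × ℂ) : ℂ :=
  1 / (1 - (F P).2) - (1 - lam β₂ q F P.1) / (dD F * (1 - P.2))

/-- The conjugate of `kap`. -/
def kapS (β₂ : Fin n → Fin l') (q : Fin l' → ℕ) (F : (Fin n → ℂ) × ℂ → (Fin n → ℂ) × ℂ)
    (Q : (Fin n → ℂ) × ℂ) : ℂ :=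
  1 / (1 - (conjMap F Q).2) - (1 - lamS β₂ q F Q.1) / (star (dD F) * (1 - Q.2))

lemma kapS_eq (Q : (Fin n → ℂ) × ℂ) : kapS β₂ q F Q = star (kap β₂ q F (star Q)) := by
  have h : lamS β₂ q F Q.1 = star (lam β₂ q F (star Q.1)) := by rw [star_lam]
  rw [kapS, kap, h]
  simp [conjMap]

namespace NGerm

lemma snd_ne_one (h : NGerm β₁ p β₂ q F) (hd : dD F ≠ 0) :
    ∀ᶠ P in 𝓝 x0, P.2 ≠ 1 → (F P).2 ≠ 1 := by
  have h1 : HasStrictFDerivAt F (fderiv ℂ F x0) x0 :=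
    hasStrictFDerivAt_of_hasFDerivAt_of_continuousAt
      (h.diff.mono fun P hP => hP.hasFDerivAt) (differentiableAt_fderiv h.diff).continuousAt
  have h2 := h1.isLittleO.def (half_pos (norm_pos_iff.2 hd))
  have ht : Tendsto (fun P : (Fin n → ℂ) × ℂ => (P, (P.1, (1 : ℂ)))) (𝓝 x0) (𝓝 (x0, x0)) :=
    Continuous.tendsto' (by fun_prop) _ _ rfl
  have h3 : ∀ᶠ P : (Fin n → ℂ) × ℂ in 𝓝 x0, (F (P.1, 1)).2 = 1 :=
    (continuousAt_fst (p := (x0 : (Fin n → ℂ) × ℂ))).eventually h.snd_eq_one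
  filter_upwards [ht.eventually h2, h3] with P h4 h5 h6 h7
  have h8 : P - (P.1, 1) = (0, P.2 - 1) := by ext <;> simp
  simp only [h8, h.fderiv_eq] at h4
  have h9 := (norm_snd_le _).trans h4
  rw [Prod.snd_sub, Prod.snd_sub, h7, h5, sub_self, zero_sub, norm_neg, norm_mul,
    Prod.norm_mk, norm_zero, max_eq_right (norm_nonneg _)] at h9
  have h10 : 0 < ‖P.2 - 1‖ := norm_pos_iff.2 (sub_ne_zero.2 h6)
  nlinarith [mul_pos h10 (norm_pos_iff.2 hd)]

lemma kap_add_kapS (h : NGerm β₁ p β₂ q F) (hp : ∀ i, 0 < p i) (hq : ∀ i, 0 < q i)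
    {d : ℝ} (hd0 : 0 < d) (hd : dD F = d) (h₁ : ∀ z w, rhoK β₁ p z w = 1 - bilS β₁ p z w)
    (h₂ : ∀ z w, rhoK β₂ q z w = 1 - bilS β₂ q z w) :
    ∀ᶠ T : (Fin n → ℂ) × (Fin n → ℂ) × ℂ in 𝓝 (0, 0, 1),
      T.2.2 ≠ 1 → rhoK β₁ p T.1 T.2.1 / T.2.2 ≠ 1 →
      kap β₂ q F (T.1, T.2.2) + kapS β₂ q F (T.2.1, rhoK β₁ p T.1 T.2.1 / T.2.2) =
        1 - 1 / d + bilS β₂ q (dC F) (star (dC F)) / d ^ 2 := by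
  have hdc : (d : ℂ) ≠ 0 := by exact_mod_cast hd0.ne'
  have hdd : dD F ≠ 0 := by rwa [hd]
  have ht1 : Tendsto (fun T : (Fin n → ℂ) × (Fin n → ℂ) × ℂ => (T.1, T.2.2)) (𝓝 (0, 0, 1))
      (𝓝 x0) := Continuous.tendsto' (by fun_prop) _ _ rfl
  have ht2 : Tendsto (fun T : (Fin n → ℂ) × (Fin n → ℂ) × ℂ =>
      (T.2.1, rhoK β₁ p T.1 T.2.1 / T.2.2)) (𝓝 (0, 0, 1)) (𝓝 x0) := by
    have hr : ContinuousAt (fun T : (Fin n → ℂ) × (Fin n → ℂ) × ℂ => rhoK β₁ p T.1 T.2.1)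
        (0, 0, 1) := (DifferentiableAt.rhoK (by fun_prop) (by fun_prop)).continuousAt
    have : ContinuousAt (fun T : (Fin n → ℂ) × (Fin n → ℂ) × ℂ =>
        (T.2.1, rhoK β₁ p T.1 T.2.1 / T.2.2)) (0, 0, 1) :=
      (by fun_prop : ContinuousAt _ _).prodMk (hr.div (by fun_prop) (by simp))
    simpa [ContinuousAt, x0] using this
  have hne : ∀ᶠ T : (Fin n → ℂ) × (Fin n → ℂ) × ℂ in 𝓝 (0, 0, 1), T.2.2 ≠ 0 :=
    ContinuousAt.eventually_ne (by fun_prop) (by simp)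
  have hs : ∀ᶠ Q in 𝓝 x0, Q.2 ≠ 1 → (conjMap F Q).2 ≠ 1 := by
    filter_upwards [tendsto_star_x0.eventually (h.snd_ne_one hdd)] with Q hQ h3 h4
    refine hQ (fun h5 => h3 ?_) ?_
    · rw [Prod.snd_star] at h5; simpa using congrArg star h5
    · rw [conjMap, Prod.snd_star] at h4; simpa using congrArg star h4
  filter_upwards [h.polar, hne, ht1.eventually (h.snd_ne_one hdd), ht2.eventually hs,
    ht1.eventually (h.fst_proportional hp hq hdd h₁ h₂),
    ht2.eventually (h.fst_conj_proportional hp hq hdd h₁ h₂)] with T e0 e1 e2 e3 e4 e5 hξ hη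
  obtain ⟨z, w, ξ⟩ := T
  simp only at *
  set η := rhoK β₁ p z w / ξ with hηdef
  have hB : bilS β₁ p z w = 1 - ξ * η := by
    rw [hηdef, h₁, mul_div_cancel₀ _ e1]; ring
  have hG := sub_ne_zero.2 (e2 hξ).symm
  have hG' := sub_ne_zero.2 (e3 hη).symm
  have hs' := sub_ne_zero.2 hξ.symm
  have ht' := sub_ne_zero.2 hη.symm
  have e6 := congrArg₂ (bilS β₂ q) e4 e5
  have hds : star (dD F) = d := by rw [hd, star_def, conj_ofReal]
  have hds' : star (d : ℂ) = d := by rw [star_def, conj_ofReal]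
  rw [h₂] at e0
  simp only [sub_eq_add_neg, ← neg_one_smul ℂ (_ : Fin n → ℂ)] at e6
  simp only [bilS_smul_left, bilS_smul_right, bilS_add_left, bilS_add_right, h.bilS_dA, hB, hd,
    hds'] at e6
  rw [kap, kapS, lam, lamS, hds, hd, bilS_comm β₂ q (dAs F w)]
  simp only
  generalize bilS β₂ q (dA F z) (star (dC F)) = x1 at *
  generalize bilS β₂ q (dC F) (dAs F w) = x2 at *
  generalize bilS β₂ q (dC F) (star (dC F)) = x3 at *
  generalize bilS β₂ q (F (z, ξ)).1 (conjMap F (w, η)).1 = x4 at *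
  generalize (F (z, ξ)).2 = g at *
  generalize (conjMap F (w, η)).2 = g' at *
  have e7 : x4 = 1 - g * g' := by linear_combination e0
  rw [e7] at e6
  clear_value η
  field_simp at e6 ⊢
  linear_combination e6

end NGerm
end SingleBlockFormula

section SingleBlockConstancy

variable {n l l' : ℕ} {β₁ : Fin n → Fin l} {p : Fin l → ℕ} {β₂ : Fin n → Fin l'} {q : Fin l' → ℕ}
  {F : (Fin n → ℂ) × ℂ → (Fin n → ℂ) × ℂ}

namespace NGerm

lemma kap_eq_kap_zero (h : NGerm β₁ p β₂ q F) (hp : ∀ i, 0 < p i) (hq : ∀ i, 0 < q i)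
    {d : ℝ} (hd0 : 0 < d) (hd : dD F = d) (h₁ : ∀ z w, rhoK β₁ p z w = 1 - bilS β₁ p z w)
    (h₂ : ∀ z w, rhoK β₂ q z w = 1 - bilS β₂ q z w) :
    ∀ᶠ P : (Fin n → ℂ) × ℂ in 𝓝 x0, P.2 ≠ 1 → kap β₂ q F P = kap β₂ q F (0, P.2) := by
  have ht1 : Tendsto (fun P : (Fin n → ℂ) × ℂ => (P.1, (0 : Fin n → ℂ), P.2)) (𝓝 x0)
      (𝓝 (0, 0, 1)) := Continuous.tendsto' (by fun_prop) _ _ rfl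
  have ht2 : Tendsto (fun P : (Fin n → ℂ) × ℂ => ((0 : Fin n → ℂ), (0 : Fin n → ℂ), P.2)) (𝓝 x0)
      (𝓝 (0, 0, 1)) := Continuous.tendsto' (by fun_prop) _ _ rfl
  have h3 := h.kap_add_kapS hp hq hd0 hd h₁ h₂
  filter_upwards [ht1.eventually h3, ht2.eventually h3] with P e1 e2 hP
  simp only [rhoK_zero_right] at e1 e2
  have h4 : 1 / P.2 ≠ 1 := fun h5 => hP (by simpa using h5)
  exact add_right_cancel ((e1 hP h4).trans (e2 hP h4).symm)

/-- For a germ between single-block bundles, `kap` is constant. -/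
lemma kap_eq_const (h : NGerm β₁ p β₂ q F) (hp : ∀ i, 0 < p i) (hq : ∀ i, 0 < q i)
    {d : ℝ} (hd0 : 0 < d) (hd : dD F = d) (h₁ : ∀ z w, rhoK β₁ p z w = 1 - bilS β₁ p z w)
    (h₂ : ∀ z w, rhoK β₂ q z w = 1 - bilS β₂ q z w) (m : Fin n) :
    ∃ k : ℂ, (∀ᶠ P in 𝓝 x0, P.2 ≠ 1 → kap β₂ q F P = k) ∧
      k + star k = 1 - 1 / d + bilS β₂ q (dC F) (star (dC F)) / d ^ 2 := by
  have h3 := h.kap_add_kapS hp hq hd0 hd h₁ h₂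
  have h4 := h.kap_eq_kap_zero hp hq hd0 hd h₁ h₂
  have key : ∃ k : ℂ, ∀ᶠ ξ in 𝓝 (1 : ℂ), ξ ≠ 1 → kap β₂ q F (0, ξ) = k := by
    have ht : Tendsto (fun T : (Fin n → ℂ) × (Fin n → ℂ) × ℂ => (T.2.1, T.1, T.2.2))
        (𝓝 (0, 0, 1)) (𝓝 (0, 0, 1)) := Continuous.tendsto' (by fun_prop) _ _ rfl
    have h5 := Eventually.curry_nhds (ht.eventually h3)
    have hc : Tendsto (fun c : ℂ => c • (Pi.single m 1 : Fin n → ℂ)) (𝓝[≠] 0) (𝓝 0) :=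
      (Continuous.tendsto' (by fun_prop) _ _ (by simp)).mono_left nhdsWithin_le_nhds
    obtain ⟨c, hc1, hc0⟩ := ((hc.eventually h5).and self_mem_nhdsWithin).exists
    have hpm : (p (β₁ m) : ℂ) ≠ 0 := by exact_mod_cast (hp _).ne'
    have hb : bilS β₁ p (Pi.single m 1) (c • (Pi.single m 1 : Fin n → ℂ)) = p (β₁ m) * c := by
      rw [bilS_smul_right, bilS_single_right]; simp; ring
    have hb0 : (p (β₁ m) * c : ℂ) ≠ 0 := mul_ne_zero hpm hc0
    set b : ℂ := p (β₁ m) * c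
    have ht2 : Tendsto (fun T : ℂ × ℂ => (((1 - T.1 * T.2) / b) • (Pi.single m 1 : Fin n → ℂ), T.2))
        (𝓝 (1, 1)) (𝓝 (0, 1)) := Continuous.tendsto' (by fun_prop) _ _ (by simp)
    have hne : ∀ᶠ ξ in 𝓝 (1 : ℂ), ξ ≠ 0 := ContinuousAt.eventually_ne (by fun_prop) (by simp)
    have h6 := Eventually.curry_nhds ((ht2.eventually hc1).and (ht2.eventually h4))
    obtain ⟨η, hη, hη1⟩ :=
      ((h6.filter_mono (nhdsWithin_le_nhds (s := {1}ᶜ))).and self_mem_nhdsWithin).exists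
    refine ⟨1 - 1 / d + bilS β₂ q (dC F) (star (dC F)) / d ^ 2 -
      kapS β₂ q F (c • Pi.single m 1, η), ?_⟩
    filter_upwards [hη, hne] with ξ ⟨e1, e2⟩ e3 hξ
    have hr : rhoK β₁ p (((1 - η * ξ) / b) • (Pi.single m 1 : Fin n → ℂ))
        (c • (Pi.single m 1 : Fin n → ℂ)) / ξ = η := by
      rw [h₁, bilS_smul_left, hb, div_mul_cancel₀ _ hb0]
      field_simp; ring
    simp only [hr] at e1
    rw [← e2 hξ]
    exact eq_sub_of_add_eq (e1 hξ hη1)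
  obtain ⟨k, hk⟩ := key
  have hk' : ∀ᶠ P in 𝓝 x0, P.2 ≠ 1 → kap β₂ q F P = k := by
    filter_upwards [h4, (continuousAt_snd (p := (x0 : (Fin n → ℂ) × ℂ))).eventually hk]
      with P e1 e2 hP
    rw [e1 hP, e2 hP]
  refine ⟨k, hk', ?_⟩
  have ht1 : Tendsto (fun ξ : ℂ => ((0 : Fin n → ℂ), (0 : Fin n → ℂ), ξ)) (𝓝 1)
      (𝓝 (0, 0, 1)) := Continuous.tendsto' (by fun_prop) _ _ rfl
  have ht2 : Tendsto (fun ξ : ℂ => star ((0 : Fin n → ℂ), 1 / ξ)) (𝓝 1) (𝓝 x0) := by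
    have : ContinuousAt (fun ξ : ℂ => star ((0 : Fin n → ℂ), 1 / ξ)) 1 :=
      (continuousAt_const.prodMk (continuousAt_const.div continuousAt_id (by simp))).star
    have h0 : star ((0 : Fin n → ℂ), 1 / (1 : ℂ)) = x0 := by ext <;> simp
    rw [ContinuousAt, h0] at this
    exact this
  obtain ⟨ξ, ⟨e1, e2, e3⟩, hξ⟩ := ((((ht1.eventually h3).and (hk.and (ht2.eventually hk'))).filter_mono
    (nhdsWithin_le_nhds (s := {1}ᶜ))).and self_mem_nhdsWithin).exists
  have h4 : 1 / ξ ≠ 1 := fun h5 => hξ (by simpa using h5)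
  simp only [rhoK_zero_right] at e1
  rw [← e1 hξ h4, e2 hξ, kapS_eq, e3]
  intro h5
  rw [Prod.snd_star] at h5
  exact h4 (by simpa using congrArg star h5)

/-- The linear fractional formula for a germ between single-block bundles. -/
lemma exists_formula (h : NGerm β₁ p β₂ q F) (hp : ∀ i, 0 < p i) (hq : ∀ i, 0 < q i)
    {d : ℝ} (hd0 : 0 < d) (hd : dD F = d) (h₁ : ∀ z w, rhoK β₁ p z w = 1 - bilS β₁ p z w)
    (h₂ : ∀ z w, rhoK β₂ q z w = 1 - bilS β₂ q z w) (m : Fin n) :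
    ∃ k : ℂ, k + star k = 1 - 1 / d + bilS β₂ q (dC F) (star (dC F)) / d ^ 2 ∧
      ∀ᶠ P in 𝓝 x0, P.2 ≠ 1 → ∀ ν : ℂ,
        ν = (1 - bilS β₂ q (dA F P.1) (star (dC F)) / d) / d + k * (1 - P.2) →
        F P = ((d * ν)⁻¹ • (dA F P.1 - (1 - P.2) • dC F), 1 - (1 - P.2) / ν) := by
  obtain ⟨k, hk, hk2⟩ := h.kap_eq_const hp hq hd0 hd h₁ h₂ m
  have hdc : (d : ℂ) ≠ 0 := by exact_mod_cast hd0.ne'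
  have hdd : dD F ≠ 0 := by rwa [hd]
  refine ⟨k, hk2, ?_⟩
  filter_upwards [hk, h.snd_ne_one hdd, h.fst_proportional hp hq hdd h₁ h₂] with P e1 e2 e3 hP ν hν
  have hs := sub_ne_zero.2 hP.symm
  have hG := sub_ne_zero.2 (e2 hP).symm
  have hds : star (dD F) = d := by rw [hd, star_def, conj_ofReal]
  have e4 := e1 hP
  rw [kap, lam, hds, hd] at e4
  have e5 : ν * (1 - (F P).2) = 1 - P.2 := by
    rw [hν, ← e4]
    field_simp
    ring
  have hν0 : ν ≠ 0 := by rintro rfl; exact hs (by rw [← e5, zero_mul])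
  have e6 : 1 - (F P).2 = (1 - P.2) / ν := by rw [← e5]; field_simp
  refine Prod.ext ?_ ?_
  · rw [← smul_right_inj hs, e3, e6, hd, smul_smul]
    congr 1
    field_simp
  · simp only
    rw [← e6]; ring

end NGerm
end SingleBlockConstancy

section RationalMaps

variable {n l : ℕ} {s t : Set ((Fin n → ℂ) × ℂ)} {f g : (Fin n → ℂ) × ℂ → ℂ}
  {G H : (Fin n → ℂ) × ℂ → (Fin n → ℂ) × ℂ}

/-- `f` agrees on `s` with a quotient of polynomials whose denominator has no zero on `s`. -/
def RatOn (s : Set ((Fin n → ℂ) × ℂ)) (f : (Fin n → ℂ) × ℂ → ℂ) : Prop :=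
  ∃ R Q : MvPolynomial (Fin n ⊕ Unit) ℂ, ∀ P ∈ s, evalP Q P ≠ 0 ∧ f P = evalP R P / evalP Q P

/-- Every component of `G` is rational without poles on `s`. -/
def RatMap (s : Set ((Fin n → ℂ) × ℂ)) (G : (Fin n → ℂ) × ℂ → (Fin n → ℂ) × ℂ) : Prop :=
  (∀ j, RatOn s fun P => (G P).1 j) ∧ RatOn s fun P => (G P).2

lemma differentiable_evalP (R : MvPolynomial (Fin n ⊕ Unit) ℂ) : Differentiable ℂ (evalP R) := by
  unfold evalP
  induction R using MvPolynomial.induction_on with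
  | C a => simp
  | add p q hp hq =>
    simp only [MvPolynomial.eval_add]
    exact hp.add hq
  | mul_X p i hp =>
    simp only [MvPolynomial.eval_mul, MvPolynomial.eval_X]
    refine hp.mul ?_
    cases i <;> simp only [Sum.elim_inl, Sum.elim_inr] <;> fun_prop

namespace RatOn

lemma differentiableOn (hf : RatOn s f) : DifferentiableOn ℂ f s := by
  obtain ⟨R, Q, h⟩ := hf
  refine DifferentiableOn.congr (f := fun P => evalP R P / evalP Q P) (fun P hP => ?_)
    fun P hP => (h P hP).2
  exact (DifferentiableAt.complex_div (differentiable_evalP R P) (differentiable_evalP Q P)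
    (h P hP).1).differentiableWithinAt

lemma const (c : ℂ) : RatOn s fun _ => c :=
  ⟨.C c, 1, fun P _ => by simp [evalP]⟩

lemma fst (j : Fin n) : RatOn s fun P => P.1 j :=
  ⟨.X (.inl j), 1, fun P _ => by simp [evalP]⟩

lemma snd : RatOn s fun P => P.2 :=
  ⟨.X (.inr ()), 1, fun P _ => by simp [evalP]⟩

lemma add (hf : RatOn s f) (hg : RatOn s g) : RatOn s fun P => f P + g P := by
  obtain ⟨R, Q, h⟩ := hf
  obtain ⟨R', Q', h'⟩ := hg
  refine ⟨R * Q' + R' * Q, Q * Q', fun P hP => ?_⟩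
  obtain ⟨h1, h2⟩ := h P hP
  obtain ⟨h3, h4⟩ := h' P hP
  simp only [h2, h4, evalP, MvPolynomial.eval_mul, MvPolynomial.eval_add] at *
  refine ⟨mul_ne_zero h1 h3, ?_⟩
  field_simp

lemma mul (hf : RatOn s f) (hg : RatOn s g) : RatOn s fun P => f P * g P := by
  obtain ⟨R, Q, h⟩ := hf
  obtain ⟨R', Q', h'⟩ := hg
  refine ⟨R * R', Q * Q', fun P hP => ?_⟩
  obtain ⟨h1, h2⟩ := h P hP
  obtain ⟨h3, h4⟩ := h' P hP
  simp only [h2, h4, evalP, MvPolynomial.eval_mul] at *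
  exact ⟨mul_ne_zero h1 h3, by field_simp⟩

lemma inv (hf : RatOn s f) (h0 : ∀ P ∈ s, f P ≠ 0) : RatOn s fun P => (f P)⁻¹ := by
  obtain ⟨R, Q, h⟩ := hf
  refine ⟨Q, R, fun P hP => ?_⟩
  obtain ⟨h1, h2⟩ := h P hP
  refine ⟨fun h3 => h0 P hP (by rw [h2, h3, zero_div]), ?_⟩
  simp only [h2, inv_div]

lemma div (hf : RatOn s f) (hg : RatOn s g) (h0 : ∀ P ∈ s, g P ≠ 0) :
    RatOn s fun P => f P / g P := by
  simpa only [div_eq_mul_inv] using hf.mul (hg.inv h0)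

lemma neg (hf : RatOn s f) : RatOn s fun P => -f P := by
  simpa using (const (-1)).mul hf

lemma sub (hf : RatOn s f) (hg : RatOn s g) : RatOn s fun P => f P - g P := by
  simpa only [sub_eq_add_neg] using hf.add hg.neg

lemma pow (hf : RatOn s f) (m : ℕ) : RatOn s fun P => f P ^ m := by
  induction m with
  | zero => simpa using const 1
  | succ m ih => simpa only [pow_succ] using ih.mul hf

lemma sum {ι : Type*} (u : Finset ι) {f : ι → (Fin n → ℂ) × ℂ → ℂ} (hf : ∀ i, RatOn s (f i)) :
    RatOn s fun P => ∑ i ∈ u, f i P := by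
  classical
  induction u using Finset.induction_on with
  | empty => simpa using const 0
  | insert i u hi ih => simpa only [Finset.sum_insert hi] using (hf i).add ih

lemma prod {ι : Type*} (u : Finset ι) {f : ι → (Fin n → ℂ) × ℂ → ℂ} (hf : ∀ i, RatOn s (f i)) :
    RatOn s fun P => ∏ i ∈ u, f i P := by
  classical
  induction u using Finset.induction_on with
  | empty => simpa using const 1
  | insert i u hi ih => simpa only [Finset.prod_insert hi] using (hf i).mul ih

lemma evalP_comp (hG : RatMap s G) (R : MvPolynomial (Fin n ⊕ Unit) ℂ) :
    RatOn s fun P => evalP R (G P) := by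
  unfold evalP
  induction R using MvPolynomial.induction_on with
  | C a => simpa using const a
  | add p q hp hq => simpa using hp.add hq
  | mul_X p i hp =>
    simp only [MvPolynomial.eval_mul, MvPolynomial.eval_X]
    refine hp.mul ?_
    cases i
    · exact hG.1 _
    · exact hG.2

lemma comp (hf : RatOn t f) (hG : RatMap s G) (hst : Set.MapsTo G s t) :
    RatOn s fun P => f (G P) := by
  obtain ⟨R, Q, h⟩ := hf
  obtain ⟨R', Q', h'⟩ :=
    (evalP_comp hG R).div (evalP_comp hG Q) fun P hP => (h _ (hst hP)).1
  exact ⟨R', Q', fun P hP => ⟨(h' P hP).1, (h _ (hst hP)).2.trans (h' P hP).2⟩⟩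

lemma mono (hf : RatOn t f) (hst : s ⊆ t) : RatOn s f := by
  obtain ⟨R, Q, h⟩ := hf
  exact ⟨R, Q, fun P hP => h P (hst hP)⟩

lemma bilK (β : Fin n → Fin l) (i : Fin l) {z : (Fin n → ℂ) × ℂ → Fin n → ℂ}
    (hz : ∀ j, RatOn s fun P => z P j) (w : Fin n → ℂ) : RatOn s fun P => bilK β i (z P) w :=
  sum _ fun j => (hz j).mul (const _)

lemma bilS (β : Fin n → Fin l) (p : Fin l → ℕ) {z : (Fin n → ℂ) × ℂ → Fin n → ℂ}
    (hz : ∀ j, RatOn s fun P => z P j) (w : Fin n → ℂ) : RatOn s fun P => bilS β p (z P) w :=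
  sum _ fun i => (const _).mul (RatOn.bilK β i hz w)

lemma rhoK (β : Fin n → Fin l) (p : Fin l → ℕ) {z : (Fin n → ℂ) × ℂ → Fin n → ℂ}
    (hz : ∀ j, RatOn s fun P => z P j) (w : Fin n → ℂ) : RatOn s fun P => rhoK β p (z P) w :=
  prod _ fun i => ((const _).sub (RatOn.bilK β i hz w)).pow _

lemma linearMap (A : (Fin n → ℂ) →ₗ[ℂ] (Fin n → ℂ)) {z : (Fin n → ℂ) × ℂ → Fin n → ℂ}
    (hz : ∀ j, RatOn s fun P => z P j) (j : Fin n) : RatOn s fun P => A (z P) j := by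
  have h : ∀ P, A (z P) j = ∑ i, z P i * A (Pi.single i 1) j := fun P => by
    conv_lhs => rw [pi_eq_sum_univ' (z P), map_sum, Finset.sum_apply]
    refine Finset.sum_congr rfl fun i _ => ?_
    rw [map_smul, Pi.smul_apply, smul_eq_mul]
  simp only [h]
  exact sum _ fun i => (hz i).mul (const _)

end RatOn

namespace RatMap

lemma differentiableOn (hG : RatMap s G) : DifferentiableOn ℂ G s :=
  (differentiableOn_pi.2 fun j => (hG.1 j).differentiableOn).prodMk hG.2.differentiableOn

lemma comp (hH : RatMap t H) (hG : RatMap s G) (hst : Set.MapsTo G s t) :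
    RatMap s (H ∘ G) :=
  ⟨fun j => (hH.1 j).comp hG hst, hH.2.comp hG hst⟩

lemma mono (hG : RatMap t G) (hst : s ⊆ t) : RatMap s G :=
  ⟨fun j => (hG.1 j).mono hst, hG.2.mono hst⟩

/-- The components of a rational map have a common denominator. -/
lemma exists_common_denominator (hG : RatMap s G) :
    ∃ (Pz : Fin n → MvPolynomial (Fin n ⊕ Unit) ℂ) (Pξ Q : MvPolynomial (Fin n ⊕ Unit) ℂ),
      (∀ P ∈ s, evalP Q P ≠ 0) ∧ Set.EqOn G
        (fun P => ((fun j => evalP (Pz j) P / evalP Q P), evalP Pξ P / evalP Q P)) s := by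
  obtain ⟨h1, R, Q, h2⟩ := hG
  choose Rz Qz h1 using h1
  refine ⟨fun j => Rz j * ((∏ i ∈ Finset.univ.erase j, Qz i) * Q), R * ∏ i, Qz i,
    (∏ i, Qz i) * Q, ?_⟩
  have h3 : ∀ P ∈ s, ∏ i, evalP (Qz i) P ≠ 0 := fun P hP =>
    Finset.prod_ne_zero_iff.2 fun i _ => (h1 i P hP).1
  simp only [evalP, MvPolynomial.eval_mul, MvPolynomial.eval_prod] at *
  refine ⟨fun P hP => mul_ne_zero (h3 P hP) (h2 P hP).1, fun P hP => ?_⟩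
  have h4 := (h2 P hP).1
  refine Prod.ext (funext fun j => ?_) ?_
  · have h5 := (h1 j P hP).1
    have h6 := h3 P hP
    simp only
    rw [(h1 j P hP).2, ← Finset.mul_prod_erase Finset.univ _ (Finset.mem_univ j)] at *
    have h7 := right_ne_zero_of_mul h6
    field_simp
  · have h6 := h3 P hP
    simp only
    rw [(h2 P hP).2]
    field_simp

end RatMap

lemma ratMap_autT {β : Fin n → Fin l} {p : Fin l → ℕ} {A : (Fin n → ℂ) × ℂ}
    (hA : A ∈ circBundle β p) : RatMap (tube β) (autT β p A) := by
  refine ⟨fun j => ?_, ?_⟩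
  · have h := RatOn.bilK (s := tube β) β (β j) RatOn.fst (star A.1)
    exact ((((RatOn.const 1).sub (h.div (RatOn.const _) fun _ _ =>
      one_add_rad_ne hA.1 (β j))).mul (RatOn.const _)).sub ((RatOn.const _).mul (RatOn.fst j))).div
      ((RatOn.const 1).sub h) fun P hP => one_sub_bilK_ne_zero hP hA.1 _
  · exact ((RatOn.const _).mul RatOn.snd).div (RatOn.rhoK β p RatOn.fst _)
      fun P hP => rhoK_ne_zero hP hA.1

section Biholo

variable {E : Type*} [NormedAddCommGroup E] [NormedSpace ℂ E] {a b c : Set E} {u v : E → E}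

lemma Biholo.comp (hv : Biholo v b c) (hu : Biholo u a b) : Biholo (v ∘ u) a c := by
  obtain ⟨h1, h2, u', h3, h4, h5, h6⟩ := hu
  obtain ⟨g1, g2, v', g3, g4, g5, g6⟩ := hv
  exact ⟨g1.comp h1 h2, g2.comp h2, u' ∘ v', h3.comp g3 g4, h4.comp g4,
    h5.comp g5 h2, h6.comp g6 g4⟩

lemma Biholo.congr (hu : Biholo u a b) (h : Set.EqOn v u a) : Biholo v a b := by
  obtain ⟨h1, h2, u', h3, h4, h5, h6⟩ := hu
  refine ⟨h1.congr h, h2.congr h.symm, u', h3, h4, fun x hx => ?_, fun x hx => ?_⟩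
  · rw [h hx, h5 hx]
  · rw [h (h4 hx), h6 hx]

end Biholo

lemma biholo_autT {β : Fin n → Fin l} {p : Fin l → ℕ} {A : (Fin n → ℂ) × ℂ}
    (hA : A ∈ circBundle β p) : Biholo (autT β p A) (discBundle β p) (discBundle β p) :=
  ⟨((ratMap_autT hA).mono (discBundle_subset_tube β p)).differentiableOn,
    fun _ hP => autT_mem_discBundle hA hP, autT β p (bar2 A),
    ((ratMap_autT (bar2_mem hA)).mono (discBundle_subset_tube β p)).differentiableOn,
    fun _ hP => autT_mem_discBundle (bar2_mem hA) hP,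
    fun _ hP => autT_bar2_autT hA hP.1, fun _ hP => autT_autT_bar2 hA hP.1⟩

end RationalMaps

section LinearFractional

variable {n l l' : ℕ} {β₁ : Fin n → Fin l} {p : Fin l → ℕ} {β₂ : Fin n → Fin l'} {q : Fin l' → ℕ}
  {A A' : (Fin n → ℂ) →ₗ[ℂ] (Fin n → ℂ)} {c : Fin n → ℂ} {d : ℝ} {k : ℂ}

/-- The weighted squared norm of a point of `ℂⁿ × ℂ`. -/
def sphN (β : Fin n → Fin l) (p : Fin l → ℕ) (P : (Fin n → ℂ) × ℂ) : ℝ :=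
  ∑ j, p (β j) * normSq (P.1 j) + normSq P.2

/-- The denominator of `sphMap`. -/
def sphDen (β₂ : Fin n → Fin l') (q : Fin l' → ℕ) (A : (Fin n → ℂ) →ₗ[ℂ] (Fin n → ℂ))
    (c : Fin n → ℂ) (d : ℝ) (k : ℂ) (P : (Fin n → ℂ) × ℂ) : ℂ :=
  (1 - bilS β₂ q (A P.1) (star c) / d) / d + k * (1 - P.2)

/-- A linear fractional map fixing the base point. -/
def sphMap (β₂ : Fin n → Fin l') (q : Fin l' → ℕ) (A : (Fin n → ℂ) →ₗ[ℂ] (Fin n → ℂ))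
    (c : Fin n → ℂ) (d : ℝ) (k : ℂ) (P : (Fin n → ℂ) × ℂ) : (Fin n → ℂ) × ℂ :=
  ((d * sphDen β₂ q A c d k P)⁻¹ • (A P.1 - (1 - P.2) • c), 1 - (1 - P.2) / sphDen β₂ q A c d k P)

/-- The conditions under which `sphMap` preserves the unit balls for the weighted norms. -/
structure SphData (β₁ : Fin n → Fin l) (p : Fin l → ℕ) (β₂ : Fin n → Fin l') (q : Fin l' → ℕ)
    (A : (Fin n → ℂ) →ₗ[ℂ] (Fin n → ℂ)) (c : Fin n → ℂ) (d : ℝ) (k : ℂ) : Prop where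
  pos : 0 < d
  isom : ∀ z w, bilS β₂ q (A z) (star (A w)) = d * bilS β₁ p z (star w)
  trace : k + star k = 1 - 1 / d + bilS β₂ q c (star c) / d ^ 2

lemma bilS_smul_star_smul (β : Fin n → Fin l) (p : Fin l → ℕ) (a : ℂ) (z : Fin n → ℂ) :
    bilS β p (a • z) (star (a • z)) = (a * star a) * bilS β p z (star z) := by
  rw [star_smul, bilS_smul_left, bilS_smul_right]; ring

lemma sphN_eq (β : Fin n → Fin l) (p : Fin l → ℕ) (P : (Fin n → ℂ) × ℂ) :
    (sphN β p P : ℂ) = bilS β p P.1 (star P.1) + P.2 * star P.2 := by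
  rw [sphN, bilS_star_self, RCLike.star_def, mul_conj]
  push_cast
  rfl

namespace SphData

lemma identity (h : SphData β₁ p β₂ q A c d k) (P : (Fin n → ℂ) × ℂ) :
    d * (∑ j, q (β₂ j) * normSq ((A P.1 - (1 - P.2) • c) j) / d ^ 2 +
      normSq (sphDen β₂ q A c d k P - (1 - P.2)) - normSq (sphDen β₂ q A c d k P)) =
      sphN β₁ p P - 1 := by
  have hd : (d : ℂ) ≠ 0 := by exact_mod_cast h.pos.ne'
  have hds : star (d : ℂ) = d := conj_ofReal d
  have h1 := bilS_star_self β₂ q (A P.1 - (1 - P.2) • c)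
  rw [← Finset.sum_div]
  have h2 : ((∑ j, q (β₂ j) * normSq ((A P.1 - (1 - P.2) • c) j) : ℝ) : ℂ) =
      d * bilS β₁ p P.1 (star P.1) - star (1 - P.2) * bilS β₂ q (A P.1) (star c) -
      (1 - P.2) * star (bilS β₂ q (A P.1) (star c)) +
      (1 - P.2) * star (1 - P.2) * bilS β₂ q c (star c) := by
    rw [← h1, star_bilS, star_star, bilS_comm β₂ q (star (A P.1)) c, ← h.isom,
      star_sub, star_smul]
    simp only [sub_eq_add_neg (A P.1), sub_eq_add_neg (star (A P.1)), ← neg_one_smul ℂ (_ : Fin n → ℂ)]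
    simp only [bilS_smul_left, bilS_smul_right, bilS_add_left, bilS_add_right]
    ring
  have h3 := h.trace
  have h4 := sphN_eq β₁ p P
  apply ofReal_injective
  rw [ofReal_mul, ofReal_sub, ofReal_add, ofReal_div, h2, ofReal_sub, h4, ← mul_conj, ← mul_conj,
    ← star_def, sphDen]
  simp only [star_add, star_sub, star_div₀, star_mul', hds, star_one, ofReal_pow, ofReal_one]
  have h5 : star k = 1 - 1 / d + bilS β₂ q c (star c) / d ^ 2 - k := by rw [← h3]; ring
  rw [h5]
  field_simp
  ring

lemma sphDen_ne_zero (h : SphData β₁ p β₂ q A c d k) {P : (Fin n → ℂ) × ℂ}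
    (hP : sphN β₁ p P < 1) : sphDen β₂ q A c d k P ≠ 0 := by
  intro h0
  have h1 := h.identity P
  rw [h0, map_zero, sub_zero] at h1
  have h2 : 0 ≤ ∑ j, q (β₂ j) * normSq ((A P.1 - (1 - P.2) • c) j) / d ^ 2 :=
    Finset.sum_nonneg fun j _ => div_nonneg (mul_nonneg (Nat.cast_nonneg _) (normSq_nonneg _))
      (sq_nonneg _)
  have h3 := mul_nonneg h.pos.le (add_nonneg h2 (normSq_nonneg (0 - (1 - P.2))))
  linarith

lemma sphN_sphMap_lt (h : SphData β₁ p β₂ q A c d k) {P : (Fin n → ℂ) × ℂ}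
    (hP : sphN β₁ p P < 1) : sphN β₂ q (sphMap β₂ q A c d k P) < 1 := by
  have hν := h.sphDen_ne_zero hP
  have h1 := h.identity P
  have h3 : sphN β₂ q (sphMap β₂ q A c d k P) * normSq (sphDen β₂ q A c d k P) =
      ∑ j, q (β₂ j) * normSq ((A P.1 - (1 - P.2) • c) j) / d ^ 2 +
        normSq (sphDen β₂ q A c d k P - (1 - P.2)) := by
    have hd := h.pos.ne'
    have hν' := (normSq_pos.2 hν).ne'
    rw [sphN, sphMap, add_mul, Finset.sum_mul]
    congr 1
    · refine Finset.sum_congr rfl fun j _ => ?_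
      simp only [Pi.smul_apply, smul_eq_mul, map_mul, map_inv₀, normSq_ofReal]
      field_simp
    · simp only
      rw [← map_mul]
      congr 1
      field_simp
  have h4 := normSq_pos.2 hν
  have h5 := h.pos
  rw [← h3] at h1
  by_contra! h6
  nlinarith [mul_nonneg h5.le (mul_nonneg h4.le (sub_nonneg.2 h6))]

lemma sphMap_leftInv (h : SphData β₁ p β₂ q A c d k) (hA : ∀ z, A' (A z) = z)
    (hA' : ∀ z, A (A' z) = z) {P : (Fin n → ℂ) × ℂ} (hP : sphDen β₂ q A c d k P ≠ 0)
    {c' : Fin n → ℂ} {d' : ℝ} {k' : ℂ} (hc' : c' = -(d : ℂ)⁻¹ • A' c) (hd' : d' = d⁻¹)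
    (hk' : k' = -d * k + bilS β₂ q c (star c) / d) :
    sphMap β₁ p A' c' d' k' (sphMap β₂ q A c d k P) = P := by
  have hd : (d : ℂ) ≠ 0 := by exact_mod_cast h.pos.ne'
  have hds : star (d : ℂ) = d := conj_ofReal d
  have h1 : ∀ z, bilS β₁ p (A' z) (star c') = -bilS β₂ q z (star c) / d ^ 2 := fun z => by
    have := h.isom (A' z) (A' c)
    rw [hA', hA'] at this
    rw [hc', star_smul, bilS_smul_right, this, star_neg, star_inv₀, hds]
    field_simp
  have h2 : sphDen β₁ p A' c' d' k' (sphMap β₂ q A c d k P) = (sphDen β₂ q A c d k P)⁻¹ := by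
    set ν := sphDen β₂ q A c d k P with hνdef
    have h3 : bilS β₂ q (A P.1) (star c) = d * (1 - d * (ν - k * (1 - P.2))) := by
      rw [hνdef, sphDen]; field_simp; ring
    rw [sphDen, h1, sphMap, ← hνdef, hd', hk', ofReal_inv]
    simp only [sub_eq_add_neg (A P.1), ← neg_one_smul ℂ (_ : Fin n → ℂ), bilS_smul_left,
      bilS_add_left, h3]
    field_simp
    ring
  rw [sphMap, h2, hd', ofReal_inv, sphMap]
  set ν := sphDen β₂ q A c d k P
  refine Prod.ext ?_ ?_
  · simp only [map_smul, map_sub, hA, hc']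
    funext j
    simp only [Pi.smul_apply, Pi.sub_apply, smul_eq_mul]
    field_simp
    ring
  · simp only
    field_simp
    ring

lemma symm (h : SphData β₁ p β₂ q A c d k) (hA' : ∀ z, A (A' z) = z) :
    SphData β₂ q β₁ p A' (-(d : ℂ)⁻¹ • A' c) d⁻¹ (-d * k + bilS β₂ q c (star c) / d) where
  pos := inv_pos.2 h.pos
  isom z w := by
    have hd : (d : ℂ) ≠ 0 := by exact_mod_cast h.pos.ne'
    have := h.isom (A' z) (A' w)
    rw [hA', hA'] at this
    rw [this, ofReal_inv, inv_mul_cancel_left₀ hd]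
  trace := by
    have hd : (d : ℂ) ≠ 0 := by exact_mod_cast h.pos.ne'
    have hds : star (d : ℂ) = d := conj_ofReal d
    have h1 := h.isom (A' c) (A' c)
    rw [hA'] at h1
    have h2 : star (bilS β₂ q c (star c)) = bilS β₂ q c (star c) := by
      rw [star_bilS, star_star, bilS_comm]
    have h5 : star k = 1 - 1 / d + bilS β₂ q c (star c) / d ^ 2 - k := by rw [← h.trace]; ring
    rw [bilS_smul_star_smul, star_add, star_mul', star_div₀, h2, star_neg, star_neg, star_inv₀,
      hds, ofReal_inv, h5, h1]
    field_simp
    ring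

lemma ratMap (h : SphData β₁ p β₂ q A c d k) : RatMap {P | sphN β₁ p P < 1}
    (sphMap β₂ q A c d k) := by
  have hd : (d : ℂ) ≠ 0 := by exact_mod_cast h.pos.ne'
  have h0 : RatOn {P | sphN β₁ p P < 1} fun P : (Fin n → ℂ) × ℂ => 1 - P.2 :=
    (RatOn.const 1).sub RatOn.snd
  have h1 : RatOn {P | sphN β₁ p P < 1} (sphDen β₂ q A c d k) :=
    (((RatOn.const 1).sub ((RatOn.bilS β₂ q (RatOn.linearMap A RatOn.fst) _).div (RatOn.const _)
      fun _ _ => hd)).div (RatOn.const _) fun _ _ => hd).add ((RatOn.const k).mul h0)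
  refine ⟨fun j => ?_, ?_⟩
  · exact (((RatOn.const _).mul h1).inv fun P hP => mul_ne_zero hd (h.sphDen_ne_zero hP)).mul
      ((RatOn.linearMap A RatOn.fst j).sub (h0.mul (RatOn.const _)))
  · exact (RatOn.const 1).sub (h0.div h1 fun P hP => h.sphDen_ne_zero hP)

lemma biholo (h : SphData β₁ p β₂ q A c d k) (hA : ∀ z, A' (A z) = z)
    (hA' : ∀ z, A (A' z) = z) :
    Biholo (sphMap β₂ q A c d k) {P | sphN β₁ p P < 1} {P | sphN β₂ q P < 1} := by
  have hd : (d : ℂ) ≠ 0 := by exact_mod_cast h.pos.ne'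
  have h1 := h.symm hA'
  refine ⟨h.ratMap.differentiableOn, fun P hP => h.sphN_sphMap_lt hP, _,
    h1.ratMap.differentiableOn, fun P hP => h1.sphN_sphMap_lt hP,
    fun P hP => h.sphMap_leftInv hA hA' (h.sphDen_ne_zero hP) rfl rfl rfl,
    fun P hP => h1.sphMap_leftInv hA' hA (h1.sphDen_ne_zero hP) ?_ ?_ ?_⟩
  · rw [map_smul, hA', smul_smul, ofReal_inv, inv_inv]
    field_simp
    simp
  · rw [inv_inv]
  · have h2 := h.isom (A' c) (A' c)
    rw [hA'] at h2
    rw [bilS_smul_star_smul, star_neg, star_inv₀, show star (d : ℂ) = d from conj_ofReal d,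
      ofReal_inv, h2]
    field_simp
    ring

end SphData

lemma rhoK_eq_one_sub_bilS {β : Fin n → Fin l} {p : Fin l → ℕ} (hp1 : ∃ i, p i = 1)
    (hl : ∀ i i' : Fin l, i = i') (z w : Fin n → ℂ) : rhoK β p z w = 1 - bilS β p z w := by
  obtain ⟨i, hi⟩ := hp1
  have : Unique (Fin l) := ⟨⟨i⟩, fun j => hl j i⟩
  rw [rhoK, bilS, Fintype.prod_subsingleton _ i, Fintype.sum_subsingleton _ i, hi]
  simp

lemma discBundle_eq_sphN {β : Fin n → Fin l} {p : Fin l → ℕ} (hp1 : ∃ i, p i = 1)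
    (hl : ∀ i i' : Fin l, i = i') : discBundle β p = {P | sphN β p P < 1} := by
  have h1 : ∀ P, sphN β p P = 1 - gnorm β p P.1 + normSq P.2 := fun P => by
    apply ofReal_injective
    rw [sphN_eq, ofReal_add, ofReal_sub, ← rhoK_star, rhoK_eq_one_sub_bilS hp1 hl, ← mul_conj]
    simp
  obtain ⟨i, hi⟩ := hp1
  have : Unique (Fin l) := ⟨⟨i⟩, fun j => hl j i⟩
  have h2 : ∀ z, gnorm β p z = 1 - blockSq β i z := fun z => by
    rw [gnorm, Fintype.prod_subsingleton _ i, hi, pow_one]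
  ext P
  simp only [discBundle, prodBalls, Set.mem_ofPred_eq, h1, h2]
  constructor
  · rintro ⟨-, h3⟩; linarith
  · intro h3
    refine ⟨fun j => ?_, by linarith⟩
    rw [hl j i]
    linarith [normSq_nonneg P.2]

end LinearFractional

section Globalization

variable {n l l' : ℕ} {β₁ : Fin n → Fin l} {p : Fin l → ℕ} {β₂ : Fin n → Fin l'} {q : Fin l' → ℕ}
  {F : (Fin n → ℂ) × ℂ → (Fin n → ℂ) × ℂ}

lemma ratMap_linear (A : (Fin n → ℂ) →ₗ[ℂ] (Fin n → ℂ)) (s : Set ((Fin n → ℂ) × ℂ)) :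
    RatMap s fun P => (A P.1, P.2) :=
  ⟨fun j => RatOn.linearMap A RatOn.fst j, RatOn.snd⟩

lemma mem_discBundle_linear_iff {A : (Fin n → ℂ) →ₗ[ℂ] (Fin n → ℂ)} {τ : Fin l' ≃ Fin l}
    (hτ : ∀ j, q j = p (τ j) ∧ ∀ z, blockSq β₂ j (A z) = blockSq β₁ (τ j) z)
    (P : (Fin n → ℂ) × ℂ) : (A P.1, P.2) ∈ discBundle β₂ q ↔ P ∈ discBundle β₁ p := by
  have h1 : gnorm β₂ q (A P.1) = gnorm β₁ p P.1 :=
    Fintype.prod_equiv τ _ _ fun j => by rw [(hτ j).1, (hτ j).2]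
  have h2 : A P.1 ∈ prodBalls β₂ ↔ P.1 ∈ prodBalls β₁ := by
    refine ⟨fun h i => ?_, fun h j => ?_⟩
    · have := h (τ.symm i)
      rwa [(hτ _).2, τ.apply_symm_apply] at this
    · rw [(hτ j).2]
      exact h _
  exact and_congr h2 (by rw [h1])

lemma biholo_linear {A A' : (Fin n → ℂ) →ₗ[ℂ] (Fin n → ℂ)} (hA : ∀ z, A' (A z) = z)
    (hA' : ∀ z, A (A' z) = z) {τ : Fin l' ≃ Fin l}
    (hτ : ∀ j, q j = p (τ j) ∧ ∀ z, blockSq β₂ j (A z) = blockSq β₁ (τ j) z) :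
    Biholo (fun P : (Fin n → ℂ) × ℂ => (A P.1, P.2)) (discBundle β₁ p) (discBundle β₂ q) := by
  refine ⟨(ratMap_linear A _).differentiableOn, fun P hP => (mem_discBundle_linear_iff hτ P).2 hP,
    fun P => (A' P.1, P.2), (ratMap_linear A' _).differentiableOn, fun P hP => ?_,
    fun P _ => by simp [hA], fun P _ => by simp [hA']⟩
  rw [← mem_discBundle_linear_iff hτ]
  simpa [hA'] using hP

/-- A normalized germ extends to a rational biholomorphism of disc bundles. -/
theorem NGerm.exists_ratMap_biholo (h : NGerm β₁ p β₂ q F) (m₀ : Fin n)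
    (hβ₁ : Function.Surjective β₁) (hβ₂ : Function.Surjective β₂) (hp : ∀ i, 0 < p i)
    (hq : ∀ i, 0 < q i) (hp1 : ∃ i, p i = 1) (hq1 : ∃ j, q j = 1)
    (hi : Function.Injective (fderiv ℂ F x0)) :
    ∃ G : (Fin n → ℂ) × ℂ → (Fin n → ℂ) × ℂ, RatMap (discBundle β₁ p) G ∧
      Biholo G (discBundle β₁ p) (discBundle β₂ q) ∧ ∀ᶠ P in 𝓝 x0, P.2 ≠ 1 → F P = G P := by
  have hd := h.dD_ne_zero hq hi
  let e := LinearEquiv.ofBijective (dA F) ⟨h.dA_injective hp hd, h.dA_surjective hp hd⟩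
  have hA : ∀ z, e.symm.toLinearMap (dA F z) = z := fun z => e.symm_apply_apply z
  have hA' : ∀ z, dA F (e.symm.toLinearMap z) = z := fun z => e.apply_symm_apply z
  by_cases hm : ∃ m m', β₁ m ≠ β₁ m'
  · obtain ⟨m, m', hm⟩ := hm
    obtain ⟨h1, τ, hτ⟩ := h.eq_linear hβ₁ hβ₂ hp hq hp1 hq1 hi hm
    exact ⟨_, ratMap_linear (dA F) _, biholo_linear hA hA' hτ, h1.mono fun P hP _ => hP⟩
  · push Not at hm
    have hl : ∀ i i' : Fin l, i = i' := fun i i' => by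
      obtain ⟨m, rfl⟩ := hβ₁ i
      obtain ⟨m', rfl⟩ := hβ₁ i'
      exact hm m m'
    have hl' := h.subsingleton_target hp hq hd hβ₂ hl
    obtain ⟨d, hd0, hdd⟩ := h.dD_pos hp hd m₀
    obtain ⟨k, hk, hF⟩ := h.exists_formula hp hq hd0 hdd (rhoK_eq_one_sub_bilS hp1 hl)
      (rhoK_eq_one_sub_bilS hq1 hl') m₀
    have hS : SphData β₁ p β₂ q (dA F) (dC F) d k :=
      ⟨hd0, fun z w => by
        have := h.bilS_dA z (star w)
        rwa [dAs_apply, star_star, hdd, star_def, conj_ofReal, mul_comm] at this, hk⟩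
    rw [discBundle_eq_sphN hp1 hl, discBundle_eq_sphN hq1 hl']
    exact ⟨_, hS.ratMap, hS.biholo hA hA', hF.mono fun P hP hP1 => hP hP1 _ rfl⟩

lemma continuous_gnorm (β : Fin n → Fin l) (p : Fin l → ℕ) : Continuous (gnorm β p) := by
  unfold gnorm blockSq
  exact continuous_finsetProd _ fun i _ => (continuous_const.sub (continuous_finsetSum _
    fun j _ => continuous_normSq.comp (continuous_apply j))).pow _

lemma isOpen_discBundle (β : Fin n → Fin l) (p : Fin l → ℕ) : IsOpen (discBundle β p) :=
  (isOpen_tube β).inter (isOpen_lt (continuous_normSq.comp continuous_snd)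
    ((continuous_gnorm β p).comp continuous_fst))

lemma gnorm_le_one {β : Fin n → Fin l} (p : Fin l → ℕ) {z : Fin n → ℂ} (hz : z ∈ prodBalls β) :
    gnorm β p z ≤ 1 :=
  Finset.prod_le_one (fun i _ => pow_nonneg (sub_nonneg.2 (hz i).le) _) fun i _ =>
    pow_le_one₀ (sub_nonneg.2 (hz i).le) (sub_le_self _ (blockSq_nonneg _ _ _))

lemma snd_ne_one_of_mem_discBundle {β : Fin n → Fin l} {p : Fin l → ℕ} {P : (Fin n → ℂ) × ℂ}
    (hP : P ∈ discBundle β p) : P.2 ≠ 1 := fun h => by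
  have h1 := hP.2.trans_le (gnorm_le_one p hP.1)
  rw [h, map_one] at h1
  exact h1.false

lemma circBundle_subset_closure (β : Fin n → Fin l) (p : Fin l → ℕ) :
    circBundle β p ⊆ closure (discBundle β p) := by
  intro x hx
  have ht : Tendsto (fun t : ℝ => (x.1, (t : ℂ) * x.2)) (𝓝[<] 1) (𝓝 x) :=
    (Continuous.tendsto' (by fun_prop) _ _ (by simp)).mono_left nhdsWithin_le_nhds
  refine mem_closure_of_tendsto ht ?_
  have h0 : ∀ᶠ t : ℝ in 𝓝[<] 1, 0 < t :=
    nhdsWithin_le_nhds (lt_mem_nhds one_pos)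
  filter_upwards [self_mem_nhdsWithin, h0] with t ht1 ht0
  refine ⟨hx.1, ?_⟩
  have h1 := normSq_snd_pos hx
  simp only [map_mul, normSq_ofReal]
  rw [← hx.2]
  have ht1 : t < 1 := ht1
  nlinarith [mul_lt_one_of_nonneg_of_lt_one_left ht0.le ht1 ht1.le]

end Globalization

/-- Part (1) of the main theorem, for products of balls: a nonconstant holomorphic map
defined near a piece of the circle bundle `Σ₁` over `Ω₁ = 𝔹^{n₁} × ⋯ × 𝔹^{n_l}` (with
generic norm `ρ₁`) sending the piece into the circle bundle `Σ₂` over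
`Ω₂ = 𝔹^{m₁} × ⋯ × 𝔹^{m_{l'}}` (with generic norm `ρ₂`) coincides on a nonempty open set
with a rational map that restricts to a biholomorphism from `D₁` onto `D₂`. -/
theorem main_theorem_part1 (n : ℕ) (hn : 1 ≤ n) (l l' : ℕ)
    (β₁ : Fin n → Fin l) (hβ₁ : Function.Surjective β₁)
    (β₂ : Fin n → Fin l') (hβ₂ : Function.Surjective β₂)
    (p : Fin l → ℕ) (hp : ∀ i, 0 < p i) (hp1 : ∃ i, p i = 1)
    (q : Fin l' → ℕ) (hq : ∀ j, 0 < q j) (hq1 : ∃ j, q j = 1)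
    (U : Set ((Fin n → ℂ) × ℂ)) (hUopen : IsOpen U) (hUconn : IsConnected U)
    (hUS : (U ∩ circBundle β₁ p).Nonempty)
    (F : ((Fin n → ℂ) × ℂ) → ((Fin n → ℂ) × ℂ))
    (hF : DifferentiableOn ℂ F U)
    (hFnc : ¬ ∃ c, Set.EqOn F (fun _ => c) U)
    (hFmap : Set.MapsTo F (U ∩ circBundle β₁ p) (circBundle β₂ q)) :
    ∃ (Pz : Fin n → MvPolynomial (Fin n ⊕ Unit) ℂ) (Pξ Q : MvPolynomial (Fin n ⊕ Unit) ℂ),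
      (∀ P ∈ discBundle β₁ p, evalP Q P ≠ 0) ∧
      Biholo (fun P => ((fun j => evalP (Pz j) P / evalP Q P), evalP Pξ P / evalP Q P))
        (discBundle β₁ p) (discBundle β₂ q) ∧
      ∃ V : Set ((Fin n → ℂ) × ℂ), IsOpen V ∧ V.Nonempty ∧ V ⊆ U ∧
        Set.EqOn F
          (fun P => ((fun j => evalP (Pz j) P / evalP Q P), evalP Pξ P / evalP Q P)) V := by
  obtain ⟨x, hxU, hx, hi⟩ :=
    exists_injective_fderiv hn hp hq hUopen hUconn.isPreconnected hUS hF hFnc hFmap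
  obtain ⟨G, hG, hGb, hGF⟩ := hx.normalize.exists_ratMap_biholo ⟨0, hn⟩ hβ₁ hβ₂ hp hq hp1 hq1
    (hx.normalize_injective hi)
  have hy := hx.apply_mem
  have hbx := bar2_mem hx.mem
  have hb := (biholo_autT hy).comp (hGb.comp (biholo_autT hbx))
  have hr : RatMap (discBundle β₁ p) (autT β₂ q (F x) ∘ (G ∘ autT β₁ p (bar2 x))) :=
    ((ratMap_autT hy).mono (discBundle_subset_tube β₂ q)).comp
      (hG.comp ((ratMap_autT hbx).mono (discBundle_subset_tube β₁ p))
        fun P hP => autT_mem_discBundle hbx hP)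
      fun P hP => hGb.2.1 (autT_mem_discBundle hbx hP)
  obtain ⟨Pz, Pξ, Q, hQ, hE⟩ := hr.exists_common_denominator
  refine ⟨Pz, Pξ, Q, hQ, hb.congr hE.symm, ?_⟩
  have ht : Tendsto (autT β₁ p (bar2 x)) (𝓝 x) (𝓝 x0) := by
    have := (differentiableAt_autT hbx hx.mem.1).continuousAt.tendsto
    rwa [autT_bar2_self hx.mem] at this
  obtain ⟨W, hW, hWo, hxW⟩ := _root_.eventually_nhds_iff.1
    ((hUopen.eventually_mem hxU).and (ht.eventually (hGF.and hx.autT_normalize)))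
  refine ⟨W ∩ discBundle β₁ p, hWo.inter (isOpen_discBundle β₁ p),
    mem_closure_iff.1 (circBundle_subset_closure β₁ p hx.mem) W hWo hxW,
    fun P hP => (hW P hP.1).1, fun P hP => ?_⟩
  obtain ⟨-, h1, h2⟩ := hW P hP.1
  rw [← hE hP.2]
  have h3 := snd_ne_one_of_mem_discBundle (autT_mem_discBundle hbx hP.2)
  rw [h1 h3, autT_autT_bar2 hx.mem hP.2.1] at h2
  exact h2.symm
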